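/- Let G be any plane graph on n ≥ 2 vertices and let T be any spanning tree of G. Then there exist two vertices u, v ∈ V(G) and a simple arc from u to v in the plane that does not cross any edge of G, such that the unique Jordan curve C consisting of this arc together with some edges of T (namely the arc plus the unique u–v path in T) has the property that the number of vertices of G lying in the open interior region of C is less than (2/3)n and the number of vertices of G lying in the open exterior region of C is less than (2/3)n. -/

import Mathlib

/-- The set of vertices on fire after `t` fire-spread rounds, when the fire breaks out
at `v` and the firefighters protect the vertices of `P s` in round `s + 1` (protection
happens just before the `s`-th spread step and is permanent). -/
def burnedSet {V : Type*} (G : SimpleGraph V) (v : V) (P : ℕ → Set V) : ℕ → Set V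
  | 0 => {v}
  | t + 1 => burnedSet G v P t ∪
      {w | (∃ u ∈ burnedSet G v P t, G.Adj u w) ∧ ∀ s ≤ t, w ∉ P s}

/-- A strategy `P` is valid for the per-round budgets `b` if in each round it protects
at most `b t` vertices, none of which are already on fire. -/
def ValidStrategy {V : Type*} (G : SimpleGraph V) (b : ℕ → ℕ) (v : V) (P : ℕ → Set V) : Prop :=
  ∀ t, (P t).Finite ∧ (P t).ncard ≤ b t ∧ Disjoint (P t) (burnedSet G v P t)

/-- `sn G b v` is the maximum number of vertices that can be saved (i.e. that never
catch fire) when the fire breaks out at `v` and the firefighters may protect at most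
`b t` vertices in round `t + 1`. -/
noncomputable def sn {V : Type*} (G : SimpleGraph V) (b : ℕ → ℕ) (v : V) : ℕ :=
  sSup {m | ∃ P, ValidStrategy G b v P ∧
    m = Nat.card {w : V | ∀ t, w ∉ burnedSet G v P t}}

/-- The surviving rate of `G` with per-round budgets `b` : the expected fraction of
vertices that can be saved when the starting vertex is chosen uniformly at random. -/
noncomputable def survivingRate {V : Type*} [Fintype V] (G : SimpleGraph V) (b : ℕ → ℕ) : ℝ :=
  (∑ v : V, (sn G b v : ℝ)) / (Fintype.card V : ℝ) ^ 2

/-- A plane embedding of a simple graph: vertices are points of the plane and edges are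
simple arcs between their endpoints, such that arcs avoid all other vertices and two
arcs of distinct edges meet only in common endpoints. -/
structure PlaneEmbedding {V : Type*} (G : SimpleGraph V) where
  pos : V → ℝ × ℝ
  arc : V → V → ℝ → ℝ × ℝ
  pos_inj : Function.Injective pos
  arc_cont : ∀ ⦃u v⦄, G.Adj u v → Continuous (arc u v)
  arc_injOn : ∀ ⦃u v⦄, G.Adj u v → Set.InjOn (arc u v) (Set.Icc 0 1)
  arc_zero : ∀ ⦃u v⦄, G.Adj u v → arc u v 0 = pos u
  arc_one : ∀ ⦃u v⦄, G.Adj u v → arc u v 1 = pos v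
  arc_symm : ∀ ⦃u v⦄, G.Adj u v → ∀ t, arc v u t = arc u v (1 - t)
  arc_avoid : ∀ ⦃u v⦄, G.Adj u v → ∀ w : V, pos w ∉ arc u v '' Set.Ioo 0 1
  arc_meet : ∀ ⦃u v x y⦄, G.Adj u v → G.Adj x y → s(u, v) ≠ s(x, y) →
      arc u v '' Set.Icc 0 1 ∩ arc x y '' Set.Icc 0 1 ⊆
        ({pos u, pos v} : Set (ℝ × ℝ)) ∩ {pos x, pos y}

/-- A graph is planar if it admits a plane embedding. -/
def IsPlanar {V : Type*} (G : SimpleGraph V) : Prop :=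
  Nonempty (PlaneEmbedding G)


namespace PSL
open Set Topology Metric

/-- Identification of the real plane with `ℂ`. -/
noncomputable def cx (z : ℝ × ℝ) : ℂ := (z.1 : ℂ) + (z.2 : ℂ) * Complex.I

lemma cx_cont : Continuous cx := by unfold cx; fun_prop

lemma cx_inj {z w : ℝ × ℝ} (h : cx z = cx w) : z = w := by
  have h1 := congrArg Complex.re h
  have h2 := congrArg Complex.im h
  simp [cx] at h1 h2
  exact Prod.ext h1 h2

lemma cx_sub_ne {z w : ℝ × ℝ} (h : z ≠ w) : cx z - cx w ≠ 0 :=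
  fun hh => h (cx_inj (sub_eq_zero.mp hh))

/-- Continuous logarithms on the plane. -/
lemma exists_log_plane (f : ℝ × ℝ → ℂ) (hf : Continuous f) (h0 : ∀ z, f z ≠ 0) :
    ∃ g : ℝ × ℝ → ℂ, Continuous g ∧ ∀ z, Complex.exp (g z) = f z := by
  obtain ⟨F, ⟨-, hF⟩, -⟩ := Complex.isCoveringMapOn_exp.existsUnique_continuousMap_lifts
    (⟨f, hf⟩ : C(ℝ × ℝ, ℂ)) (a₀ := 0) (e₀ := Complex.log (f 0)) (Complex.exp_log (h0 0))
    (fun a => h0 a)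
  exact ⟨F, F.continuous, fun z => congrFun hF z⟩

lemma exists_log_real (f : ℝ → ℂ) (hf : Continuous f) (h0 : ∀ z, f z ≠ 0) :
    ∃ g : ℝ → ℂ, Continuous g ∧ ∀ z, Complex.exp (g z) = f z := by
  obtain ⟨g, hg, hgf⟩ := exists_log_plane (fun z => f z.1) (by fun_prop) (fun z => h0 _)
  exact ⟨fun t => g (t, 0), by fun_prop, fun z => hgf (z, 0)⟩

/-- Two logarithms on a preconnected set differ by a constant. -/
lemma log_diff_const {X : Type*} [TopologicalSpace X] {S : Set X} (hS : IsPreconnected S)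
    {g h : X → ℂ} (hg : ContinuousOn g S) (hh : ContinuousOn h S)
    (he : ∀ z ∈ S, Complex.exp (g z) = Complex.exp (h z)) {x y : X} (hx : x ∈ S) (hy : y ∈ S) :
    g x - h x = g y - h y := by
  have h1 : ContinuousOn (fun z => (g z - h z) / (2 * Real.pi * Complex.I)) S :=
    (hg.sub hh).div_const _
  have h2 : ∀ z ∈ S, ∃ n : ℤ, (g z - h z) / (2 * Real.pi * Complex.I) = n := by
    intro z hz
    obtain ⟨n, hn⟩ := Complex.exp_eq_exp_iff_exists_int.mp (he z hz)
    refine ⟨n, ?_⟩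
    rw [hn]; field_simp [Complex.two_pi_I_ne_zero]; ring
  have h3 : ContinuousOn (fun z => ((g z - h z) / (2 * Real.pi * Complex.I)).re) S :=
    Complex.continuous_re.comp_continuousOn h1
  have h4 : (fun z => ((g z - h z) / (2 * Real.pi * Complex.I)).re) '' S ⊆
      range ((↑) : ℤ → ℝ) := by
    rintro _ ⟨z, hz, rfl⟩
    obtain ⟨n, hn⟩ := h2 z hz
    exact ⟨n, by simp only [hn]; simp⟩
  have h5 := (hS.image _ h3)
  have h6 : (range ((↑) : ℤ → ℝ)).Countable := countable_range _
  have h7 := h6.isTotallyDisconnected _ h4 h5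
  obtain ⟨n, hn⟩ := h2 x hx
  obtain ⟨m, hm⟩ := h2 y hy
  have h8 := h7 (mem_image_of_mem _ hx) (mem_image_of_mem _ hy)
  simp only [hn, hm] at h8
  have h9 : (n : ℂ) = m := by simpa using h8
  have := hn.trans (h9.trans hm.symm)
  field_simp at this
  exact this

/-- `K` does not obstruct: `(z - p)/(z - q)` has a continuous logarithm on `K`. -/
def HasLog (K : Set (ℝ × ℝ)) (p q : ℝ × ℝ) : Prop :=
  ∃ g : ℝ × ℝ → ℂ, ContinuousOn g K ∧
    ∀ z ∈ K, Complex.exp (g z) = (cx z - cx p) / (cx z - cx q)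

/-- `p` and `q` are not separated by `K`. -/
def Conn (K : Set (ℝ × ℝ)) (p q : ℝ × ℝ) : Prop := q ∈ connectedComponentIn Kᶜ p

lemma HasLog.refl {K : Set (ℝ × ℝ)} {p : ℝ × ℝ} (hp : p ∉ K) : HasLog K p p := by
  refine ⟨fun _ => 0, continuousOn_const, fun z hz => ?_⟩
  have : z ≠ p := fun h => hp (h ▸ hz)
  rw [div_self (cx_sub_ne this)]; simp

lemma HasLog.symm {K : Set (ℝ × ℝ)} {p q : ℝ × ℝ} (h : HasLog K p q) : HasLog K q p := by
  obtain ⟨g, hg, he⟩ := h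
  refine ⟨fun z => - g z, hg.neg, fun z hz => ?_⟩
  rw [Complex.exp_neg, he z hz, inv_div]

lemma HasLog.trans {K : Set (ℝ × ℝ)} {p q r : ℝ × ℝ} (hq : q ∉ K)
    (h : HasLog K p q) (h' : HasLog K q r) : HasLog K p r := by
  obtain ⟨g, hg, he⟩ := h
  obtain ⟨g', hg', he'⟩ := h'
  refine ⟨fun z => g z + g' z, hg.add hg', fun z hz => ?_⟩
  have : z ≠ q := fun h => hq (h ▸ hz)
  rw [Complex.exp_add, he z hz, he' z hz, div_mul_div_cancel₀ (cx_sub_ne this)]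

lemma HasLog.mono {K L : Set (ℝ × ℝ)} {p q : ℝ × ℝ} (h : HasLog K p q) (hL : L ⊆ K) :
    HasLog L p q := by
  obtain ⟨g, hg, he⟩ := h
  exact ⟨g, hg.mono hL, fun z hz => he z (hL hz)⟩

lemma hasLog_nhds {K : Set (ℝ × ℝ)} (hK : IsCompact K) {q : ℝ × ℝ} (hq : q ∉ K) :
    ∀ᶠ q' in 𝓝 q, HasLog K q q' := by
  have h1 : IsClosed (cx '' K) := (hK.image cx_cont).isClosed
  have h2 : cx q ∉ cx '' K := by
    rintro ⟨z, hz, hzq⟩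
    exact hq (cx_inj hzq ▸ hz)
  obtain ⟨ε, hε, hb⟩ := Metric.isOpen_iff.mp h1.isOpen_compl _ h2
  have h3 : ∀ᶠ q' in 𝓝 q, cx q' ∈ ball (cx q) (ε / 2) :=
    cx_cont.continuousAt.eventually (ball_mem_nhds _ (by positivity))
  filter_upwards [h3] with q' hq'
  have key : ∀ z ∈ K, ε / 2 < ‖cx z - cx q'‖ := by
    intro z hz
    have h4 : ¬ dist (cx z) (cx q) < ε := fun h => hb h (mem_image_of_mem _ hz)
    have h5 : dist (cx z) (cx q) ≤ dist (cx z) (cx q') + dist (cx q') (cx q) :=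
      dist_triangle _ _ _
    have h6 : dist (cx q') (cx q) < ε / 2 := hq'
    rw [← dist_eq_norm]; linarith
  have key2 : ∀ z ∈ K, (cx z - cx q) / (cx z - cx q') ∈ Complex.slitPlane := by
    intro z hz
    have h7 := key z hz
    have h8 : cx z - cx q' ≠ 0 := by
      intro h; rw [h, norm_zero] at h7; linarith
    have : (cx z - cx q) / (cx z - cx q') = 1 + (cx q' - cx q) / (cx z - cx q') := by
      field_simp; ring
    rw [this]
    apply Complex.mem_slitPlane_of_norm_lt_one
    rw [norm_div, div_lt_one (by linarith)]
    have h6 : dist (cx q') (cx q) < ε / 2 := hq'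
    rw [dist_eq_norm] at h6; linarith
  have hne : ∀ z ∈ K, cx z - cx q' ≠ 0 := by
    intro z hz h
    have h7 := key z hz
    rw [h, norm_zero] at h7; linarith
  refine ⟨fun z => Complex.log ((cx z - cx q) / (cx z - cx q')), ?_, ?_⟩
  · refine ContinuousOn.clog ?_ key2
    refine ContinuousOn.div ?_ ?_ hne
    · exact (cx_cont.sub continuous_const).continuousOn
    · exact (cx_cont.sub continuous_const).continuousOn
  · intro z hz
    exact Complex.exp_log (Complex.slitPlane_ne_zero (key2 z hz))

lemma cc_open {K : Set (ℝ × ℝ)} (hK : IsClosed K) (p : ℝ × ℝ) :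
    IsOpen (connectedComponentIn Kᶜ p) := hK.isOpen_compl.connectedComponentIn

lemma Conn.symm {K : Set (ℝ × ℝ)} {p q : ℝ × ℝ} (h : Conn K p q) : Conn K q p := by
  unfold Conn at *
  have hp : p ∈ Kᶜ := connectedComponentIn_nonempty_iff.mp ⟨q, h⟩
  rw [← connectedComponentIn_eq h]
  exact mem_connectedComponentIn hp

lemma Conn.trans {K : Set (ℝ × ℝ)} {p q r : ℝ × ℝ} (h : Conn K p q) (h' : Conn K q r) :
    Conn K p r := by
  unfold Conn at *
  rwa [connectedComponentIn_eq h]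

lemma Conn.refl {K : Set (ℝ × ℝ)} {p : ℝ × ℝ} (h : p ∉ K) : Conn K p p :=
  mem_connectedComponentIn h

lemma Conn.left {K : Set (ℝ × ℝ)} {p q : ℝ × ℝ} (h : Conn K p q) : p ∉ K :=
  connectedComponentIn_nonempty_iff.mp ⟨q, h⟩

lemma Conn.right {K : Set (ℝ × ℝ)} {p q : ℝ × ℝ} (h : Conn K p q) : q ∉ K :=
  h.symm.left

lemma Conn.mono {K L : Set (ℝ × ℝ)} {p q : ℝ × ℝ} (h : Conn K p q) (hL : L ⊆ K) : Conn L p q :=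
  connectedComponentIn_mono p (compl_subset_compl.mpr hL) h

lemma conn_of_preconn {K S : Set (ℝ × ℝ)} (hS : IsPreconnected S) (hd : Disjoint S K)
    {p q : ℝ × ℝ} (hp : p ∈ S) (hq : q ∈ S) : Conn K p q :=
  hS.subset_connectedComponentIn hp (disjoint_left.mp hd) hq

/-- A preconnected set meeting `U` but not its frontier is inside `U`. -/
lemma subset_of_frontier {X : Type*} [TopologicalSpace X] {S U : Set X} (hS : IsPreconnected S)
    (hm : (S ∩ U).Nonempty) (hf : Disjoint S (frontier U)) : S ⊆ U := by
  have h1 : S ⊆ interior U ∪ (closure U)ᶜ := by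
    intro x hx
    by_cases h : x ∈ closure U
    · left
      by_contra h'
      exact disjoint_left.mp hf hx ⟨h, h'⟩
    · right; exact h
  rcases hm with ⟨x, hx, hxU⟩
  have h2 : S ⊆ interior U := by
    refine hS.subset_left_of_subset_union isOpen_interior isClosed_closure.isOpen_compl ?_ h1 ?_
    · exact (disjoint_compl_right.mono_left (interior_subset.trans subset_closure))
    · refine ⟨x, hx, ?_⟩
      rcases h1 hx with h | h
      · exact h
      · exact absurd (subset_closure hxU) h
  exact h2.trans interior_subset

lemma frontier_cc {K : Set (ℝ × ℝ)} (hK : IsClosed K) (p : ℝ × ℝ) :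
    frontier (connectedComponentIn Kᶜ p) ⊆ K := by
  intro z hz
  by_contra hzK
  have ho := cc_open hK p
  have hz1 := hz.1
  have hzc : z ∈ connectedComponentIn Kᶜ z := mem_connectedComponentIn hzK
  obtain ⟨y, hy1, hy2⟩ := mem_closure_iff.mp hz1 _ (cc_open hK z) hzc
  have : Conn K p z := Conn.trans (K := K) (q := y) hy2 (Conn.symm hy1)
  apply hz.2
  rw [ho.interior_eq]
  exact this

/-- E1 -/
lemma Conn.hasLog {K : Set (ℝ × ℝ)} (hK : IsCompact K) {p q : ℝ × ℝ} (h : Conn K p q) :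
    HasLog K p q := by
  have hp := h.left
  set S := connectedComponentIn Kᶜ p with hS
  have hSK : S ⊆ Kᶜ := connectedComponentIn_subset _ _
  have hSp : IsPreconnected S := isPreconnected_connectedComponentIn
  have hU : IsOpen {q | q ∈ S ∧ HasLog K p q} := by
    rw [isOpen_iff_mem_nhds]
    rintro x ⟨hx, hl⟩
    filter_upwards [hasLog_nhds hK (hSK hx), (cc_open hK.isClosed p).mem_nhds hx] with y hy hyS
    exact ⟨hyS, hl.trans (hSK hx) hy⟩
  have hV : IsOpen {q | q ∈ S ∧ ¬ HasLog K p q} := by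
    rw [isOpen_iff_mem_nhds]
    rintro x ⟨hx, hl⟩
    filter_upwards [hasLog_nhds hK (hSK hx), (cc_open hK.isClosed p).mem_nhds hx] with y hy hyS
    exact ⟨hyS, fun h => hl (h.trans (hSK hyS) hy.symm)⟩
  have := hSp.subset_left_of_subset_union hU hV ?_ ?_ ?_
  · exact (this h).2
  · rw [disjoint_left]; rintro a ⟨_, h1⟩ ⟨_, h2⟩; exact h2 h1
  · intro a ha
    by_cases h : HasLog K p a
    · left; exact ⟨ha, h⟩
    · right; exact ⟨ha, h⟩
  · exact ⟨p, mem_connectedComponentIn hp, mem_connectedComponentIn hp, HasLog.refl hp⟩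

lemma rank_plane : 1 < Module.rank ℝ (ℝ × ℝ) := by
  rw [rank_prod', Module.rank_self]
  norm_num

lemma ext_conn (R : ℝ) : IsPreconnected {z : ℝ × ℝ | R < ‖z‖} := by
  by_cases hR : 0 ≤ R
  · have h1 : IsPreconnected ((Ioi R) ×ˢ sphere (0 : ℝ × ℝ) 1) :=
      (isPreconnected_Ioi).prod (isPreconnected_sphere rank_plane _ _)
    have h2 := h1.image (fun x : ℝ × (ℝ × ℝ) => x.1 • x.2)
      (Continuous.continuousOn (by fun_prop))
    convert h2 using 1
    ext z
    simp only [mem_setOf_eq, mem_image, mem_prod, mem_Ioi, mem_sphere_iff_norm, sub_zero]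
    constructor
    · intro hz
      have hz0 : ‖z‖ ≠ 0 := by intro h; linarith
      refine ⟨(‖z‖, ‖z‖⁻¹ • z), ⟨hz, ?_⟩, ?_⟩
      · rw [norm_smul, norm_inv, norm_norm, inv_mul_cancel₀ hz0]
      · simp [smul_smul, hz0]
    · rintro ⟨⟨r, x⟩, ⟨h1, h2⟩, rfl⟩
      simp only at h1 h2 ⊢
      rw [norm_smul, h2, Real.norm_of_nonneg (by linarith)]; linarith
  · have : {z : ℝ × ℝ | R < ‖z‖} = univ := by
      ext z
      simp only [mem_setOf_eq, mem_univ, iff_true]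
      linarith [norm_nonneg z]
    rw [this]; exact isPreconnected_univ

lemma conn_of_hasLog_bdd {K : Set (ℝ × ℝ)} (hK : IsCompact K) {p q : ℝ × ℝ}
    (hp : p ∉ K) (hb : Bornology.IsBounded (connectedComponentIn Kᶜ p))
    (h : HasLog K p q) : Conn K p q := by
  classical
  by_contra hc
  obtain ⟨g, hg, he⟩ := h
  set U := connectedComponentIn Kᶜ p with hU
  have hqU : q ∉ U := hc
  have hpU : p ∈ U := mem_connectedComponentIn hp
  obtain ⟨G, hG⟩ := ContinuousMap.exists_restrict_eq (Y := ℂ) hK.isClosed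
    ⟨K.domRestrict g, continuousOn_iff_continuous_domRestrict.mp hg⟩
  have hGg : ∀ z ∈ K, G z = g z := fun z hz => congrArg (fun f => f ⟨z, hz⟩) hG
  set H : ℝ × ℝ → ℂ := fun z => if z ∈ U then (cx z - cx q) * Complex.exp (G z)
    else cx z - cx p with hH
  have hHc : Continuous H := by
    refine Continuous.if ?_ ?_ ?_
    · intro a ha
      have haK : a ∈ K := frontier_cc hK.isClosed p ha
      by_cases haq : a = q
      · -- then the quotient is a division by zero
        exfalso
        have h1 := he a haK
        rw [haq, sub_self, div_zero] at h1
        exact Complex.exp_ne_zero _ h1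
      · rw [hGg a haK, he a haK, mul_div_cancel₀ _ (cx_sub_ne haq)]
    · exact (cx_cont.sub continuous_const).mul (Complex.continuous_exp.comp G.continuous)
    · exact cx_cont.sub continuous_const
  have hH0 : ∀ z, H z ≠ 0 := by
    intro z
    by_cases hz : z ∈ U
    · simp only [hH, hz, if_true]
      exact mul_ne_zero (cx_sub_ne (fun h => hqU (h ▸ hz))) (Complex.exp_ne_zero _)
    · simp only [hH, hz, if_false]
      exact cx_sub_ne (fun h => hz (h ▸ hpU))
  obtain ⟨l, hl, hle⟩ := exists_log_plane H hHc hH0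
  obtain ⟨R, hR0, hR⟩ := hb.subset_closedBall_lt 0 (0 : ℝ × ℝ)
  -- big circle
  obtain ⟨S, hS⟩ : ∃ S : ℝ, S = 2 * (R + ‖p‖) + 1 := ⟨_, rfl⟩
  have hSpos : 0 < S := by rw [hS]; positivity
  set c : ℝ → ℝ × ℝ := fun θ => (p.1 + S * Real.cos θ, p.2 + S * Real.sin θ) with hcdef
  have hcc : Continuous c := by fun_prop
  have hcU : ∀ θ, c θ ∉ U := by
    intro θ hθ
    have h1 := hR hθ
    rw [mem_closedBall, dist_zero_right] at h1
    have h2 : |p.1 + S * Real.cos θ| ≤ R := (norm_fst_le (c θ)).trans h1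
    have h3 : |p.2 + S * Real.sin θ| ≤ R := (norm_snd_le (c θ)).trans h1
    have h4 : |p.1| ≤ ‖p‖ := norm_fst_le p
    have h5 : |p.2| ≤ ‖p‖ := norm_snd_le p
    have h6 : |S * Real.cos θ| ≤ R + ‖p‖ := by
      calc |S * Real.cos θ| = |(p.1 + S * Real.cos θ) - p.1| := by congr 1; ring
        _ ≤ |p.1 + S * Real.cos θ| + |p.1| := abs_sub _ _
        _ ≤ _ := by linarith
    have h7 : |S * Real.sin θ| ≤ R + ‖p‖ := by
      calc |S * Real.sin θ| = |(p.2 + S * Real.sin θ) - p.2| := by congr 1; ring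
        _ ≤ |p.2 + S * Real.sin θ| + |p.2| := abs_sub _ _
        _ ≤ _ := by linarith
    have h8 : (S * Real.cos θ) ^ 2 ≤ (R + ‖p‖) ^ 2 := sq_le_sq' (by linarith [neg_abs_le (S * Real.cos θ)]) (by linarith [le_abs_self (S * Real.cos θ)])
    have h9 : (S * Real.sin θ) ^ 2 ≤ (R + ‖p‖) ^ 2 := sq_le_sq' (by linarith [neg_abs_le (S * Real.sin θ)]) (by linarith [le_abs_self (S * Real.sin θ)])
    have h10 : S ^ 2 = (S * Real.cos θ) ^ 2 + (S * Real.sin θ) ^ 2 := by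
      have := Real.sin_sq_add_cos_sq θ
      calc S ^ 2 = S ^ 2 * (Real.sin θ ^ 2 + Real.cos θ ^ 2) := by rw [this]; ring
        _ = _ := by ring
    have h11 : 0 ≤ ‖p‖ := norm_nonneg p
    nlinarith
  have hexp : ∀ θ : ℝ, Complex.exp (l (c θ)) =
      Complex.exp ((Real.log S : ℂ) + θ * Complex.I) := by
    intro θ
    rw [hle, Complex.exp_add, Complex.exp_mul_I, ← Complex.ofReal_exp, Real.exp_log hSpos]
    have hH' : H (c θ) = cx (c θ) - cx p := by
      simp only [hH]; exact if_neg (hcU θ)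
    rw [hH']
    simp only [hcdef, cx]
    push_cast
    ring
  have := log_diff_const (S := (univ : Set ℝ)) isPreconnected_univ
    (g := fun θ => l (c θ)) (h := fun θ => (Real.log S : ℂ) + θ * Complex.I)
    (hl.comp hcc).continuousOn (Continuous.continuousOn (by fun_prop))
    (fun θ _ => hexp θ) (mem_univ 0) (mem_univ (2 * Real.pi))
  have h0 : c (2 * Real.pi) = c 0 := by simp [hcdef]
  rw [h0] at this
  have h2 : (2 * Real.pi : ℂ) * Complex.I = 0 := by
    push_cast at this
    linear_combination this
  exact Complex.two_pi_I_ne_zero h2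

/-- E2 -/
lemma HasLog.conn {K : Set (ℝ × ℝ)} (hK : IsCompact K) {p q : ℝ × ℝ} (hp : p ∉ K) (hq : q ∉ K)
    (h : HasLog K p q) : Conn K p q := by
  by_cases hb : Bornology.IsBounded (connectedComponentIn Kᶜ p)
  · exact conn_of_hasLog_bdd hK hp hb h
  by_cases hb' : Bornology.IsBounded (connectedComponentIn Kᶜ q)
  · exact (conn_of_hasLog_bdd hK hq hb' h.symm).symm
  obtain ⟨R, hR⟩ := hK.isBounded.subset_closedBall (0 : ℝ × ℝ)
  have hd : Disjoint {z : ℝ × ℝ | R < ‖z‖} K := by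
    rw [disjoint_left]
    intro z hz hzK
    have := hR hzK
    rw [mem_closedBall, dist_zero_right] at this
    exact absurd hz (not_lt.mpr this)
  have key : ∀ x, ¬ Bornology.IsBounded (connectedComponentIn Kᶜ x) →
      ∃ y, Conn K x y ∧ R < ‖y‖ := by
    intro x hx
    by_contra hcon
    push Not at hcon
    apply hx
    refine (isBounded_closedBall (x := (0 : ℝ × ℝ)) (r := R)).subset ?_
    intro y hy
    rw [mem_closedBall, dist_zero_right]
    exact hcon y hy
  obtain ⟨y, hy, hyR⟩ := key p hb
  obtain ⟨y', hy', hyR'⟩ := key q hb'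
  exact hy.trans ((conn_of_preconn (ext_conn R) hd hyR hyR').trans hy'.symm)

/-- Janiszewski -/
lemma janiszewski {K L : Set (ℝ × ℝ)} (hK : IsCompact K) (hL : IsCompact L)
    (hKL : IsPreconnected (K ∩ L)) {p q : ℝ × ℝ} (h1 : Conn K p q) (h2 : Conn L p q) :
    Conn (K ∪ L) p q := by
  classical
  refine HasLog.conn (hK.union hL) (fun h => h.elim h1.left h2.left)
    (fun h => h.elim h1.right h2.right) ?_
  obtain ⟨g, hg, he⟩ := h1.hasLog hK
  obtain ⟨g', hg', he'⟩ := h2.hasLog hL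
  obtain ⟨c, hc, hcc⟩ : ∃ c : ℂ, (∀ z ∈ K ∩ L, g z = g' z + c) ∧ Complex.exp c = 1 := by
    by_cases hne : (K ∩ L).Nonempty
    · obtain ⟨x, hx⟩ := hne
      refine ⟨g x - g' x, fun z hz => ?_, ?_⟩
      · have := log_diff_const hKL (hg.mono inter_subset_left) (hg'.mono inter_subset_right)
          (fun z hz => (he z hz.1).trans (he' z hz.2).symm) hz hx
        linear_combination this
      · rw [Complex.exp_sub, he x hx.1, ← he' x hx.2, div_self (Complex.exp_ne_zero _)]
    · refine ⟨0, fun z hz => absurd ⟨z, hz⟩ hne, by simp⟩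
  refine ⟨fun z => if z ∈ K then g z else g' z + c, ?_, ?_⟩
  · refine ContinuousOn.union_of_isClosed ?_ ?_ hK.isClosed hL.isClosed
    · exact hg.congr (fun z hz => by simp [hz])
    · have h3 : ContinuousOn (fun z => g' z + c) L := hg'.add continuousOn_const
      refine h3.congr (fun z hz => ?_)
      by_cases hzK : z ∈ K
      · simp [hzK, hc z ⟨hzK, hz⟩]
      · simp [hzK]
  · rintro z hz
    by_cases hzK : z ∈ K
    · simp [hzK, he z hzK]
    · have hzL : z ∈ L := hz.resolve_left hzK
      simp [hzK, Complex.exp_add, hcc, he' z hzL]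

end PSL

namespace PSL
open Set Topology Metric

lemma k33_parity (n n' : Fin 3 → Fin 3 → Fin 3 → ℤ)
    (h : ∀ i k j l : Fin 3, i < k → j ≠ l →
      n i k l + n' l i j - n k i j - n' j k l = if j < l then -1 else 0) : False := by
  have h1 : ∑ i : Fin 3, ∑ k : Fin 3, ∑ j : Fin 3, ∑ l : Fin 3,
      (if i < k ∧ j ≠ l then n i k l + n' l i j - n k i j - n' j k l else 0) =
      ∑ i : Fin 3, ∑ k : Fin 3, ∑ j : Fin 3, ∑ l : Fin 3,
      (if i < k ∧ j ≠ l then (if j < l then -1 else 0) else 0) := by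
    refine Finset.sum_congr rfl fun i _ => Finset.sum_congr rfl fun k _ =>
      Finset.sum_congr rfl fun j _ => Finset.sum_congr rfl fun l _ => ?_
    split_ifs with h1 h2
    · rw [h i k j l h1.1 h1.2, if_pos h2]
    · rw [h i k j l h1.1 h1.2, if_neg h2]
    · rfl
  have h2 : (∑ i : Fin 3, ∑ k : Fin 3, ∑ j : Fin 3, ∑ l : Fin 3,
      (if i < k ∧ j ≠ l then (if j < l then (-1 : ℤ) else 0) else 0)) = -9 := by decide
  rw [h2] at h1
  have e01 : (0 : Fin 3) < 1 := by decide
  have e02 : (0 : Fin 3) < 2 := by decide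
  have e12 : (1 : Fin 3) < 2 := by decide
  have e10 : ¬ (1 : Fin 3) < 0 := by decide
  have e20 : ¬ (2 : Fin 3) < 0 := by decide
  have e21 : ¬ (2 : Fin 3) < 1 := by decide
  have f01 : (0 : Fin 3) ≠ 1 := by decide
  have f02 : (0 : Fin 3) ≠ 2 := by decide
  have f12 : (1 : Fin 3) ≠ 2 := by decide
  simp only [Fin.sum_univ_three, e01, e02, e12, e10, e20, e21, f01, f02, f12, f01.symm, f02.symm,
    f12.symm, lt_irrefl, ne_eq, not_true_eq_false, not_false_eq_true, and_true, and_false,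
    if_true, if_false, add_zero, zero_add] at h1
  omega

/-- Total change of a continuous logarithm. -/
lemma change_eq {f g h : ℝ → ℂ} (hg : Continuous g) (hh : Continuous h)
    (h1 : ∀ t, Complex.exp (g t) = f t) (h2 : ∀ t, Complex.exp (h t) = f t) :
    g 1 - g 0 = h 1 - h 0 := by
  have := log_diff_const (S := (univ : Set ℝ)) isPreconnected_univ hg.continuousOn hh.continuousOn
    (fun t _ => (h1 t).trans (h2 t).symm) (mem_univ 1) (mem_univ 0)
  linear_combination this

lemma neg_exp (z : ℂ) : Complex.exp (z + Real.pi * Complex.I) = - Complex.exp z := by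
  rw [Complex.exp_add, Complex.exp_pi_mul_I]; ring

/-- antisymmetric choice of logarithms -/
lemma exists_antisymm_log (a : Fin 3 → ℂ) (ha : ∀ i j, i ≠ j → a i ≠ a j) :
    ∃ A : Fin 3 → Fin 3 → ℂ, (∀ k i, k ≠ i → Complex.exp (A k i) = a i - a k) ∧
      ∀ k i, k < i → A i k = A k i + Real.pi * Complex.I := by
  refine ⟨fun k i => if k < i then Complex.log (a i - a k) else
    Complex.log (a k - a i) + Real.pi * Complex.I, ?_, ?_⟩
  · intro k i hki
    have h1 : a i - a k ≠ 0 := sub_ne_zero.mpr (ha i k hki.symm)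
    have h2 : a k - a i ≠ 0 := sub_ne_zero.mpr (ha k i hki)
    dsimp only
    split_ifs with h
    · exact Complex.exp_log h1
    · rw [neg_exp, Complex.exp_log h2]; ring
  · intro k i h
    simp [h, h.not_gt]

lemma k33_clamped (a b : Fin 3 → ℂ) (e : Fin 3 → Fin 3 → ℝ → ℂ)
    (hc : ∀ i j, Continuous (e i j)) (h0 : ∀ i j, e i j 0 = a i) (h1 : ∀ i j, e i j 1 = b j)
    (hd : ∀ i j k l, i ≠ k → j ≠ l → ∀ s t, e i j s ≠ e k l t) : False := by
  have exl : ∀ j : Fin 3, ∃ l, j ≠ l := by decide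
  have ha : ∀ i k, i ≠ k → a i ≠ a k := by
    intro i k hik
    have := hd i 0 k 1 hik (by decide) 0 0
    rwa [h0, h0] at this
  have hb : ∀ i k, i ≠ k → b i ≠ b k := by
    intro i k hik
    have := hd 0 i 1 k (by decide) hik 1 1
    rwa [h1, h1] at this
  have hab : ∀ i k, a i ≠ b k := by
    intro i k
    obtain ⟨i', hi'⟩ := exl i
    obtain ⟨k', hk'⟩ := exl k
    have := hd i k' i' k hi' hk'.symm 0 1
    rwa [h0, h1] at this
  have hA1 : ∀ k i j, k ≠ i → ∀ s, e i j s - a k ≠ 0 := by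
    intro k i j hki s
    obtain ⟨l, hl⟩ := exl j
    have := hd i j k l hki.symm hl s 0
    rw [h0] at this
    exact sub_ne_zero.mpr this
  have hB1 : ∀ l i j, l ≠ j → ∀ s, e i j s - b l ≠ 0 := by
    intro l i j hlj s
    obtain ⟨k, hk⟩ := exl i
    have := hd i j k l hk hlj.symm s 1
    rw [h1] at this
    exact sub_ne_zero.mpr this
  have hθ : ∀ k i j, ∃ g : ℝ → ℂ, k ≠ i → Continuous g ∧ ∀ s, Complex.exp (g s) = e i j s - a k := by
    intro k i j
    by_cases hki : k = i
    · exact ⟨0, fun h => absurd hki h⟩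
    · obtain ⟨g, hg⟩ := exists_log_real (fun s => e i j s - a k) (by have := hc i j; fun_prop)
        (hA1 k i j hki)
      exact ⟨g, fun _ => hg⟩
  have hθ' : ∀ l i j, ∃ g : ℝ → ℂ, l ≠ j → Continuous g ∧ ∀ s, Complex.exp (g s) = e i j s - b l := by
    intro l i j
    by_cases hki : l = j
    · exact ⟨0, fun h => absurd hki h⟩
    · obtain ⟨g, hg⟩ := exists_log_real (fun s => e i j s - b l) (by have := hc i j; fun_prop)
        (hB1 l i j hki)
      exact ⟨g, fun _ => hg⟩
  choose f hf using hθ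
  choose f' hf' using hθ'
  have square : ∀ i j k l, i ≠ k → j ≠ l →
      (f k i j 1 - f k i j 0) + (f' j k l 1 - f' j k l 0) =
      (f i k l 1 - f i k l 0) + (f' l i j 1 - f' l i j 0) := by
    intro i j k l hik hjl
    obtain ⟨L, hL, hLe⟩ := exists_log_plane (fun z => e i j z.1 - e k l z.2)
      (by have := hc i j; have := hc k l; fun_prop)
      (fun z => sub_ne_zero.mpr (hd i j k l hik hjl _ _))
    have e1 := change_eq (f := fun s => e i j s - a k) (hf k i j hik.symm).1
      (h := fun s => L (s, 0)) (by fun_prop) (hf k i j hik.symm).2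
      (fun s => by rw [hLe]; simp [h0])
    have e2 := change_eq (f := fun s => e i j s - b l) (hf' l i j hjl.symm).1
      (h := fun s => L (s, 1)) (by fun_prop) (hf' l i j hjl.symm).2
      (fun s => by rw [hLe]; simp [h1])
    have e3 := change_eq (f := fun s => e k l s - a i) (hf i k l hik).1
      (h := fun s => L (0, s) + Real.pi * Complex.I) (by fun_prop) (hf i k l hik).2
      (fun s => by rw [neg_exp, hLe]; simp [h0])
    have e4 := change_eq (f := fun s => e k l s - b j) (hf' j k l hjl).1
      (h := fun s => L (1, s) + Real.pi * Complex.I) (by fun_prop) (hf' j k l hjl).2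
      (fun s => by rw [neg_exp, hLe]; simp [h1])
    linear_combination e1 - e2 - e3 + e4
  obtain ⟨A, hA, hA'⟩ := exists_antisymm_log a ha
  obtain ⟨B, hB, hB'⟩ := exists_antisymm_log b hb
  set M : Fin 3 → Fin 3 → ℂ := fun k j => Complex.log (b j - a k) with hM
  have hMe : ∀ k j, Complex.exp (M k j) = b j - a k := fun k j =>
    Complex.exp_log (sub_ne_zero.mpr (hab k j).symm)
  have hn : ∀ k i j, ∃ n : ℤ, k ≠ i →
      f k i j 1 - f k i j 0 = M k j - A k i + n * (2 * Real.pi * Complex.I) := by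
    intro k i j
    by_cases hki : k = i
    · exact ⟨0, fun h => absurd hki h⟩
    · have : Complex.exp (f k i j 1 - f k i j 0) = Complex.exp (M k j - A k i) := by
        rw [Complex.exp_sub, Complex.exp_sub, (hf k i j hki).2, (hf k i j hki).2, hMe, hA k i hki,
          h0, h1]
      obtain ⟨n, hn⟩ := Complex.exp_eq_exp_iff_exists_int.mp this
      exact ⟨n, fun _ => hn⟩
  have hn' : ∀ l i j, ∃ n : ℤ, l ≠ j → f' l i j 1 - f' l i j 0 =
      B l j - (M i l + Real.pi * Complex.I) + n * (2 * Real.pi * Complex.I) := by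
    intro l i j
    by_cases hki : l = j
    · exact ⟨0, fun h => absurd hki h⟩
    · have : Complex.exp (f' l i j 1 - f' l i j 0) =
          Complex.exp (B l j - (M i l + Real.pi * Complex.I)) := by
        rw [Complex.exp_sub, Complex.exp_sub, (hf' l i j hki).2, (hf' l i j hki).2, neg_exp, hMe,
          hB l j hki, h0, h1, neg_sub]
      obtain ⟨n, hn⟩ := Complex.exp_eq_exp_iff_exists_int.mp this
      exact ⟨n, fun _ => hn⟩
  choose n hn using hn
  choose n' hn' using hn'
  refine k33_parity n n' fun i k j l hik hjl => ?_
  have sq := square i j k l hik.ne hjl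
  rw [hn k i j hik.ne', hn' j k l hjl, hn i k l hik.ne, hn' l i j hjl.symm] at sq
  have a1 := hA' i k hik
  have key : ((n i k l + n' l i j - n k i j - n' j k l : ℤ) : ℂ) * (2 * Real.pi * Complex.I) =
      ((if j < l then -1 else 0 : ℤ) : ℂ) * (2 * Real.pi * Complex.I) := by
    rcases lt_or_gt_of_ne hjl with h | h
    · have b1 := hB' j l h
      rw [if_pos h]; push_cast
      linear_combination -sq - a1 - b1
    · have b1 := hB' l j h
      rw [if_neg h.not_gt]; push_cast
      linear_combination -sq - a1 + b1
  exact_mod_cast mul_right_cancel₀ Complex.two_pi_I_ne_zero key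

/-- `K_{3,3}` cannot be drawn in the plane. -/
lemma k33 (a b : Fin 3 → ℝ × ℝ) (e : Fin 3 → Fin 3 → ℝ → ℝ × ℝ)
    (hc : ∀ i j, Continuous (e i j)) (h0 : ∀ i j, e i j 0 = a i) (h1 : ∀ i j, e i j 1 = b j)
    (hd : ∀ i j k l, i ≠ k → j ≠ l → Disjoint (e i j '' Icc 0 1) (e k l '' Icc 0 1)) : False := by
  have hcl : ∀ s : ℝ, max 0 (min 1 s) ∈ Icc (0 : ℝ) 1 := fun s =>
    ⟨le_max_left _ _, max_le (by norm_num) (min_le_left _ _)⟩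
  refine k33_clamped (fun i => cx (a i)) (fun j => cx (b j))
    (fun i j s => cx (e i j (max 0 (min 1 s)))) ?_ ?_ ?_ ?_
  · intro i j
    exact cx_cont.comp ((hc i j).comp (by fun_prop))
  · intro i j; simp [h0]
  · intro i j; simp [h1]
  · intro i j k l hik hjl s t hst
    exact disjoint_left.mp (hd i j k l hik hjl) (mem_image_of_mem _ (hcl s))
      (cx_inj hst ▸ mem_image_of_mem _ (hcl t))

end PSL

namespace PSL
open Set Topology Metric

abbrev Pl := ℝ × ℝ

/-- `S` is a simple arc from `x` to `y`. -/
def Arc (S : Set Pl) (x y : Pl) : Prop :=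
  ∃ γ : ℝ → Pl, Continuous γ ∧ InjOn γ (Icc 0 1) ∧ γ 0 = x ∧ γ 1 = y ∧ γ '' Icc 0 1 = S

lemma k33_sets (a b : Fin 3 → Pl) (S : Fin 3 → Fin 3 → Set Pl)
    (hj : ∀ i j, JoinedIn (S i j) (a i) (b j))
    (hd : ∀ i j k l, i ≠ k → j ≠ l → Disjoint (S i j) (S k l)) : False := by
  have key : ∀ i j, ∃ e : ℝ → Pl, Continuous e ∧ e 0 = a i ∧ e 1 = b j ∧ e '' Icc 0 1 ⊆ S i j := by
    intro i j
    obtain ⟨γ, hγ⟩ := hj i j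
    refine ⟨γ.extend, γ.continuous_extend, by simp, by simp, ?_⟩
    rintro _ ⟨t, ht, rfl⟩
    rw [Path.extend_apply _ ht]
    exact hγ _
  choose e h1 h2 h3 h4 using key
  exact k33 a b e h1 h2 h3 fun i j k l hik hjl => (hd i j k l hik hjl).mono (h4 i j) (h4 k l)

lemma arc_of_Icc {γ : ℝ → Pl} {a b : ℝ} (hab : a < b) (hc : ContinuousOn γ (Icc a b))
    (hi : InjOn γ (Icc a b)) : Arc (γ '' Icc a b) (γ a) (γ b) := by
  have hcl : ∀ s : ℝ, max 0 (min 1 s) ∈ Icc (0 : ℝ) 1 := fun s =>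
    ⟨le_max_left _ _, max_le (by norm_num) (min_le_left _ _)⟩
  have hcl' : ∀ s ∈ Icc (0 : ℝ) 1, max 0 (min 1 s) = s := fun s hs => by
    rw [min_eq_right hs.2, max_eq_right hs.1]
  have hm : ∀ s ∈ Icc (0 : ℝ) 1, a + (b - a) * s ∈ Icc a b := by
    intro s hs
    constructor
    · nlinarith [hs.1]
    · nlinarith [hs.2]
  refine ⟨fun t => γ (a + (b - a) * max 0 (min 1 t)), ?_, ?_, ?_, ?_, ?_⟩
  · rw [← continuousOn_univ]
    exact hc.comp (Continuous.continuousOn (by fun_prop)) (fun t _ => hm _ (hcl t))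
  · intro s hs t ht hst
    simp only [hcl' s hs, hcl' t ht] at hst
    have := hi (hm s hs) (hm t ht) hst
    have h3 : (b - a) * (s - t) = 0 := by linarith
    rcases mul_eq_zero.mp h3 with h | h <;> linarith
  · simp
  · simp
  · ext z; constructor
    · rintro ⟨t, ht, rfl⟩
      exact ⟨_, hm _ (hcl t), rfl⟩
    · rintro ⟨t, ht, rfl⟩
      have hb : 0 < b - a := by linarith
      have h4 : (t - a) / (b - a) ∈ Icc (0 : ℝ) 1 :=
        ⟨div_nonneg (by linarith [ht.1]) hb.le, by rw [div_le_one hb]; linarith [ht.2]⟩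
      refine ⟨(t - a) / (b - a), h4, ?_⟩
      simp only [hcl' _ h4]
      congr 1; field_simp; ring

namespace Arc
variable {S S1 S2 : Set Pl} {x y z : Pl}

lemma symm (h : Arc S x y) : Arc S y x := by
  obtain ⟨γ, hc, hi, h0, h1, hS⟩ := h
  refine ⟨fun t => γ (1 - t), by fun_prop, ?_, by simpa, by simpa, ?_⟩
  · intro s hs t ht hst
    have := hi (show 1 - s ∈ Icc (0:ℝ) 1 from ⟨by linarith [hs.2], by linarith [hs.1]⟩)
      (show 1 - t ∈ Icc (0:ℝ) 1 from ⟨by linarith [ht.2], by linarith [ht.1]⟩) hst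
    linarith
  · rw [← hS]
    ext z; constructor
    · rintro ⟨t, ht, rfl⟩
      exact ⟨1 - t, ⟨by linarith [ht.2], by linarith [ht.1]⟩, rfl⟩
    · rintro ⟨t, ht, rfl⟩
      exact ⟨1 - t, ⟨by linarith [ht.2], by linarith [ht.1]⟩, by simp⟩

lemma left_mem (h : Arc S x y) : x ∈ S := by
  obtain ⟨γ, hc, hi, h0, h1, hS⟩ := h
  rw [← hS, ← h0]; exact ⟨0, by simp, rfl⟩

lemma right_mem (h : Arc S x y) : y ∈ S := h.symm.left_mem

lemma ne (h : Arc S x y) : x ≠ y := by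
  obtain ⟨γ, hc, hi, h0, h1, hS⟩ := h
  intro hxy
  have := hi (show (0:ℝ) ∈ Icc (0:ℝ) 1 by simp) (show (1:ℝ) ∈ Icc (0:ℝ) 1 by simp)
    (by rw [h0, h1, hxy])
  norm_num at this

lemma compact (h : Arc S x y) : IsCompact S := by
  obtain ⟨γ, hc, hi, h0, h1, hS⟩ := h
  rw [← hS]; exact isCompact_Icc.image hc

lemma closed (h : Arc S x y) : IsClosed S := h.compact.isClosed

lemma pathConn (h : Arc S x y) : IsPathConnected S := by
  obtain ⟨γ, hc, hi, h0, h1, hS⟩ := h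
  rw [← hS]
  exact ((convex_Icc (0:ℝ) 1).isPathConnected ⟨0, by simp⟩).image hc

lemma preconn (h : Arc S x y) : IsPreconnected S := h.pathConn.isConnected.isPreconnected

lemma join (h1 : Arc S1 x z) (h2 : Arc S2 z y) (hd : S1 ∩ S2 ⊆ {z}) : Arc (S1 ∪ S2) x y := by
  obtain ⟨γ, hc, hi, h0, h1, hS⟩ := h1
  obtain ⟨γ', hc', hi', h0', h1', hS'⟩ := h2
  have hcont : Continuous (fun t : ℝ => if t ≤ 1 then γ t else γ' (t - 1)) := by
    refine Continuous.if_le hc (by fun_prop) continuous_id continuous_const ?_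
    intro t ht
    have ht : t = 1 := ht
    rw [ht, h1, sub_self, h0']
  have hinj : InjOn (fun t : ℝ => if t ≤ 1 then γ t else γ' (t - 1)) (Icc 0 2) := by
    have aux : ∀ s t : ℝ, s ∈ Icc (0:ℝ) 1 → t ∈ Ioc (0:ℝ) 1 → γ s = γ' t → False := by
      intro s t hs ht hst
      have hz : γ s ∈ S1 ∩ S2 := ⟨hS ▸ mem_image_of_mem _ hs,
        hst ▸ hS' ▸ mem_image_of_mem _ ⟨ht.1.le, ht.2⟩⟩
      have h5 : γ s = z := hd hz
      have h6 : γ' t = γ' 0 := by rw [← hst, h5, h0']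
      have := hi' ⟨ht.1.le, ht.2⟩ (show (0:ℝ) ∈ Icc (0:ℝ) 1 by simp) h6
      linarith [ht.1]
    intro s hs t ht hst
    dsimp only at hst
    split_ifs at hst with h3 h4 h4
    · exact hi ⟨hs.1, h3⟩ ⟨ht.1, h4⟩ hst
    · exact (aux s (t - 1) ⟨hs.1, h3⟩ ⟨by linarith, by linarith [ht.2]⟩ hst).elim
    · exact (aux t (s - 1) ⟨ht.1, h4⟩ ⟨by linarith, by linarith [hs.2]⟩ hst.symm).elim
    · have := hi' (show s - 1 ∈ Icc (0:ℝ) 1 from ⟨by linarith, by linarith [hs.2]⟩)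
        (show t - 1 ∈ Icc (0:ℝ) 1 from ⟨by linarith, by linarith [ht.2]⟩) hst
      linarith
  have := arc_of_Icc (a := 0) (b := 2) (by norm_num) hcont.continuousOn hinj
  convert this using 1
  · rw [← hS, ← hS']
    ext w; constructor
    · rintro (⟨t, ht, rfl⟩ | ⟨t, ht, rfl⟩)
      · exact ⟨t, ⟨ht.1, by linarith [ht.2]⟩, by simp [ht.2]⟩
      · refine ⟨t + 1, ⟨by linarith [ht.1], by linarith [ht.2]⟩, ?_⟩
        rcases ht.1.eq_or_lt with h | h
        · subst h; simp [h1, h0']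
        · have : ¬ (t + 1 ≤ 1) := by linarith
          simp [this]
    · rintro ⟨t, ht, rfl⟩
      by_cases h : t ≤ 1
      · left; exact ⟨t, ⟨ht.1, h⟩, by simp [h]⟩
      · right; exact ⟨t - 1, ⟨by linarith, by linarith [ht.2]⟩, by simp [h]⟩
  · simp [h0]
  · norm_num [h1']

lemma split (h : Arc S x y) (hz : z ∈ S) (hx : z ≠ x) (hy : z ≠ y) :
    ∃ S1 S2, Arc S1 x z ∧ Arc S2 z y ∧ S1 ∪ S2 = S ∧ S1 ∩ S2 = {z} := by
  obtain ⟨γ, hc, hi, h0, h1, hS⟩ := h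
  rw [← hS] at hz
  obtain ⟨t, ht, rfl⟩ := hz
  have ht0 : 0 < t := lt_of_le_of_ne ht.1 (fun h => hx (by rw [← h, h0]))
  have ht1 : t < 1 := lt_of_le_of_ne ht.2 (fun h => hy (by rw [h, h1]))
  refine ⟨γ '' Icc 0 t, γ '' Icc t 1, ?_, ?_, ?_, ?_⟩
  · rw [← h0]; exact arc_of_Icc ht0 hc.continuousOn (hi.mono (Icc_subset_Icc le_rfl ht.2))
  · rw [← h1]; exact arc_of_Icc ht1 hc.continuousOn (hi.mono (Icc_subset_Icc ht.1 le_rfl))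
  · rw [← image_union, Icc_union_Icc_eq_Icc ht.1 ht.2, hS]
  · rw [← hi.image_inter (Icc_subset_Icc le_rfl ht.2) (Icc_subset_Icc ht.1 le_rfl),
      Icc_inter_Icc_eq_singleton ht.1 ht.2, image_singleton]

lemma first (h : Arc S x y) {K : Set Pl} (hK : IsClosed K) (hne : (S ∩ K).Nonempty) (hx : x ∉ K) :
    ∃ z S1, z ∈ K ∧ Arc S1 x z ∧ S1 ⊆ S ∧ S1 ∩ K ⊆ {z} := by
  obtain ⟨γ, hc, hi, h0, h1, hS⟩ := h
  have hcl : IsCompact (Icc 0 1 ∩ γ ⁻¹' K) := isCompact_Icc.inter_right (hK.preimage hc)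
  obtain ⟨w, hw, hwK⟩ := hne
  rw [← hS] at hw
  obtain ⟨t0, ht0, rfl⟩ := hw
  obtain ⟨t, ht, hmin⟩ := hcl.exists_isLeast ⟨t0, ht0, hwK⟩
  have ht00 : 0 < t := lt_of_le_of_ne ht.1.1 (fun h => hx (by rw [← h0, h]; exact ht.2))
  refine ⟨γ t, γ '' Icc 0 t, ht.2, ?_, ?_, ?_⟩
  · rw [← h0]; exact arc_of_Icc ht00 hc.continuousOn (hi.mono (Icc_subset_Icc le_rfl ht.1.2))
  · rw [← hS]; exact image_mono (Icc_subset_Icc le_rfl ht.1.2)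
  · rintro _ ⟨⟨s, hs, rfl⟩, hsK⟩
    have := hmin ⟨⟨hs.1, hs.2.trans ht.1.2⟩, hsK⟩
    rw [le_antisymm this hs.2]; rfl

/-- Initial subarc. -/
lemma initial (h : Arc S x y) (hz : z ∈ S) (hx : z ≠ x) :
    ∃ S1, Arc S1 x z ∧ S1 ⊆ S := by
  obtain ⟨z', S1, hz', h1, h2, -⟩ := h.first (K := {z}) isClosed_singleton ⟨z, hz, rfl⟩
    (fun h => hx h.symm)
  rw [mem_singleton_iff] at hz'
  subst hz'
  exact ⟨S1, h1, h2⟩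

/-- Combine two arcs meeting in an endpoint. -/
lemma trim (h1 : Arc S1 x z) (h2 : Arc S2 z y) (hx : x ∉ S2) (hy : y ∉ S1) :
    ∃ S, Arc S x y ∧ S ⊆ S1 ∪ S2 := by
  obtain ⟨m, A, hm, hA, hAS, hi⟩ := h1.first h2.closed ⟨z, h1.right_mem, h2.left_mem⟩ hx
  have hmy : m ≠ y := fun h => hy (h ▸ hAS hA.right_mem)
  obtain ⟨B, hB, hBS⟩ := h2.symm.initial hm hmy
  exact ⟨A ∪ B, hA.join hB.symm (fun w hw => hi ⟨hw.1, hBS hw.2⟩),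
    union_subset_union hAS hBS⟩

lemma seg (h : x ≠ y) : Arc (segment ℝ x y) x y := by
  refine ⟨AffineMap.lineMap x y, AffineMap.lineMap_continuous, ?_, by simp, by simp, ?_⟩
  · exact (AffineMap.lineMap_injective ℝ h).injOn
  · rw [segment_eq_image_lineMap]

lemma int_pathConn (h : Arc S x y) : IsPathConnected (S \ {x, y}) := by
  obtain ⟨γ, hc, hi, h0, h1, hS⟩ := h
  have : S \ {x, y} = γ '' Ioo 0 1 := by
    rw [← hS, ← h0, ← h1]
    have h2 : Ioo (0:ℝ) 1 = Icc 0 1 \ {0, 1} := by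
      ext t; simp only [mem_Ioo, mem_sdiff, mem_Icc, mem_insert_iff, mem_singleton_iff, not_or]
      constructor
      · rintro ⟨h1, h2⟩; exact ⟨⟨h1.le, h2.le⟩, h1.ne', h2.ne⟩
      · rintro ⟨⟨h1, h2⟩, h3, h4⟩; exact ⟨lt_of_le_of_ne h1 (Ne.symm h3), lt_of_le_of_ne h2 h4⟩
    have h3 : ({0, 1} : Set ℝ) ⊆ Icc 0 1 := by
      rintro t (rfl | rfl) <;> simp
    rw [h2, hi.image_sdiff_subset h3, image_pair]
  rw [this]
  exact ((convex_Ioo (0:ℝ) 1).isPathConnected ⟨1/2, by norm_num⟩).image hc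

lemma int_preconn (h : Arc S x y) : IsPreconnected (S \ {x, y}) :=
  h.int_pathConn.isConnected.isPreconnected

/-- `S` minus one endpoint is connected -/
lemma diff_left_pathConn (h : Arc S x y) : IsPathConnected (S \ {x}) := by
  obtain ⟨γ, hc, hi, h0, h1, hS⟩ := h
  have : S \ {x} = γ '' Ioc 0 1 := by
    rw [← hS, ← h0]
    have h2 : Ioc (0:ℝ) 1 = Icc 0 1 \ {0} := by
      ext t; simp only [mem_Ioc, mem_sdiff, mem_Icc, mem_singleton_iff]
      constructor
      · rintro ⟨h1, h2⟩; exact ⟨⟨h1.le, h2⟩, h1.ne'⟩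
      · rintro ⟨⟨h1, h2⟩, h3⟩; exact ⟨lt_of_le_of_ne h1 (Ne.symm h3), h2⟩
    have h3 : ({0} : Set ℝ) ⊆ Icc 0 1 := by simp
    rw [h2, hi.image_sdiff_subset h3, image_singleton]
  rw [this]
  exact ((convex_Ioc (0:ℝ) 1).isPathConnected ⟨1, by norm_num⟩).image hc

lemma hasLog (h : Arc S x y) {p q : Pl} (hp : p ∉ S) (hq : q ∉ S) : HasLog S p q := by
  obtain ⟨γ, hc, hi, h0, h1, hS⟩ := h
  have hcl : ∀ s : ℝ, max 0 (min 1 s) ∈ Icc (0 : ℝ) 1 := fun s =>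
    ⟨le_max_left _ _, max_le (by norm_num) (min_le_left _ _)⟩
  have hcl' : ∀ s ∈ Icc (0 : ℝ) 1, max 0 (min 1 s) = s := fun s hs => by
    rw [min_eq_right hs.2, max_eq_right hs.1]
  have hm : ∀ t, γ (max 0 (min 1 t)) ∈ S := fun t => hS ▸ mem_image_of_mem _ (hcl t)
  have hcc : Continuous (fun t => cx (γ (max 0 (min 1 t)))) :=
    cx_cont.comp (hc.comp (by fun_prop))
  have hnp : ∀ t, cx (γ (max 0 (min 1 t))) - cx p ≠ 0 := fun t =>
    cx_sub_ne (fun h => hp (h ▸ hm t))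
  have hnq : ∀ t, cx (γ (max 0 (min 1 t))) - cx q ≠ 0 := fun t =>
    cx_sub_ne (fun h => hq (h ▸ hm t))
  obtain ⟨g, hg, hge⟩ := exists_log_real
    (fun t => (cx (γ (max 0 (min 1 t))) - cx p) / (cx (γ (max 0 (min 1 t))) - cx q))
    ((hcc.sub continuous_const).div (hcc.sub continuous_const) hnq)
    (fun t => div_ne_zero (hnp t) (hnq t))
  have hinv : ∀ t ∈ Icc (0:ℝ) 1, Function.invFunOn γ (Icc 0 1) (γ t) = t := fun t ht =>
    hi.leftInvOn_invFunOn ht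
  refine ⟨fun z => g (Function.invFunOn γ (Icc 0 1) z), ?_, ?_⟩
  · rw [continuousOn_iff_isClosed]
    intro C hC
    refine ⟨γ '' (Icc 0 1 ∩ g ⁻¹' C),
      ((isCompact_Icc.inter_right (hC.preimage hg)).image hc).isClosed, ?_⟩
    rw [← hS]
    ext z; constructor
    · rintro ⟨h1, ⟨t, ht, rfl⟩⟩
      refine ⟨⟨t, ⟨ht, ?_⟩, rfl⟩, ⟨t, ht, rfl⟩⟩
      rwa [mem_preimage, hinv t ht] at h1
    · rintro ⟨⟨t, ⟨ht, h1⟩, rfl⟩, -⟩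
      refine ⟨?_, ⟨t, ht, rfl⟩⟩
      rwa [mem_preimage, hinv t ht]
  · rw [← hS]
    rintro _ ⟨t, ht, rfl⟩
    beta_reduce
    rw [hinv t ht, hge]
    simp only [hcl' t ht]

/-- An arc does not separate the plane. -/
lemma nonsep (h : Arc S x y) {p q : Pl} (hp : p ∉ S) (hq : q ∉ S) : Conn S p q :=
  (h.hasLog hp hq).conn h.compact hp hq

end Arc

/-- Open connected sets are arc connected. -/
lemma arc_of_open {U : Set Pl} (hU : IsOpen U) (hc : IsPreconnected U) {x y : Pl} (hx : x ∈ U)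
    (hy : y ∈ U) (hxy : x ≠ y) : ∃ A, Arc A x y ∧ A ⊆ U := by
  set R : Set Pl := {z | z = x ∨ ∃ A, Arc A x z ∧ A ⊆ U} with hR
  have step : ∀ z z', z ∈ R → segment ℝ z z' ⊆ U → z' ∈ R := by
    intro z z' hz hs
    by_cases hz'x : z' = x
    · exact Or.inl hz'x
    right
    by_cases hxs : x ∈ segment ℝ z z'
    · refine ⟨segment ℝ x z', Arc.seg (Ne.symm hz'x), ?_⟩
      exact ((convex_segment z z').segment_subset hxs (right_mem_segment ℝ z z')).trans hs
    · rcases hz with rfl | ⟨A, hA, hAU⟩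
      · exact absurd (left_mem_segment ℝ z z') hxs
      have hsc : IsClosed (segment ℝ z z') := by
        by_cases hzz : z = z'
        · subst hzz; rw [segment_same]; exact isClosed_singleton
        · exact (Arc.seg hzz).closed
      obtain ⟨m, B, hm, hB, hBA, hi⟩ := hA.first hsc
        ⟨z, hA.right_mem, left_mem_segment ℝ z z'⟩ hxs
      by_cases hmz : m = z'
      · subst hmz; exact ⟨B, hB, hBA.trans hAU⟩
      · have hsub := (convex_segment z z').segment_subset hm (right_mem_segment ℝ z z')
        exact ⟨B ∪ segment ℝ m z', hB.join (Arc.seg hmz) (fun w hw => hi ⟨hw.1, hsub hw.2⟩),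
          union_subset (hBA.trans hAU) (hsub.trans hs)⟩
  have hball : ∀ z ∈ U, ∃ r > 0, ball z r ⊆ U := fun z hz => Metric.isOpen_iff.mp hU z hz
  have h1 : IsOpen (U ∩ R) := by
    rw [isOpen_iff_mem_nhds]
    rintro z ⟨hzU, hzR⟩
    obtain ⟨r, hr, hb⟩ := hball z hzU
    filter_upwards [ball_mem_nhds z hr] with w hw
    exact ⟨hb hw, step z w hzR (((convex_ball z r).segment_subset (mem_ball_self hr) hw).trans hb)⟩
  have h2 : IsOpen (U \ R) := by
    rw [isOpen_iff_mem_nhds]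
    rintro z ⟨hzU, hzR⟩
    obtain ⟨r, hr, hb⟩ := hball z hzU
    filter_upwards [ball_mem_nhds z hr] with w hw
    exact ⟨hb hw, fun hwR => hzR (step w z hwR
      (((convex_ball z r).segment_subset hw (mem_ball_self hr)).trans hb))⟩
  have h3 := hc.subset_left_of_subset_union h1 h2
    (disjoint_left.mpr fun w hw hw' => hw'.2 hw.2)
    (fun w hw => by by_cases h : w ∈ R; exacts [Or.inl ⟨hw, h⟩, Or.inr ⟨hw, h⟩])
    ⟨x, hx, hx, Or.inl rfl⟩ hy
  rcases h3.2 with h | h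
  · exact absurd h.symm hxy
  · exact h

lemma joinedIn_of_open {U : Set Pl} (hU : IsOpen U) (hc : IsPreconnected U) {x y : Pl} (hx : x ∈ U)
    (hy : y ∈ U) : JoinedIn U x y :=
  (hU.isConnected_iff_isPathConnected.mp ⟨⟨x, hx⟩, hc⟩).joinedIn x hx y hy

end PSL

namespace PSL
open Set Topology Metric

/-- The component of the complement of `K` containing `p`. -/
abbrev cc (K : Set Pl) (p : Pl) : Set Pl := connectedComponentIn Kᶜ p

lemma mem_of_frontier {U L : Set Pl} {x y : Pl} (hf : frontier U ⊆ L) (hx : x ∈ U)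
    (h : Conn L x y) : y ∈ U := by
  have h1 : IsPreconnected (cc L x) := isPreconnected_connectedComponentIn
  refine subset_of_frontier h1 ⟨x, mem_connectedComponentIn h.left, hx⟩ ?_ h
  rw [disjoint_left]
  intro z hz hz'
  exact connectedComponentIn_subset _ _ hz (hf hz')

lemma cc_disj {K : Set Pl} (p : Pl) : Disjoint (cc K p) K :=
  disjoint_left.mpr fun _ hz => connectedComponentIn_subset _ _ hz

lemma cc_preconn {K : Set Pl} (p : Pl) : IsPreconnected (cc K p) :=
  isPreconnected_connectedComponentIn

lemma cc_self {K : Set Pl} {p : Pl} (hp : p ∉ K) : p ∈ cc K p := mem_connectedComponentIn hp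

/-- A point of the closure of a component, not in `K`, is in the component. -/
lemma mem_cc_of_closure {K : Set Pl} (hK : IsClosed K) {p z : Pl} (h : z ∈ closure (cc K p))
    (hz : z ∉ K) : z ∈ cc K p := by
  by_contra hcon
  have ho := cc_open hK p
  exact hz (frontier_cc hK p ⟨h, by rwa [ho.interior_eq]⟩)

/-- A preconnected set disjoint from `K` meeting a component is inside it. -/
lemma subset_cc {K S : Set Pl} (hS : IsPreconnected S) (hd : Disjoint S K) {p z : Pl}
    (hz : z ∈ S) (hzp : z ∈ cc K p) : S ⊆ cc K p := by
  intro w hw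
  exact Conn.trans (K := K) (q := z) hzp (conn_of_preconn hS hd hz hw)

lemma boundary_gen {C : Set Pl} (hC : IsClosed C) {p y : Pl} (hp : p ∉ C) (hy : y ∈ C)
    (h : ∀ ε > 0, ∃ K, K ⊆ C ∧ C \ K ⊆ ball y ε ∧ y ∉ K ∧ ∀ a b, a ∉ K → b ∉ K → Conn K a b) :
    y ∈ closure (cc C p) := by
  by_contra hcon
  obtain ⟨ε, hε, hb⟩ := Metric.isOpen_iff.mp isClosed_closure.isOpen_compl y hcon
  obtain ⟨K, hKC, hCK, hyK, hK⟩ := h ε hε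
  have hfr : frontier (cc C p) ⊆ K := by
    intro z hz
    by_contra hzK
    exact hb (hCK ⟨frontier_cc hC p hz, hzK⟩) hz.1
  have := mem_of_frontier hfr (cc_self hp) (hK p y (fun h => hp (hKC h)) hyK)
  exact disjoint_left.mp (cc_disj p) this hy

/-- Cutting out a small neighbourhood of an interior point of an arc. -/
lemma Arc.cut {S : Set Pl} {x y z : Pl} (h : Arc S x y) (hz : z ∈ S) (hx : z ≠ x) (hy : z ≠ y)
    {ε : ℝ} (hε : 0 < ε) : ∃ S1 S2 S1' S2' x' y', Arc S1 x x' ∧ Arc S2 y' y ∧ Arc S1' x z ∧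
      Arc S2' z y ∧ S1 ⊆ S1' ∧ S2 ⊆ S2' ∧ S1' ⊆ S ∧ S2' ⊆ S ∧ Disjoint S1' S2 ∧ Disjoint S2' S1 ∧
      z ∉ S1 ∧ z ∉ S2 ∧ S \ (S1 ∪ S2) ⊆ ball z ε := by
  obtain ⟨γ, hc, hi, h0, h1, hS⟩ := h
  rw [← hS] at hz
  obtain ⟨t, ht, rfl⟩ := hz
  have ht0 : 0 < t := lt_of_le_of_ne ht.1 (fun h => hx (by rw [← h, h0]))
  have ht1 : t < 1 := lt_of_le_of_ne ht.2 (fun h => hy (by rw [h, h1]))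
  obtain ⟨δ, hδ, hb⟩ := Metric.continuousAt_iff.mp (hc.continuousAt (x := t)) ε hε
  obtain ⟨η, hη, hη1, hη2, hη3⟩ : ∃ η > 0, η < δ ∧ η < t ∧ η < 1 - t := by
    refine ⟨min δ (min t (1 - t)) / 2, ?_, ?_, ?_, ?_⟩
    · have : 0 < min δ (min t (1 - t)) := lt_min hδ (lt_min ht0 (by linarith))
      linarith
    all_goals
      have h1 : 0 < min δ (min t (1 - t)) := lt_min hδ (lt_min ht0 (by linarith))
      have h2 := min_le_left δ (min t (1 - t))
      have h3 := min_le_right δ (min t (1 - t))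
      have h4 := min_le_left t (1 - t)
      have h5 := min_le_right t (1 - t)
      linarith
  have mk : ∀ a b : ℝ, 0 ≤ a → a < b → b ≤ 1 → Arc (γ '' Icc a b) (γ a) (γ b) := fun a b h1 h2 h3 =>
    arc_of_Icc h2 hc.continuousOn (hi.mono (Icc_subset_Icc h1 h3))
  have dj : ∀ a b c d : ℝ, 0 ≤ a → b < c → d ≤ 1 → b ≤ 1 → 0 ≤ c →
      Disjoint (γ '' Icc a b) (γ '' Icc c d) := by
    intro a b c d h1 h2 h3 h4 h5
    rw [disjoint_left]
    rintro _ ⟨s, hs, rfl⟩ ⟨r, hr, hrs⟩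
    have := hi ⟨h5.trans hr.1, hr.2.trans h3⟩ ⟨h1.trans hs.1, hs.2.trans h4⟩ hrs
    linarith [hr.1, hs.2]
  refine ⟨γ '' Icc 0 (t - η), γ '' Icc (t + η) 1, γ '' Icc 0 t, γ '' Icc t 1,
    γ (t - η), γ (t + η), ?_, ?_, ?_, ?_, ?_, ?_, ?_, ?_, ?_, ?_, ?_, ?_, ?_⟩
  · rw [← h0]; exact mk _ _ le_rfl (by linarith) (by linarith)
  · rw [← h1]; exact mk _ _ (by linarith) (by linarith) le_rfl
  · rw [← h0]; exact mk _ _ le_rfl (by linarith) (by linarith)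
  · rw [← h1]; exact mk _ _ (by linarith) (by linarith) le_rfl
  · exact image_mono (Icc_subset_Icc le_rfl (by linarith))
  · exact image_mono (Icc_subset_Icc (by linarith) le_rfl)
  · rw [← hS]; exact image_mono (Icc_subset_Icc le_rfl (by linarith))
  · rw [← hS]; exact image_mono (Icc_subset_Icc (by linarith) le_rfl)
  · exact dj _ _ _ _ le_rfl (by linarith) le_rfl (by linarith) (by linarith)
  · exact (dj _ _ _ _ le_rfl (by linarith) le_rfl (by linarith) (by linarith)).symm
  · exact fun h => disjoint_left.mp (dj 0 (t - η) t 1 le_rfl (by linarith) le_rfl (by linarith)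
      (by linarith)) h ⟨t, ⟨le_rfl, by linarith⟩, rfl⟩
  · exact fun h => disjoint_left.mp (dj 0 t (t + η) 1 le_rfl (by linarith) le_rfl (by linarith)
      (by linarith)) ⟨t, ⟨by linarith, le_rfl⟩, rfl⟩ h
  · rw [← hS]
    rintro _ ⟨⟨s, hs, rfl⟩, hns⟩
    have h5 : t - η < s := by
      by_contra hcon
      exact hns (Or.inl ⟨s, ⟨hs.1, by linarith⟩, rfl⟩)
    have h6 : s < t + η := by
      by_contra hcon
      exact hns (Or.inr ⟨s, ⟨by linarith, hs.2⟩, rfl⟩)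
    apply hb
    rw [Real.dist_eq, abs_lt]; constructor <;> linarith

lemma bdry_arc {A : Set Pl} {x y z p : Pl} (hA : Arc A x y) (hz : z ∈ A) (hx : z ≠ x) (hy : z ≠ y)
    (hp : p ∉ A) : z ∈ closure (cc A p) := by
  refine boundary_gen hA.closed hp hz fun ε hε => ?_
  obtain ⟨S1, S2, S1', S2', x', y', h1, h2, h3, h4, h5, h6, h7, h8, h9, h10, h11, h12, h13⟩ :=
    hA.cut hz hx hy hε
  refine ⟨S1 ∪ S2, union_subset (h5.trans h7) (h6.trans h8), h13, fun h => h.elim h11 h12, ?_⟩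
  intro a b ha hb
  refine janiszewski h1.compact h2.compact ?_ (h1.nonsep (fun h => ha (Or.inl h))
    (fun h => hb (Or.inl h))) (h2.nonsep (fun h => ha (Or.inr h)) (fun h => hb (Or.inr h)))
  rw [disjoint_iff_inter_eq_empty.mp (h9.mono_left h5)]
  exact isPreconnected_empty

lemma bdry_jordan {A B : Set Pl} {x y z p : Pl} (hA : Arc A x y) (hB : Arc B x y)
    (hAB : A ∩ B ⊆ {x, y}) (hz : z ∈ A) (hx : z ≠ x) (hy : z ≠ y)
    (hp : p ∉ A ∪ B) : z ∈ closure (cc (A ∪ B) p) := by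
  refine boundary_gen (hA.closed.union hB.closed) hp (Or.inl hz) fun ε hε => ?_
  obtain ⟨S1, S2, S1', S2', x', y', h1, h2, h3, h4, h5, h6, h7, h8, h9, h10, h11, h12, h13⟩ :=
    hA.cut hz hx hy hε
  have hzB : z ∉ B := fun h => by
    rcases hAB ⟨hz, h⟩ with h | h
    · exact hx h
    · exact hy h
  have hy1 : y ∉ S1 := fun h => disjoint_left.mp h10 h4.right_mem h
  have hx2 : x ∉ S2 := fun h => disjoint_left.mp h9 h3.left_mem h
  have j1 : Arc (S1 ∪ B) x' y := by
    refine h1.symm.join hB ?_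
    rintro w ⟨hw1, hw2⟩
    rcases hAB ⟨h7 (h5 hw1), hw2⟩ with h | h
    · exact h
    · exact absurd (h ▸ hw1) hy1
  have j2 : Arc ((S1 ∪ B) ∪ S2) x' y' := by
    refine j1.join h2.symm ?_
    rintro w ⟨hw1 | hw1, hw2⟩
    · exact absurd hw2 (disjoint_left.mp h9 (h5 hw1))
    rcases hAB ⟨h8 (h6 hw2), hw1⟩ with h | h
    · exact absurd (h ▸ hw2) hx2
    · exact h
  refine ⟨(S1 ∪ B) ∪ S2, ?_, ?_, ?_, fun a b ha hb => j2.nonsep ha hb⟩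
  · rintro w ((h | h) | h)
    · exact Or.inl (h7 (h5 h))
    · exact Or.inr h
    · exact Or.inl (h8 (h6 h))
  · rintro w ⟨hw1, hw2⟩
    have hwB : w ∉ B := fun h => hw2 (Or.inl (Or.inr h))
    exact h13 ⟨hw1.resolve_right hwB, fun h => hw2 (h.elim (fun h => Or.inl (Or.inl h)) Or.inr)⟩
  · rintro ((h | h) | h)
    · exact h11 h
    · exact hzB h
    · exact h12 h

/-- Access by a segment near a boundary point. -/
lemma access_near {S : Set Pl} (hS : IsClosed S) {p z : Pl} (hz : z ∈ S)
    (hcl : z ∈ closure (cc S p)) {r : ℝ} (hr : 0 < r) :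
    ∃ m q B, m ∈ S ∧ m ∈ ball z r ∧ q ∈ cc S p ∧ Arc B q m ∧ B ⊆ ball z r ∧ B \ {m} ⊆ cc S p := by
  obtain ⟨q, hqU, hq⟩ := Metric.mem_closure_iff.mp hcl r hr
  have hqS : q ∉ S := fun h => disjoint_left.mp (cc_disj p) hqU h
  have hqz : q ≠ z := fun h => hqS (h ▸ hz)
  have hqb : q ∈ ball z r := by rw [mem_ball, dist_comm]; exact hq
  obtain ⟨m, B, hm, hB, hBs, hi⟩ := (Arc.seg hqz).first hS ⟨z, right_mem_segment ℝ q z, hz⟩ hqS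
  have hBb : B ⊆ ball z r := hBs.trans ((convex_ball z r).segment_subset hqb (mem_ball_self hr))
  refine ⟨m, q, B, hm, hBb hB.right_mem, hqU, hB, hBb, ?_⟩
  refine subset_cc hB.symm.diff_left_pathConn.isConnected.isPreconnected ?_
    ⟨hB.left_mem, fun h => hB.ne h⟩ hqU
  rw [disjoint_left]
  rintro w ⟨hw1, hw2⟩ hw3
  exact hw2 (hi ⟨hw1, hw3⟩)

/-- Three components cannot all touch three disjoint connected pieces. -/
lemma three_three {S : Set Pl} (hS : IsClosed S) (p : Fin 3 → Pl)
    (hp : ∀ i, p i ∉ S) (hnc : ∀ i k, i ≠ k → ¬ Conn S (p i) (p k)) (A : Fin 3 → Set Pl)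
    (hA : ∀ j, IsPathConnected (A j)) (hAS : ∀ j, A j ⊆ S)
    (hAd : ∀ j l, j ≠ l → Disjoint (A j) (A l))
    (ht : ∀ i j, ∃ z ∈ S, z ∈ closure (cc S (p i)) ∧ ∃ r > 0, S ∩ ball z r ⊆ A j) : False := by
  have hb : ∀ j, ∃ b, b ∈ A j := fun j => (hA j).nonempty
  choose b hb using hb
  refine k33_sets p b (fun i j => cc S (p i) ∪ A j) ?_ ?_
  · intro i j
    obtain ⟨z, hzS, hzc, r, hr, hrA⟩ := ht i j
    obtain ⟨m, q, B, hmS, hmb, hq, hB, hBb, hBU⟩ := access_near hS hzS hzc hr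
    have h1 : JoinedIn (cc S (p i)) (p i) q :=
      joinedIn_of_open (cc_open hS _) (cc_preconn _) (cc_self (hp i)) hq
    have hmA : m ∈ A j := hrA ⟨hmS, hmb⟩
    have h2 : JoinedIn B q m := hB.pathConn.joinedIn _ hB.left_mem _ hB.right_mem
    have h3 : JoinedIn (A j) m (b j) := (hA j).joinedIn _ hmA _ (hb j)
    have hBs : B ⊆ cc S (p i) ∪ A j := by
      intro w hw
      by_cases hwm : w = m
      · right; rw [hwm]; exact hmA
      · left; exact hBU ⟨hw, hwm⟩
    exact (h1.mono subset_union_left).trans ((h2.mono hBs).trans (h3.mono subset_union_right))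
  · intro i j k l hik hjl
    have hUU : Disjoint (cc S (p i)) (cc S (p k)) := by
      rw [disjoint_left]
      intro w hw hw'
      exact hnc i k hik (Conn.trans (K := S) (q := w) hw (Conn.symm hw'))
    rw [disjoint_union_left, disjoint_union_right, disjoint_union_right]
    exact ⟨⟨hUU, (cc_disj _).mono_right (hAS l)⟩, ((cc_disj _).mono_right (hAS j)).symm, hAd j l hjl⟩

/-- A Jordan curve has at most two complementary components. -/
lemma jordan_two {A B : Set Pl} {x y : Pl} (hA : Arc A x y) (hB : Arc B x y)
    (hAB : A ∩ B ⊆ {x, y}) {p q r : Pl} (hp : p ∉ A ∪ B) (hq : q ∉ A ∪ B) (hr : r ∉ A ∪ B)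
    (h1 : ¬ Conn (A ∪ B) p q) (h2 : ¬ Conn (A ∪ B) p r) : Conn (A ∪ B) q r := by
  by_contra h3
  have hcl := hA.closed.union hB.closed
  have hA' := hA
  obtain ⟨γ, hc, hi, h0, h1', hS⟩ := hA
  have hsub : ∀ j : Fin 3, Ioo ((j : ℝ) / 3) (((j : ℝ) + 1) / 3) ⊆ Ioo (0:ℝ) 1 := by
    intro j t ht
    have hj : (j : ℝ) ≤ 2 := by
      have := j.is_le; exact_mod_cast this
    have hj0 : (0:ℝ) ≤ j := by positivity
    exact ⟨by have := ht.1; linarith, by have := ht.2; linarith⟩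
  refine three_three hcl ![p, q, r] ?_ ?_
    (fun j => γ '' Ioo ((j : ℝ) / 3) (((j : ℝ) + 1) / 3)) ?_ ?_ ?_ ?_
  · intro i; fin_cases i <;> assumption
  · intro i k hik
    have h1s : ¬ Conn (A ∪ B) q p := fun h => h1 h.symm
    have h2s : ¬ Conn (A ∪ B) r p := fun h => h2 h.symm
    have h3s : ¬ Conn (A ∪ B) r q := fun h => h3 h.symm
    fin_cases i <;> fin_cases k <;> first | exact absurd rfl hik | assumption
  · intro j
    refine ((convex_Ioo _ _).isPathConnected ?_).image hc
    rw [nonempty_Ioo]; linarith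
  · intro j
    rw [← hS]
    exact (image_mono ((hsub j).trans Ioo_subset_Icc_self)).trans subset_union_left
  · intro j l hjl
    rw [disjoint_left]
    rintro _ ⟨s, hs, rfl⟩ ⟨t, ht, hst⟩
    have h := hi (Ioo_subset_Icc_self (hsub l ht)) (Ioo_subset_Icc_self (hsub j hs)) hst
    subst h
    apply hjl
    have e1 : (j : ℝ) < l + 1 := by have := ht.2; have := hs.1; linarith
    have e2 : (l : ℝ) < j + 1 := by have := hs.2; have := ht.1; linarith
    have e3 : (j : ℕ) < l + 1 := by exact_mod_cast e1
    have e4 : (l : ℕ) < j + 1 := by exact_mod_cast e2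
    exact Fin.ext (by omega)
  · intro i j
    set τ : ℝ := ((j : ℝ) + 1/2) / 3 with hτ
    have hτm : τ ∈ Ioo ((j : ℝ) / 3) (((j : ℝ) + 1) / 3) := ⟨by rw [hτ]; linarith, by rw [hτ]; linarith⟩
    have hτ01 := hsub j hτm
    have hzA : γ τ ∈ A := hS ▸ mem_image_of_mem _ (Ioo_subset_Icc_self hτ01)
    have hzx : γ τ ≠ x := by
      rw [← h0]; intro h
      have := hi (Ioo_subset_Icc_self hτ01) (by simp) h
      linarith [hτ01.1]
    have hzy : γ τ ≠ y := by
      rw [← h1']; intro h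
      have := hi (Ioo_subset_Icc_self hτ01) (by simp) h
      linarith [hτ01.2]
    refine ⟨γ τ, Or.inl hzA, bdry_jordan hA' hB hAB hzA hzx hzy ?_, ?_⟩
    · fin_cases i <;> assumption
    · have hK : IsClosed (γ '' (Icc 0 1 \ Ioo ((j : ℝ) / 3) (((j : ℝ) + 1) / 3)) ∪ B) :=
        ((isCompact_Icc.diff isOpen_Ioo).image hc).isClosed.union hB.closed
      have hzK : γ τ ∉ γ '' (Icc 0 1 \ Ioo ((j : ℝ) / 3) (((j : ℝ) + 1) / 3)) ∪ B := by
        rintro (⟨s, hs, hst⟩ | h)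
        · have := hi hs.1 (Ioo_subset_Icc_self hτ01) hst
          exact hs.2 (this ▸ hτm)
        · rcases hAB ⟨hzA, h⟩ with h | h
          · exact hzx h
          · exact hzy h
      obtain ⟨ε, hε, hb⟩ := Metric.isOpen_iff.mp hK.isOpen_compl _ hzK
      refine ⟨ε, hε, ?_⟩
      rintro w ⟨hw | hw, hwb⟩
      · rw [← hS] at hw
        obtain ⟨s, hs, rfl⟩ := hw
        by_contra hcon
        exact hb hwb (Or.inl ⟨s, ⟨hs, fun h => hcon ⟨s, h, rfl⟩⟩, rfl⟩)
      · exact absurd (Or.inr hw) (hb hwb)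

/-- θ-lemma, indexed version. -/
lemma theta_fin (Q : Fin 3 → Set Pl) {m t p : Pl} (hQ : ∀ i, Arc (Q i) m t)
    (hd : ∀ i j, i ≠ j → Q i ∩ Q j ⊆ {m, t})
    (hC : ∀ i, ∃ x ∈ Q i, x ≠ m ∧ x ≠ t ∧ ∃ U, JoinedIn U p x ∧ ∀ j, j ≠ i → Disjoint U (Q j)) :
    False := by
  choose x hxQ hxm hxt U hU hUd using hC
  have hsp : ∀ i, ∃ S1 S2, Arc S1 m (x i) ∧ Arc S2 (x i) t ∧ S1 ∪ S2 = Q i ∧ S1 ∩ S2 = {x i} :=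
    fun i => (hQ i).split (hxQ i) (hxm i) (hxt i)
  choose S1 S2 h1 h2 h3 h4 using hsp
  have hS1 : ∀ i, S1 i ⊆ Q i := fun i => h3 i ▸ subset_union_left
  have hS2 : ∀ i, S2 i ⊆ Q i := fun i => h3 i ▸ subset_union_right
  have ht1 : ∀ i, t ∉ S1 i := fun i h => by
    have : t ∈ S1 i ∩ S2 i := ⟨h, (h2 i).right_mem⟩
    rw [h4 i] at this
    exact hxt i this.symm
  have hm2 : ∀ i, m ∉ S2 i := fun i h => by
    have : m ∈ S1 i ∩ S2 i := ⟨(h1 i).left_mem, h⟩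
    rw [h4 i] at this
    exact hxm i this.symm
  have h12 : ∀ i j, i ≠ j → Disjoint (S1 i) (S2 j) := by
    intro i j hij
    rw [disjoint_left]
    intro w hw hw'
    rcases hd i j hij ⟨hS1 i hw, hS2 j hw'⟩ with h | h
    · exact hm2 j (h ▸ hw')
    · exact ht1 i (h ▸ hw)
  refine k33_sets ![m, t, p] x ![S1, S2, U] ?_ ?_
  · intro i j
    fin_cases i
    · exact (h1 j).pathConn.joinedIn _ (h1 j).left_mem _ (h1 j).right_mem
    · exact (h2 j).pathConn.joinedIn _ (h2 j).right_mem _ (h2 j).left_mem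
    · exact hU j
  · intro i j k l hik hjl
    fin_cases i <;> fin_cases k
    · exact absurd rfl hik
    · exact h12 j l hjl
    · exact ((hUd l j hjl).mono_right (hS1 j)).symm
    · exact (h12 l j hjl.symm).symm
    · exact absurd rfl hik
    · exact ((hUd l j hjl).mono_right (hS2 j)).symm
    · exact (hUd j l hjl.symm).mono_right (hS1 l)
    · exact (hUd j l hjl.symm).mono_right (hS2 l)
    · exact absurd rfl hik

/-- θ-lemma. -/
lemma theta {Q1 Q2 Q3 : Set Pl} {m t p x1 x2 x3 : Pl} (h1 : Arc Q1 m t) (h2 : Arc Q2 m t)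
    (h3 : Arc Q3 m t) (h12 : Q1 ∩ Q2 ⊆ {m, t}) (h13 : Q1 ∩ Q3 ⊆ {m, t}) (h23 : Q2 ∩ Q3 ⊆ {m, t})
    (hx1 : x1 ∈ Q1 \ {m, t}) (hx2 : x2 ∈ Q2 \ {m, t}) (hx3 : x3 ∈ Q3 \ {m, t})
    (c3 : Conn (Q1 ∪ Q2) p x3) (c2 : Conn (Q1 ∪ Q3) p x2) (c1 : Conn (Q2 ∪ Q3) p x1) : False := by
  have hj : ∀ {K : Set Pl} {x : Pl}, IsClosed K → Conn K p x → JoinedIn (cc K p) p x :=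
    fun hK h => joinedIn_of_open (cc_open hK _) (cc_preconn _) (cc_self h.left) h
  have hne : ∀ {x : Pl} {Q : Set Pl}, x ∈ Q \ {m, t} → x ∈ Q ∧ x ≠ m ∧ x ≠ t := fun hx =>
    ⟨hx.1, fun h => hx.2 (Or.inl h), fun h => hx.2 (Or.inr h)⟩
  refine theta_fin ![Q1, Q2, Q3] (m := m) (t := t) (p := p) ?_ ?_ ?_
  · intro i; fin_cases i <;> assumption
  · intro i j hij
    have h21 : Q2 ∩ Q1 ⊆ {m, t} := by rwa [inter_comm]
    have h31 : Q3 ∩ Q1 ⊆ {m, t} := by rwa [inter_comm]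
    have h32 : Q3 ∩ Q2 ⊆ {m, t} := by rwa [inter_comm]
    fin_cases i <;> fin_cases j <;> first | exact absurd rfl hij | assumption
  · intro i
    fin_cases i
    · refine ⟨x1, (hne hx1).1, (hne hx1).2.1, (hne hx1).2.2, _, hj (h2.closed.union h3.closed) c1, ?_⟩
      intro j hj
      fin_cases j
      · exact absurd rfl hj
      · exact (cc_disj _).mono_right subset_union_left
      · exact (cc_disj _).mono_right subset_union_right
    · refine ⟨x2, (hne hx2).1, (hne hx2).2.1, (hne hx2).2.2, _, hj (h1.closed.union h3.closed) c2, ?_⟩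
      intro j hj
      fin_cases j
      · exact (cc_disj _).mono_right subset_union_left
      · exact absurd rfl hj
      · exact (cc_disj _).mono_right subset_union_right
    · refine ⟨x3, (hne hx3).1, (hne hx3).2.1, (hne hx3).2.2, _, hj (h1.closed.union h2.closed) c3, ?_⟩
      intro j hj
      fin_cases j
      · exact (cc_disj _).mono_right subset_union_left
      · exact (cc_disj _).mono_right subset_union_right
      · exact absurd rfl hj

lemma edge_aux {Y0 S1 S2 S1' : Set Pl} {u x' x y : Pl} (hY0 : IsCompact Y0)
    (h1 : Arc S1 u x') (h2 : IsCompact S2) (h1' : Arc S1' u y) (hss : S1 ⊆ S1')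
    (hd : Disjoint S1' S2) (hY : Y0 ∩ S1' ⊆ {u}) (hy1 : y ∉ S1)
    (hx : x ∈ S1') (hxu : x ≠ u) {F : Set Pl} (hFf : frontier F ⊆ Y0 ∪ S2 ∪ S1)
    (hFd : Disjoint F S1)
    (hxF : x ∈ closure F) : y ∈ F := by
  have hxY : x ∉ Y0 ∪ S2 := by
    rintro (h | h)
    · exact hxu (hY ⟨h, hx⟩)
    · exact disjoint_left.mp hd hx h
  obtain ⟨r, hr, hb⟩ := Metric.isOpen_iff.mp (hY0.union h2).isClosed.isOpen_compl x hxY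
  obtain ⟨p', hp'F, hp'⟩ := Metric.mem_closure_iff.mp hxF r hr
  have c1 : Conn (Y0 ∪ S2) p' x := by
    refine conn_of_preconn (convex_ball x r).isPreconnected
      (disjoint_left.mpr fun w hw => hb hw) (mem_ball'.mpr hp') (mem_ball_self hr)
  have c2 : Conn (Y0 ∪ S2) x y := by
    refine conn_of_preconn h1'.diff_left_pathConn.isConnected.isPreconnected ?_ ⟨hx, hxu⟩
      ⟨h1'.right_mem, h1'.ne.symm⟩
    rw [disjoint_left]
    rintro w ⟨hw1, hw2⟩ (h | h)
    · exact hw2 (hY ⟨h, hw1⟩)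
    · exact disjoint_left.mp hd hw1 h
  have c3 : Conn S1 p' y := h1.nonsep (disjoint_left.mp hFd hp'F) hy1
  have c4 : Conn (Y0 ∪ S2 ∪ S1) p' y := by
    refine janiszewski (hY0.union h2) h1.compact ?_ (c1.trans c2) c3
    refine Set.Subsingleton.isPreconnected ?_
    refine (subsingleton_singleton (a := u)).anti ?_
    rintro w ⟨h | h, hw⟩
    · exact hY ⟨h, hss hw⟩
    · exact absurd h (disjoint_left.mp hd (hss hw))
  exact mem_of_frontier hFf hp'F c4

/-- Edge lemma. -/
lemma edge_lemma {Y0 e : Set Pl} {u v x p : Pl} (hY0 : IsCompact Y0) (he : Arc e u v)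
    (hY : Y0 ∩ e ⊆ {u, v}) (hx : x ∈ e) (hxu : x ≠ u) (hxv : x ≠ v)
    (hxF : x ∈ closure (cc (Y0 ∪ e) p)) : e \ {u, v} ⊆ closure (cc (Y0 ∪ e) p) := by
  rintro y ⟨hye, hyuv⟩
  by_contra hcon
  have hyu : y ≠ u := fun h => hyuv (Or.inl h)
  have hyv : y ≠ v := fun h => hyuv (Or.inr h)
  obtain ⟨ε, hε, hb⟩ := Metric.isOpen_iff.mp isClosed_closure.isOpen_compl y hcon
  obtain ⟨S1, S2, S1', S2', x', y', h1, h2, h3, h4, h5, h6, h7, h8, h9, h10, h11, h12, h13⟩ :=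
    he.cut hye hyu hyv hε
  have hcl := (hY0.union he.compact).isClosed
  have hfr : frontier (cc (Y0 ∪ e) p) ⊆ Y0 ∪ (S1 ∪ S2) := by
    intro z hz
    by_contra hz'
    rcases frontier_cc hcl p hz with h | h
    · exact hz' (Or.inl h)
    · exact hb (h13 ⟨h, fun h => hz' (Or.inr h)⟩) hz.1
  have hx12 : x ∈ S1 ∪ S2 := by
    by_contra h
    exact hb (h13 ⟨hx, h⟩) hxF
  have hdis : Disjoint (cc (Y0 ∪ e) p) e := (cc_disj p).mono_right subset_union_right
  have hv1 : v ∉ S1' := fun h => disjoint_left.mp h9 h h2.right_mem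
  have hu2 : u ∉ S2' := fun h => disjoint_left.mp h10 h h1.left_mem
  have hyF : y ∈ cc (Y0 ∪ e) p := by
    rcases hx12 with hx1 | hx2
    · refine edge_aux hY0 h1 h2.compact h3 h5 h9 ?_ h11 (h5 hx1) hxu ?_
        (hdis.mono_right (h5.trans h7)) hxF
      · rintro w ⟨hw, hw'⟩
        rcases hY ⟨hw, h7 hw'⟩ with h | h
        · exact h
        · exact absurd (h ▸ hw') hv1
      · refine hfr.trans ?_
        rintro w (h | h | h)
        exacts [Or.inl (Or.inl h), Or.inr h, Or.inl (Or.inr h)]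
    · refine edge_aux hY0 h2.symm h1.compact h4.symm h6 h10 ?_ h12 (h6 hx2) hxv ?_
        (hdis.mono_right (h6.trans h8)) hxF
      · rintro w ⟨hw, hw'⟩
        rcases hY ⟨hw, h8 hw'⟩ with h | h
        · exact absurd (h ▸ hw') hu2
        · exact h
      · refine hfr.trans ?_
        rintro w (h | h | h)
        exacts [Or.inl (Or.inl h), Or.inl (Or.inr h), Or.inr h]
  exact disjoint_left.mp hdis hyF hye

/-- An arc is contained in the closure of its interior part. -/
lemma Arc.subset_closure_int {e : Set Pl} {u v : Pl} (he : Arc e u v) :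
    e ⊆ closure (e \ {u, v}) := by
  obtain ⟨γ, hc, hi, h0, h1, hS⟩ := he
  have h2 : γ '' Ioo 0 1 ⊆ e \ {u, v} := by
    rintro _ ⟨t, ht, rfl⟩
    refine ⟨hS ▸ mem_image_of_mem _ (Ioo_subset_Icc_self ht), ?_⟩
    rintro (h | h)
    · rw [← h0] at h
      have := hi (Ioo_subset_Icc_self ht) (by simp) h
      linarith [ht.1]
    · rw [mem_singleton_iff, ← h1] at h
      have := hi (Ioo_subset_Icc_self ht) (by simp) h
      linarith [ht.2]
  refine Subset.trans ?_ (closure_mono h2)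
  rw [← hS, ← closure_Ioo (by norm_num : (0:ℝ) ≠ 1)]
  exact image_closure_subset_closure_image hc

lemma edge_lemma' {Y0 e : Set Pl} {u v x p : Pl} (hY0 : IsCompact Y0) (he : Arc e u v)
    (hY : Y0 ∩ e ⊆ {u, v}) (hx : x ∈ e) (hxu : x ≠ u) (hxv : x ≠ v)
    (hxF : x ∈ closure (cc (Y0 ∪ e) p)) : e ⊆ closure (cc (Y0 ∪ e) p) :=
  he.subset_closure_int.trans
    (closure_minimal (edge_lemma hY0 he hY hx hxu hxv hxF) isClosed_closure)

end PSL

namespace PSL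
open Set Topology Metric

/-- Infinite concatenation of arcs converging to a point. -/
lemma arc_limit (α : ℕ → Set Pl) (x : ℕ → Pl) (w : Pl) (hα : ∀ n, Arc (α n) (x n) (x (n + 1)))
    (h1 : ∀ n, α n ∩ α (n + 1) ⊆ {x (n + 1)}) (h2 : ∀ n m, n + 2 ≤ m → Disjoint (α n) (α m))
    (hw : ∀ n, w ∉ α n) (hlim : ∀ ε > 0, ∃ N, ∀ n ≥ N, α n ⊆ ball w ε) :
    ∃ A, Arc A (x 0) w ∧ A ⊆ (⋃ n, α n) ∪ {w} := by
  choose γ hc hi h0 h1' hS using hα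
  set Γ : ℝ → Pl := fun t => γ ⌊t⌋₊ (t - ⌊t⌋₊) with hΓ
  have hfr : ∀ t : ℝ, 0 ≤ t → t - ⌊t⌋₊ ∈ Ico (0:ℝ) 1 := fun t ht =>
    ⟨by linarith [Nat.floor_le ht], by linarith [Nat.lt_floor_add_one t]⟩
  have hΓm : ∀ t : ℝ, 0 ≤ t → Γ t ∈ α ⌊t⌋₊ := fun t ht => by
    rw [← hS]; exact mem_image_of_mem _ (Ico_subset_Icc_self (hfr t ht))
  have hΓn : ∀ n : ℕ, ∀ t ∈ Icc (n:ℝ) (n + 1), Γ t = γ n (t - n) := by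
    intro n t ht
    rcases ht.2.eq_or_lt with h | h
    · have hf : ⌊t⌋₊ = n + 1 := by
        rw [h]; exact_mod_cast Nat.floor_natCast (n + 1)
      simp only [hΓ, hf]
      rw [h]; push_cast
      rw [sub_self, h0, add_sub_cancel_left, h1']
    · have hf : ⌊t⌋₊ = n := (Nat.floor_eq_iff (le_trans (by positivity) ht.1)).mpr ⟨ht.1, h⟩
      simp only [hΓ, hf]
  have hΓc : ∀ N : ℕ, ContinuousOn Γ (Icc 0 (N:ℝ)) := by
    intro N
    induction N with
    | zero => simp
    | succ n ih =>
      have h3 : ContinuousOn Γ (Icc (n:ℝ) (n + 1)) := by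
        have h4 : ContinuousOn (fun t : ℝ => γ n (t - n)) (Icc (n:ℝ) (n + 1)) := by
          have := hc n
          exact Continuous.continuousOn (by fun_prop)
        exact h4.congr (hΓn n)
      have h5 := ih.union_of_isClosed h3 isClosed_Icc isClosed_Icc
      rw [Icc_union_Icc_eq_Icc (by positivity) (by linarith)] at h5
      push_cast; exact h5
  have hΓi : ∀ a b : ℝ, 0 ≤ a → a < b → Γ a ≠ Γ b := by
    intro a b ha hab heq
    have hb : 0 ≤ b := ha.trans hab.le
    have hfl : ⌊a⌋₊ ≤ ⌊b⌋₊ := Nat.floor_le_floor hab.le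
    have hma := hΓm a ha
    have hmb := hΓm b hb
    rcases Nat.lt_or_ge (⌊b⌋₊) (⌊a⌋₊ + 2) with h | h
    · rcases Nat.lt_or_ge (⌊b⌋₊) (⌊a⌋₊ + 1) with h' | h'
      · have he : ⌊b⌋₊ = ⌊a⌋₊ := by omega
        simp only [hΓ, he] at heq
        have h3 := hfr b hb
        rw [he] at h3
        have := hi _ (Ico_subset_Icc_self (hfr a ha)) (Ico_subset_Icc_self h3) heq
        linarith
      · have he : ⌊b⌋₊ = ⌊a⌋₊ + 1 := by omega
        rw [he, ← heq] at hmb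
        have h3 : Γ a = x (⌊a⌋₊ + 1) := h1 _ ⟨hma, hmb⟩
        rw [← h1'] at h3
        have := hi _ (Ico_subset_Icc_self (hfr a ha)) (by simp) h3
        linarith [(hfr a ha).2]
    · rw [← heq] at hmb
      exact disjoint_left.mp (h2 _ _ h) hma hmb
  set f : ℝ → Pl := fun t => if t < 1 then Γ (t / (1 - t)) else w with hf
  have hfm : ∀ t ∈ Ico (0:ℝ) 1, 0 ≤ t / (1 - t) := fun t ht =>
    div_nonneg ht.1 (by linarith [ht.2])
  have hmono : ∀ s t : ℝ, s < t → t < 1 → s / (1 - s) < t / (1 - t) := by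
    intro s t hst ht
    rw [div_lt_div_iff₀ (by linarith) (by linarith)]
    nlinarith
  have hfc : ContinuousOn f (Icc 0 1) := by
    intro t ht
    rcases ht.2.lt_or_eq with h | h
    · obtain ⟨s, hts, hs1⟩ := exists_between h
      obtain ⟨N, hN⟩ := exists_nat_ge (s / (1 - s))
      have h3 : ContinuousOn f (Icc 0 s) := by
        have h4 : ContinuousOn (fun t : ℝ => Γ (t / (1 - t))) (Icc 0 s) := by
          refine (hΓc N).comp ?_ ?_
          · refine ContinuousOn.div continuousOn_id (by fun_prop) ?_
            intro r hr; linarith [hr.2]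
          · intro r hr
            refine ⟨hfm r ⟨hr.1, by linarith [hr.2]⟩, ?_⟩
            rcases hr.2.eq_or_lt with h | h
            · rw [h]; exact hN
            · exact (hmono r s h hs1).le.trans hN
        refine h4.congr fun r hr => ?_
        have : r < 1 := by linarith [hr.2]
        simp [hf, this]
      have h5 := h3 t ⟨ht.1, hts.le⟩
      refine h5.mono_of_mem_nhdsWithin ?_
      have : Icc 0 s = Icc 0 1 ∩ Iic s := by
        ext r; simp only [mem_Icc, mem_inter_iff, mem_Iic]
        constructor
        · rintro ⟨h1, h2⟩; exact ⟨⟨h1, by linarith⟩, h2⟩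
        · rintro ⟨⟨h1, _⟩, h2⟩; exact ⟨h1, h2⟩
      rw [this]
      exact inter_mem_nhdsWithin _ (Iic_mem_nhds hts)
    · subst h
      rw [Metric.continuousWithinAt_iff]
      intro ε hε
      obtain ⟨N, hN⟩ := hlim ε hε
      have hf1 : f 1 = w := by simp [hf]
      rw [hf1]
      refine ⟨1 / (N + 1), by positivity, ?_⟩
      intro r hr hd
      by_cases hr1 : r < 1
      · have hfr : f r = Γ (r / (1 - r)) := by simp [hf, hr1]
        rw [hfr]
        have h0r := hfm r ⟨hr.1, hr1⟩
        refine hN _ ?_ (hΓm _ h0r)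
        refine Nat.le_floor ?_
        rw [Real.dist_eq, abs_sub_comm, abs_of_pos (by linarith), lt_div_iff₀ (by positivity)] at hd
        rw [le_div_iff₀ (by linarith)]
        nlinarith
      · have : f r = w := by simp [hf, hr1]
        rw [this, dist_self]; exact hε
  have hfi : InjOn f (Icc 0 1) := by
    have aux : ∀ s ∈ Icc (0:ℝ) 1, ∀ t ∈ Icc (0:ℝ) 1, s < t → f s ≠ f t := by
      intro s hs t ht hst heq
      have hs1 : s < 1 := by linarith [ht.2]
      have h3 : f s = Γ (s / (1 - s)) := by simp [hf, hs1]
      rw [h3] at heq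
      by_cases ht1 : t < 1
      · have h4 : f t = Γ (t / (1 - t)) := by simp [hf, ht1]
        rw [h4] at heq
        exact hΓi _ _ (hfm s ⟨hs.1, hs1⟩) (hmono s t hst ht1) heq
      · have h4 : f t = w := by simp [hf, ht1]
        rw [h4] at heq
        exact hw _ (heq ▸ hΓm _ (hfm s ⟨hs.1, hs1⟩))
    intro s hs t ht heq
    rcases lt_trichotomy s t with h | h | h
    · exact absurd heq (aux s hs t ht h)
    · exact h
    · exact absurd heq.symm (aux t ht s hs h)
  have hA := arc_of_Icc (by norm_num : (0:ℝ) < 1) hfc hfi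
  have e0 : f 0 = x 0 := by
    simp [hf, hΓ, h0]
  have e1 : f 1 = w := by simp [hf]
  rw [e0, e1] at hA
  refine ⟨_, hA, ?_⟩
  rintro _ ⟨t, ht, rfl⟩
  by_cases ht1 : t < 1
  · left
    have h3 : f t = Γ (t / (1 - t)) := by simp [hf, ht1]
    rw [h3]
    exact mem_iUnion.mpr ⟨_, hΓm _ (hfm t ⟨ht.1, ht1⟩)⟩
  · right
    simp [hf, ht1]

/-- Loop erasure for a sequence of arcs converging to a point. -/
lemma arc_seq (B : ℕ → Set Pl) (r : ℕ → Pl) (w : Pl) (hB : ∀ n, Arc (B n) (r n) (r (n + 1)))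
    (hw : ∀ n, w ∉ B n) (hlim : ∀ ε > 0, ∃ N, ∀ n ≥ N, B n ⊆ ball w ε)
    (hr : ∀ j > 0, r 0 ∉ B j) : ∃ A, Arc A (r 0) w ∧ A ⊆ (⋃ n, B n) ∪ {w} := by
  classical
  let St := {s : Set Pl × Pl × ℕ // Arc s.1 s.2.1 (r (s.2.2 + 1)) ∧ s.1 ⊆ B s.2.2 ∧
    ∀ i > s.2.2, s.2.1 ∉ B i}
  have step : ∀ s : St, ∃ s' : St, ∃ α : Set Pl, s.1.2.2 < s'.1.2.2 ∧ Arc α s.1.2.1 s'.1.2.1 ∧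
      α ⊆ s.1.1 ∧ s.1.1 ∩ s'.1.1 ⊆ {s'.1.2.1} ∧ ∀ i > s'.1.2.2, Disjoint s.1.1 (B i) := by
    rintro ⟨⟨σ, x, j⟩, h1, h2, h3⟩
    dsimp only at h1 h2 h3 ⊢
    have hwσ : w ∉ σ := fun h => hw j (h2 h)
    obtain ⟨ε, hε, hb⟩ := Metric.isOpen_iff.mp h1.closed.isOpen_compl w hwσ
    obtain ⟨N, hN⟩ := hlim ε hε
    set P : ℕ → Prop := fun i => ¬ Disjoint σ (B i) with hP
    have hPb : ∀ i, P i → i ≤ N + j + 1 := by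
      intro i hi
      by_contra hcon
      apply hi
      rw [disjoint_left]
      intro z hz hz'
      exact hb (hN i (by omega) hz') hz
    have hPj : P (j + 1) := by
      rw [hP]; intro hd
      exact disjoint_left.mp hd h1.right_mem (hB (j + 1)).left_mem
    set j' := Nat.findGreatest P (N + j + 1) with hj'
    have hj'P : P j' := Nat.findGreatest_spec (by omega : j + 1 ≤ N + j + 1) hPj
    have hjj' : j < j' := Nat.le_findGreatest (by omega : j + 1 ≤ N + j + 1) hPj
    have hmax : ∀ i > j', Disjoint σ (B i) := by
      intro i hi
      by_contra hcon
      have := Nat.le_findGreatest (P := P) (hPb i hcon) hcon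
      omega
    have hend : r (j' + 1) ∉ σ := fun h =>
      disjoint_left.mp (hmax (j' + 1) (by omega)) h (hB (j' + 1)).left_mem
    obtain ⟨z, hz1, hz2⟩ := not_disjoint_iff.mp hj'P
    obtain ⟨x', σ', hx', hσ', hσB, hσσ⟩ := (hB j').symm.first h1.closed ⟨z, hz2, hz1⟩ hend
    have hx'x : x' ≠ x := fun h => h3 j' hjj' (h ▸ hσB hσ'.right_mem)
    obtain ⟨α, hα, hασ⟩ := h1.initial hx' hx'x
    refine ⟨⟨⟨σ', x', j'⟩, hσ'.symm, hσB, fun i hi h => disjoint_left.mp (hmax i hi) hx' h⟩, α,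
      hjj', hα, hασ, fun y hy => hσσ ⟨hy.2, hy.1⟩, hmax⟩
  choose nx α hj hα hασ hσσ hdis using step
  let s0 : St := ⟨⟨B 0, r 0, 0⟩, hB 0, subset_rfl, fun i hi => hr i hi⟩
  let s : ℕ → St := fun n => nx^[n] s0
  have hs : ∀ n, s (n + 1) = nx (s n) := fun n => Function.iterate_succ_apply' nx n s0
  have hjs : StrictMono (fun n => (s n).1.2.2) := by
    refine strictMono_nat_of_lt_succ fun n => ?_
    show (s n).1.2.2 < (s (n + 1)).1.2.2
    rw [hs]; exact hj (s n)
  have hαB : ∀ n, α (s n) ⊆ B (s n).1.2.2 := fun n => (hασ (s n)).trans (s n).2.2.1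
  have key : ∃ A, Arc A ((fun n => (s n).1.2.1) 0) w ∧ A ⊆ (⋃ n, (fun n => α (s n)) n) ∪ {w} := by
    refine arc_limit (fun n => α (s n)) (fun n => (s n).1.2.1) w ?_ ?_ ?_ ?_ ?_
    · intro n
      have := hα (s n)
      rw [← hs n] at this
      exact this
    · intro n z hz
      have := hσσ (s n) ⟨hασ _ hz.1, by rw [← hs n]; exact hασ _ hz.2⟩
      rw [← hs n] at this
      exact this
    · intro n m hnm
      have h1 := hdis (s n) (s m).1.2.2
        (by rw [← hs n]; exact hjs (by omega : n + 1 < m))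
      exact h1.mono (hασ _) (hαB m)
    · intro n h
      exact hw _ (hαB n h)
    · intro ε hε
      obtain ⟨N, hN⟩ := hlim ε hε
      refine ⟨N, fun n hn => (hαB n).trans (hN _ ?_)⟩
      exact hn.trans (hjs.id_le n)
  obtain ⟨A, hA, hAs⟩ := key
  refine ⟨A, hA, hAs.trans (union_subset_union_left _ ?_)⟩
  exact iUnion_subset fun n => (hαB n).trans (subset_iUnion B _)

end PSL

namespace PSL
open Set Topology Metric

lemma seg_hit {S : Set Pl} (hS : IsClosed S) {p z : Pl} (hp : p ∉ S) (hz : z ∈ S) {r : ℝ}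
    (hr : 0 < r) (hpb : p ∈ ball z r) : ∃ m B, m ∈ S ∧ Arc B p m ∧ B ⊆ ball z r ∧
      B \ {m} ⊆ cc S p ∧ m ∈ closure (cc S p) := by
  have hqz : p ≠ z := fun h => hp (h ▸ hz)
  obtain ⟨m, B, hm, hB, hBs, hi⟩ := (Arc.seg hqz).first hS ⟨z, right_mem_segment ℝ p z, hz⟩ hp
  have hBb : B ⊆ ball z r := hBs.trans ((convex_ball z r).segment_subset hpb (mem_ball_self hr))
  have hsub : B \ {m} ⊆ cc S p := by
    refine subset_cc hB.symm.diff_left_pathConn.isConnected.isPreconnected ?_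
      ⟨hB.left_mem, fun h => hB.ne h⟩ (cc_self hp)
    rw [disjoint_left]
    rintro w ⟨hw1, hw2⟩ hw3
    exact hw2 (hi ⟨hw1, hw3⟩)
  refine ⟨m, B, hm, hB, hBb, hsub, ?_⟩
  refine closure_mono ?_ (hB.subset_closure_int hB.right_mem)
  rintro w ⟨hw1, hw2⟩
  exact hsub ⟨hw1, fun h => hw2 (Or.inr h)⟩

lemma access_step {Y0 : Set Pl} (hY0 : IsCompact Y0) {γ : ℝ → Pl} (hc : Continuous γ)
    (hi : InjOn γ (Icc 0 1)) (hY : Y0 ∩ γ '' Icc 0 1 ⊆ {γ 0, γ 1}) {F : Set Pl}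
    (hF : Disjoint F (Y0 ∪ γ '' Icc 0 1)) {s : ℝ} (hs : s ∈ Ioc (0:ℝ) 1)
    (hsF : γ '' Icc 0 s ⊆ closure F) {ε : ℝ} (hε : 0 < ε) :
    ∃ U, IsOpen U ∧ IsPreconnected U ∧ U ⊆ ball (γ 0) ε ∧ Disjoint U (Y0 ∪ γ '' Icc 0 1) ∧
      (U ∩ F).Nonempty ∧ ∃ s' ∈ Ioc (0:ℝ) 1, γ '' Icc 0 s' ⊆ closure U := by
  have hs0 : γ s ≠ γ 0 := fun h => by
    have := hi ⟨hs.1.le, hs.2⟩ (by simp) h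
    linarith [hs.1]
  have hds : 0 < dist (γ s) (γ 0) := dist_pos.mpr hs0
  set ρ := min ε (dist (γ s) (γ 0)) with hρ
  have hρ0 : 0 < ρ := lt_min hε hds
  have hcl : IsCompact (Icc 0 1 ∩ γ ⁻¹' {z | ρ ≤ dist z (γ 0)}) :=
    isCompact_Icc.inter_right ((isClosed_le continuous_const (by fun_prop)).preimage hc)
  obtain ⟨τ, hτ, hmin⟩ := hcl.exists_isLeast ⟨s, ⟨hs.1.le, hs.2⟩, (min_le_right _ _ : ρ ≤ _)⟩
  have hτs : τ ≤ s := hmin ⟨⟨hs.1.le, hs.2⟩, (min_le_right _ _ : ρ ≤ _)⟩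
  have hτ0 : 0 < τ := by
    refine lt_of_le_of_ne hτ.1.1 fun h => ?_
    have h2 : ρ ≤ dist (γ τ) (γ 0) := hτ.2
    rw [← h, dist_self] at h2
    linarith
  have hin : ∀ t ∈ Ico 0 τ, dist (γ t) (γ 0) < ρ := by
    intro t ht
    by_contra hcon
    push Not at hcon
    have := hmin ⟨⟨ht.1, ht.2.le.trans hτ.1.2⟩, hcon⟩
    linarith [ht.2]
  set J := γ '' Icc 0 τ with hJ
  set R := γ '' Icc τ 1 with hR
  have hJR : J ∪ R = γ '' Icc 0 1 := by
    rw [hJ, hR, ← image_union, Icc_union_Icc_eq_Icc hτ.1.1 hτ.1.2]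
  have hJa : Arc J (γ 0) (γ τ) :=
    arc_of_Icc hτ0 hc.continuousOn (hi.mono (Icc_subset_Icc le_rfl hτ.1.2))
  set Z := Y0 ∪ sphere (γ 0) ρ ∪ R with hZ
  have hZc : IsCompact Z := (hY0.union (isCompact_sphere _ _)).union (isCompact_Icc.image hc)
  have hZJ : Z ∩ J ⊆ {γ 0, γ τ} := by
    rintro _ ⟨hz, t, ht, rfl⟩
    have ht1 : t ∈ Icc (0:ℝ) 1 := ⟨ht.1, ht.2.trans hτ.1.2⟩
    rcases ht.2.eq_or_lt with h | h
    · right; rw [h]; rfl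
    rcases hz with (hz | hz) | ⟨t', ht', hz⟩
    · rcases hY ⟨hz, mem_image_of_mem _ ht1⟩ with h' | h'
      · left; exact h'
      · have := hi ht1 (by simp) h'
        linarith [hτ.1.2]
    · have := hin t ⟨ht.1, h⟩
      rw [mem_sphere] at hz
      linarith
    · have := hi ⟨hτ.1.1.trans ht'.1, ht'.2⟩ ht1 hz
      linarith [ht'.1]
  set y := γ (τ / 2) with hy
  have hτ2 : τ / 2 ∈ Icc 0 τ := ⟨by linarith, by linarith⟩
  have hτ21 : τ / 2 ∈ Icc (0:ℝ) 1 := ⟨by linarith, by linarith [hτ.1.2]⟩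
  have hyJ : y ∈ J := mem_image_of_mem _ hτ2
  have hyZ : y ∉ Z ∪ {γ 0} := by
    have hy0 : y ≠ γ 0 := fun h => by
      have := hi hτ21 (by simp) h
      linarith
    rintro (h | h)
    · rcases hZJ ⟨h, hyJ⟩ with h | h
      · exact hy0 h
      · have := hi hτ21 hτ.1 h
        linarith
    · exact hy0 h
  obtain ⟨r, hr, hb⟩ := Metric.isOpen_iff.mp
    (hZc.isClosed.union isClosed_singleton).isOpen_compl y hyZ
  have hyF : y ∈ closure F := hsF (mem_image_of_mem _ ⟨hτ2.1, hτ2.2.trans hτs⟩)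
  -- keep the ball within the ball of radius `ρ`
  have hyρ : dist y (γ 0) < ρ := hin _ ⟨hτ2.1, by linarith⟩
  set r' := min r (ρ - dist y (γ 0)) with hr'
  have hr'0 : 0 < r' := lt_min hr (by linarith)
  obtain ⟨p, hpF, hp⟩ := Metric.mem_closure_iff.mp hyF r' hr'0
  have hpb : p ∈ ball y r' := by rw [mem_ball, dist_comm]; exact hp
  have hbb : ball y r' ⊆ ball y r := ball_subset_ball (min_le_left _ _)
  have hpY := disjoint_left.mp hF hpF
  have hpZ : p ∉ Z ∪ J := by
    rintro (h | h)
    · exact hb (hbb hpb) (Or.inl h)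
    · exact hpY (Or.inr (hJR ▸ Or.inl h))
  have hZJc : IsClosed (Z ∪ J) := hZc.isClosed.union hJa.closed
  obtain ⟨m, B, hm, hBa, hBb, -, hmc⟩ := seg_hit hZJc hpZ (Or.inr hyJ) hr'0 hpb
  have hB := hBb hBa.right_mem
  have hmZ := hb (hbb hB)
  have hmJ : m ∈ J := hm.resolve_left fun h => hmZ (Or.inl h)
  have hm0 : m ≠ γ 0 := fun h => hmZ (Or.inr h)
  have hmτ : m ≠ γ τ := fun h => hmZ (Or.inl (Or.inr (h ▸ mem_image_of_mem _ ⟨le_rfl, hτ.1.2⟩)))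
  have hJcl := edge_lemma' hZc hJa hZJ hmJ hm0 hmτ hmc
  refine ⟨cc (Z ∪ J) p, cc_open hZJc p, cc_preconn p, ?_, ?_, ⟨p, cc_self hpZ, hpF⟩, τ,
    ⟨hτ0, hτ.1.2⟩, hJcl⟩
  · refine (subset_of_frontier (U := ball (γ 0) ρ) (cc_preconn p) ⟨p, cc_self hpZ, ?_⟩ ?_).trans
      (ball_subset_ball (min_le_left _ _))
    · rw [mem_ball] at hpb ⊢
      have := min_le_right r (ρ - dist y (γ 0))
      linarith [dist_triangle p y (γ 0)]
    · exact (cc_disj p).mono_right (frontier_ball_subset_sphere.trans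
        fun z hz => Or.inl (Or.inl (Or.inr hz)))
  · refine (cc_disj p).mono_right ?_
    rw [← hJR]
    rintro z (h | h | h)
    · exact Or.inl (Or.inl (Or.inl h))
    · exact Or.inr h
    · exact Or.inl (Or.inr h)

/-- Accessibility of an endpoint of an edge on the boundary of a region. -/
lemma access {Y0 e : Set Pl} {w v p q : Pl} (hY0 : IsCompact Y0) (he : Arc e w v)
    (hY : Y0 ∩ e ⊆ {w, v}) (hcl : e ⊆ closure (cc (Y0 ∪ e) p)) (hq : q ∈ cc (Y0 ∪ e) p) :
    ∃ A, Arc A q w ∧ A ⊆ cc (Y0 ∪ e) p ∪ {w} := by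
  obtain ⟨γ, hc, hi, rfl, rfl, rfl⟩ := he
  set Y := Y0 ∪ γ '' Icc 0 1 with hYd
  set F := cc Y p with hF
  have hYc : IsClosed Y := hY0.isClosed.union (isCompact_Icc.image hc).isClosed
  have hwY : γ 0 ∈ Y := Or.inr (mem_image_of_mem _ (by simp))
  let St := {s : Set Pl × Pl // IsOpen s.1 ∧ IsPreconnected s.1 ∧ s.2 ∈ s.1 ∧ s.1 ⊆ F ∧
    ∃ t ∈ Ioc (0:ℝ) 1, γ '' Icc 0 t ⊆ closure s.1}
  have hne : ∀ s : St, 0 < dist s.1.2 (γ 0) := by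
    intro s
    refine dist_pos.mpr fun h => ?_
    exact disjoint_left.mp (cc_disj p) (s.2.2.2.2.1 s.2.2.2.1) (h ▸ hwY)
  have step : ∀ s : St, ∃ s' : St, s'.1.1 ⊆ ball (γ 0) (dist s.1.2 (γ 0) / 2) ∧
      s'.1.2 ∈ s.1.1 := by
    intro s
    obtain ⟨h1, h2, h3, h4, t, ht, h5⟩ := s.2
    obtain ⟨U, hU1, hU2, hU3, hU4, ⟨r, hrU, hr⟩, hU5⟩ := access_step hY0 hc hi hY
      ((cc_disj p).mono_left h4) ht h5 (half_pos (hne s))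
    exact ⟨⟨⟨U, r⟩, hU1, hU2, hrU, subset_cc hU2 hU4 hrU (h4 hr), hU5⟩, hU3, hr⟩
  choose nx hnx1 hnx2 using step
  let s0 : St := ⟨⟨F, q⟩, cc_open hYc p, cc_preconn p, hq, subset_rfl, 1, by simp, hcl⟩
  let s : ℕ → St := fun n => nx^[n] s0
  have hs : ∀ n, s (n + 1) = nx (s n) := fun n => Function.iterate_succ_apply' nx n s0
  have hd : ∀ n, dist (s n).1.2 (γ 0) ≤ dist q (γ 0) / 2 ^ n := by
    intro n
    induction n with
    | zero => simp [s, s0]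
    | succ n ih =>
      have h1 := hnx1 (s n)
      rw [← hs] at h1
      have h2 := h1 (s (n + 1)).2.2.2.1
      rw [mem_ball] at h2
      refine h2.le.trans ?_
      rw [pow_succ, ← div_div]
      linarith
  have hU : ∀ n, (s (n + 1)).1.1 ⊆ ball (γ 0) (dist q (γ 0) / 2 ^ (n + 1)) := by
    intro n
    have h1 := hnx1 (s n)
    rw [← hs] at h1
    refine h1.trans (ball_subset_ball ?_)
    rw [pow_succ, ← div_div]
    linarith [hd n]
  have hq0 : 0 < dist q (γ 0) := hne s0
  have hB : ∀ n, ∃ B, Arc B (s n).1.2 (s (n + 1)).1.2 ∧ B ⊆ (s n).1.1 := by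
    intro n
    have h2 := hnx2 (s n)
    have h1 := hnx1 (s n)
    rw [← hs] at h1 h2
    refine arc_of_open (s n).2.1 (s n).2.2.1 (s n).2.2.2.1 h2 ?_
    intro h
    have h3 := h1 (s (n + 1)).2.2.2.1
    rw [← h, mem_ball] at h3
    linarith [hne (s n)]
  choose B hB hBU using hB
  have key : ∃ A, Arc A ((fun n => (s n).1.2) 0) (γ 0) ∧ A ⊆ (⋃ n, B n) ∪ {γ 0} := by
    refine arc_seq B (fun n => (s n).1.2) (γ 0) hB ?_ ?_ ?_
    · intro n h
      exact disjoint_left.mp (cc_disj p) ((s n).2.2.2.2.1 (hBU n h)) hwY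
    · intro ε hε
      obtain ⟨N, hN⟩ := exists_pow_lt_of_lt_one (div_pos hε hq0) (by norm_num : (1/2:ℝ) < 1)
      refine ⟨N + 1, fun n hn => ?_⟩
      obtain ⟨k, rfl⟩ : ∃ k, n = k + 1 := ⟨n - 1, by omega⟩
      refine ((hBU _).trans (hU k)).trans (ball_subset_ball ?_)
      have h1 : (1/2:ℝ) ^ (k + 1) ≤ (1/2) ^ N :=
        pow_le_pow_of_le_one (by norm_num) (by norm_num) (by omega)
      have h2 : (1/2:ℝ) ^ (k + 1) ≤ ε / dist q (γ 0) := h1.trans hN.le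
      rw [le_div_iff₀ hq0, one_div, inv_pow] at h2
      rw [div_eq_mul_inv, mul_comm]
      exact h2
    · intro j hj h
      obtain ⟨k, rfl⟩ : ∃ k, j = k + 1 := ⟨j - 1, by omega⟩
      have h1 := hU k (hBU _ h)
      rw [mem_ball] at h1
      have h2 : dist q (γ 0) / 2 ^ (k + 1) ≤ dist q (γ 0) :=
        div_le_self hq0.le (one_le_pow₀ (by norm_num))
      exact absurd (h1.trans_le h2) (lt_irrefl _)
  obtain ⟨A, hA, hAs⟩ := key
  refine ⟨A, hA, hAs.trans (union_subset_union_left _ ?_)⟩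
  exact iUnion_subset fun n => (hBU n).trans (s n).2.2.2.2.1

end PSL

namespace PSL
open Set Topology Metric

section Graph
variable {V : Type} {G T : SimpleGraph V} (E : PlaneEmbedding G)

/-- The drawn edge. -/
def ed (x y : V) : Set Pl := E.arc x y '' Icc 0 1

/-- The drawn graph. -/
def Xs : Set Pl := ⋃ x, ⋃ y, ⋃ (_ : G.Adj x y), ed E x y

/-- The drawn graph without one edge. -/
def Xe (u v : V) : Set Pl := ⋃ x, ⋃ y, ⋃ (_ : G.Adj x y ∧ s(x, y) ≠ s(u, v)), ed E x y

/-- The drawn edges of a walk. -/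
def drw {u v : V} (p : T.Walk u v) : Set Pl := ⋃ x, ⋃ y, ⋃ (_ : s(x, y) ∈ p.edges), ed E x y

variable {E}

lemma mem_Xs {z : Pl} : z ∈ Xs E ↔ ∃ x y, G.Adj x y ∧ z ∈ ed E x y := by
  simp only [Xs, mem_iUnion, exists_prop]

lemma mem_Xe {z : Pl} {u v : V} :
    z ∈ Xe E u v ↔ ∃ x y, (G.Adj x y ∧ s(x, y) ≠ s(u, v)) ∧ z ∈ ed E x y := by
  simp only [Xe, mem_iUnion, exists_prop]

lemma mem_drw {z : Pl} {u v : V} {p : T.Walk u v} :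
    z ∈ drw E p ↔ ∃ x y, s(x, y) ∈ p.edges ∧ z ∈ ed E x y := by
  simp only [drw, mem_iUnion, exists_prop]

lemma ed_arc {x y : V} (h : G.Adj x y) : Arc (ed E x y) (E.pos x) (E.pos y) :=
  ⟨E.arc x y, E.arc_cont h, E.arc_injOn h, E.arc_zero h, E.arc_one h, rfl⟩

lemma ed_symm {x y : V} (h : G.Adj x y) : ed E y x = ed E x y := by
  ext z
  constructor
  · rintro ⟨t, ht, rfl⟩
    exact ⟨1 - t, ⟨by linarith [ht.2], by linarith [ht.1]⟩, (E.arc_symm h t).symm⟩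
  · rintro ⟨t, ht, rfl⟩
    exact ⟨1 - t, ⟨by linarith [ht.2], by linarith [ht.1]⟩, (E.arc_symm h.symm t).symm⟩

lemma ed_of_eq {x y a b : V} (h : G.Adj a b) (he : s(x, y) = s(a, b)) : ed E x y = ed E a b := by
  rcases Sym2.eq_iff.mp he with ⟨rfl, rfl⟩ | ⟨rfl, rfl⟩
  · rfl
  · exact ed_symm h

lemma pos_mem_ed {x y w : V} (h : G.Adj x y) (hw : E.pos w ∈ ed E x y) : w = x ∨ w = y := by
  obtain ⟨t, ht, he⟩ := hw
  rcases ht.1.eq_or_lt with h0 | h0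
  · left; rw [← h0, E.arc_zero h] at he; exact E.pos_inj he.symm
  rcases ht.2.eq_or_lt with h1 | h1
  · right; rw [h1, E.arc_one h] at he; exact E.pos_inj he.symm
  · exact absurd ⟨t, ⟨h0, h1⟩, he⟩ (E.arc_avoid h w)

lemma ed_inter {x y a b : V} (h : G.Adj x y) (h' : G.Adj a b) (hne : s(x, y) ≠ s(a, b)) {z : Pl}
    (hz : z ∈ ed E x y) (hz' : z ∈ ed E a b) :
    ∃ w, z = E.pos w ∧ (w = x ∨ w = y) ∧ (w = a ∨ w = b) := by
  obtain ⟨h1, h2⟩ := E.arc_meet h h' hne ⟨hz, hz'⟩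
  rcases h1 with h1 | h1
  · refine ⟨x, h1, Or.inl rfl, ?_⟩
    exact pos_mem_ed h' (by rw [← h1]; exact hz')
  · refine ⟨y, h1, Or.inr rfl, ?_⟩
    exact pos_mem_ed h' (by rw [← h1]; exact hz')

lemma ed_sub_Xs {x y : V} (h : G.Adj x y) : ed E x y ⊆ Xs E := fun _ hz => mem_Xs.mpr ⟨x, y, h, hz⟩

lemma pos_mem_left {x y : V} (h : G.Adj x y) : E.pos x ∈ ed E x y := (ed_arc h).left_mem
lemma pos_mem_right {x y : V} (h : G.Adj x y) : E.pos y ∈ ed E x y := (ed_arc h).right_mem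

lemma Xe_sub {u v : V} : Xe E u v ⊆ Xs E := fun _ hz =>
  let ⟨x, y, h, h'⟩ := mem_Xe.mp hz; mem_Xs.mpr ⟨x, y, h.1, h'⟩

lemma Xs_eq {u v : V} (h : G.Adj u v) : Xs E = Xe E u v ∪ ed E u v := by
  refine Subset.antisymm ?_ (union_subset Xe_sub (ed_sub_Xs h))
  intro z hz
  obtain ⟨x, y, hxy, hz⟩ := mem_Xs.mp hz
  by_cases he : s(x, y) = s(u, v)
  · right; rwa [ed_of_eq h he] at hz
  · left; exact mem_Xe.mpr ⟨x, y, ⟨hxy, he⟩, hz⟩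

lemma Xe_inter {u v : V} (h : G.Adj u v) : Xe E u v ∩ ed E u v ⊆ {E.pos u, E.pos v} := by
  rintro z ⟨hz, hz'⟩
  obtain ⟨x, y, ⟨hxy, hne⟩, hz⟩ := mem_Xe.mp hz
  exact (E.arc_meet hxy h hne ⟨hz, hz'⟩).2

lemma Xs_compact [Finite V] : IsCompact (Xs E) := by
  refine isCompact_iUnion fun x => isCompact_iUnion fun y => isCompact_iUnion fun h => ?_
  exact (ed_arc h).compact

lemma Xe_compact [Finite V] (u v : V) : IsCompact (Xe E u v) := by
  refine isCompact_iUnion fun x => isCompact_iUnion fun y => isCompact_iUnion fun h => ?_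
  exact (ed_arc h.1).compact

lemma drw_sub (hle : T ≤ G) {u v : V} (p : T.Walk u v) : drw E p ⊆ Xs E := fun _ hz =>
  let ⟨x, y, h, h'⟩ := mem_drw.mp hz; mem_Xs.mpr ⟨x, y, hle (p.adj_of_mem_edges h), h'⟩

lemma drw_append {u v w : V} (p : T.Walk u v) (q : T.Walk v w) :
    drw E (p.append q) = drw E p ∪ drw E q := by
  ext z
  simp only [mem_union, mem_drw, SimpleGraph.Walk.edges_append, List.mem_append]
  constructor
  · rintro ⟨x, y, h | h, h'⟩
    · exact Or.inl ⟨x, y, h, h'⟩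
    · exact Or.inr ⟨x, y, h, h'⟩
  · rintro (⟨x, y, h, h'⟩ | ⟨x, y, h, h'⟩)
    · exact ⟨x, y, Or.inl h, h'⟩
    · exact ⟨x, y, Or.inr h, h'⟩

lemma drw_reverse {u v : V} (p : T.Walk u v) : drw E p.reverse = drw E p := by
  ext z
  simp only [mem_drw, SimpleGraph.Walk.edges_reverse, List.mem_reverse]

lemma drw_nil {u : V} : drw E (SimpleGraph.Walk.nil : T.Walk u u) = ∅ := by
  ext z
  simp [mem_drw]

lemma drw_cons (hle : T ≤ G) {u v w : V} (h : T.Adj u v) (p : T.Walk v w) :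
    drw E (SimpleGraph.Walk.cons h p) = ed E u v ∪ drw E p := by
  ext z
  simp only [mem_union, mem_drw, SimpleGraph.Walk.edges_cons, List.mem_cons]
  constructor
  · rintro ⟨x, y, h1 | h1, h'⟩
    · left; rwa [ed_of_eq (hle h) h1] at h'
    · exact Or.inr ⟨x, y, h1, h'⟩
  · rintro (h' | ⟨x, y, h1, h'⟩)
    · exact ⟨u, v, Or.inl rfl, h'⟩
    · exact ⟨x, y, Or.inr h1, h'⟩

lemma pos_mem_drw (hle : T ≤ G) {u v w : V} {p : T.Walk u v} (h : E.pos w ∈ drw E p) :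
    w ∈ p.support := by
  obtain ⟨x, y, h1, h2⟩ := mem_drw.mp h
  rcases pos_mem_ed (hle (p.adj_of_mem_edges h1)) h2 with rfl | rfl
  · exact p.fst_mem_support_of_mem_edges h1
  · exact p.snd_mem_support_of_mem_edges h1

lemma drw_inter (hle : T ≤ G) {u v u' v' : V} {p : T.Walk u v} {q : T.Walk u' v'} {z : Pl}
    (hz : z ∈ drw E p) (hz' : z ∈ drw E q) :
    (∃ w, z = E.pos w ∧ w ∈ p.support ∧ w ∈ q.support) ∨
      ∃ x y, s(x, y) ∈ p.edges ∧ s(x, y) ∈ q.edges := by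
  obtain ⟨x, y, h1, h2⟩ := mem_drw.mp hz
  obtain ⟨a, b, h3, h4⟩ := mem_drw.mp hz'
  by_cases he : s(x, y) = s(a, b)
  · right; exact ⟨x, y, h1, he ▸ h3⟩
  · left
    obtain ⟨w, rfl, -, -⟩ := ed_inter (hle (p.adj_of_mem_edges h1)) (hle (q.adj_of_mem_edges h3))
      he h2 h4
    exact ⟨w, rfl, pos_mem_drw hle hz, pos_mem_drw hle hz'⟩

lemma drw_inter' (hle : T ≤ G) {u v u' v' t : V} {p : T.Walk u v} {q : T.Walk u' v'}
    (hpq : ∀ w, w ∈ p.support → w ∈ q.support → w = t) : drw E p ∩ drw E q ⊆ {E.pos t} := by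
  rintro z ⟨hz, hz'⟩
  rcases drw_inter hle hz hz' with ⟨w, rfl, h1, h2⟩ | ⟨x, y, h1, h2⟩
  · rw [hpq w h1 h2]; rfl
  · have hx := hpq x (p.fst_mem_support_of_mem_edges h1) (q.fst_mem_support_of_mem_edges h2)
    have hy := hpq y (p.snd_mem_support_of_mem_edges h1) (q.snd_mem_support_of_mem_edges h2)
    exact absurd (hx.trans hy.symm) (p.adj_of_mem_edges h1).ne

/-- Extending an arc by a drawn tree path. -/
lemma arc_ext (hle : T ≤ G) {u v : V} {p : T.Walk u v} (hp : p.IsPath) : ∀ {A : Set Pl} {m : Pl},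
    Arc A m (E.pos u) → (∀ z ∈ A, z ∈ drw E p → z = E.pos u) → Arc (A ∪ drw E p) m (E.pos v) := by
  induction p with
  | nil => intro A m hA _; rw [drw_nil, union_empty]; exact hA
  | @cons a b c h p ih =>
    intro A m hA hd
    rw [SimpleGraph.Walk.cons_isPath_iff] at hp
    rw [drw_cons hle h] at hd ⊢
    rw [← union_assoc]
    refine ih hp.1 (hA.join (ed_arc (hle h)) fun z hz => hd z hz.1 (Or.inl hz.2)) ?_
    rintro z (hz | hz) hz'
    · have := hd z hz (Or.inr hz')
      subst this
      exact absurd (pos_mem_drw hle hz') hp.2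
    · obtain ⟨x, y, h1, h2⟩ := mem_drw.mp hz'
      have hne : s(a, b) ≠ s(x, y) := by
        intro he
        rw [← he] at h1
        exact hp.2 (p.fst_mem_support_of_mem_edges h1)
      obtain ⟨w, rfl, rfl | rfl, -⟩ := ed_inter (hle h) (hle (p.adj_of_mem_edges h1)) hne hz h2
      · exact absurd (pos_mem_drw hle hz') hp.2
      · rfl

lemma drw_arc (hle : T ≤ G) {u v : V} {p : T.Walk u v} (hp : p.IsPath) (huv : u ≠ v) :
    Arc (drw E p) (E.pos u) (E.pos v) := by
  cases p with
  | nil => exact absurd rfl huv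
  | @cons a b c h p =>
    rw [SimpleGraph.Walk.cons_isPath_iff] at hp
    rw [drw_cons hle h]
    refine arc_ext hle hp.1 (ed_arc (hle h)) ?_
    intro z hz hz'
    obtain ⟨x, y, h1, h2⟩ := mem_drw.mp hz'
    have hne : s(u, b) ≠ s(x, y) := by
      intro he
      rw [← he] at h1
      exact hp.2 (p.fst_mem_support_of_mem_edges h1)
    obtain ⟨w, rfl, rfl | rfl, -⟩ := ed_inter (hle h) (hle (p.adj_of_mem_edges h1)) hne hz h2
    · exact absurd (pos_mem_drw hle hz') hp.2
    · rfl

end Graph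
end PSL

namespace PSL
open Set Topology Metric

section Graph
variable {V : Type} {G T : SimpleGraph V} {E : PlaneEmbedding G}

lemma path_append {u v w : V} {p : T.Walk u v} (hp : p.IsPath) {q : T.Walk v w} (hq : q.IsPath)
    (hd : ∀ x, x ∈ p.support → x ∈ q.support → x = v) : (p.append q).IsPath := by
  induction p with
  | nil => exact hq
  | @cons a b c h p ih =>
    rw [SimpleGraph.Walk.cons_isPath_iff] at hp
    rw [SimpleGraph.Walk.cons_append, SimpleGraph.Walk.cons_isPath_iff]
    refine ⟨ih hp.1 hq fun x hx hx' => hd x (by simp [hx]) hx', ?_⟩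
    rw [SimpleGraph.Walk.mem_support_append_iff]
    rintro (h1 | h1)
    · exact hp.2 h1
    · have := hd a (by simp) h1
      rw [this] at hp
      exact hp.2 p.end_mem_support

lemma first_hit (s : Set V) {w x : V} (r : T.Walk w x) (hr : r.IsPath) (hx : x ∈ s) :
    ∃ t ∈ s, ∃ r' : T.Walk w t, r'.IsPath ∧ (∀ y ∈ r'.support, y ∈ r.support) ∧
      ∀ y ∈ r'.support, y ∈ s → y = t := by
  induction r with
  | nil => exact ⟨_, hx, .nil, by simp, by simp, by simp⟩
  | @cons a b c h r ih =>
    rw [SimpleGraph.Walk.cons_isPath_iff] at hr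
    by_cases ha : a ∈ s
    · exact ⟨a, ha, .nil, by simp, by simp, by simp⟩
    · obtain ⟨t, ht, r', h1, h2, h3⟩ := ih hr.1 hx
      refine ⟨t, ht, .cons h r', ?_, ?_, ?_⟩
      · rw [SimpleGraph.Walk.cons_isPath_iff]
        exact ⟨h1, fun h => hr.2 (h2 _ h)⟩
      · intro y hy
        simp only [SimpleGraph.Walk.support_cons, List.mem_cons] at hy ⊢
        exact hy.imp id (h2 y)
      · intro y hy hys
        simp only [SimpleGraph.Walk.support_cons, List.mem_cons] at hy
        rcases hy with rfl | hy
        · exact absurd hys ha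
        · exact h3 y hy hys

lemma median (hT : T.IsTree) {u v : V} {p : T.Walk u v} (hp : p.IsPath) (w : V) :
    ∃ t, ∃ (Pu : T.Walk t u) (Pv : T.Walk t v) (Pw : T.Walk t w), Pu.IsPath ∧ Pv.IsPath ∧
      Pw.IsPath ∧ (∀ x, x ∈ Pu.support → x ∈ Pv.support → x = t) ∧
      (∀ x, x ∈ Pu.support → x ∈ Pw.support → x = t) ∧
      (∀ x, x ∈ Pv.support → x ∈ Pw.support → x = t) ∧ p = Pu.reverse.append Pv ∧
      (w ∈ p.support → w = t) := by
  obtain ⟨r, hr, -⟩ := hT.existsUnique_path w u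
  obtain ⟨t, ht, r', h1, -, h3⟩ := first_hit {x | x ∈ p.support} r hr p.start_mem_support
  obtain ⟨a, b, ha, hb, rfl⟩ := hp.mem_support_iff_exists_append.mp ht
  have hab : ∀ x, x ∈ a.support → x ∈ b.support → x = t := by
    intro x hx hx'
    by_contra hne
    exact hp.ne_of_mem_support_of_append hne hx hx' rfl
  refine ⟨t, a.reverse, b, r'.reverse, ha.reverse, hb, h1.reverse, ?_, ?_, ?_, ?_, ?_⟩
  · intro x hx hx'
    exact hab x (by simpa using hx) hx'
  · intro x hx hx'
    refine h3 x (by simpa using hx') ?_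
    show x ∈ (a.append b).support
    rw [SimpleGraph.Walk.mem_support_append_iff]
    exact Or.inl (by simpa using hx)
  · intro x hx hx'
    refine h3 x (by simpa using hx') ?_
    show x ∈ (a.append b).support
    rw [SimpleGraph.Walk.mem_support_append_iff]
    exact Or.inr hx
  · simp
  · intro hw
    exact h3 w r'.start_mem_support hw

variable (E) in
/-- A strict arc: it meets the drawn graph only at its endpoints. -/
def Strict (S : Set Pl) (u v : V) : Prop :=
  Arc S (E.pos u) (E.pos v) ∧ S ∩ Xs E ⊆ {E.pos u, E.pos v}

/-- If an interior point of a drawn edge is on the boundary of a face, so is the edge. -/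
lemma edge_cl [Finite V] {S : Set Pl} (hS : IsCompact S) (hSX : S ∩ Xs E ⊆ range E.pos) {a b : V}
    (h : G.Adj a b) {x q : Pl} (hx : x ∈ ed E a b) (hxa : x ≠ E.pos a) (hxb : x ≠ E.pos b)
    (hcl : x ∈ closure (cc (Xs E ∪ S) q)) : ∃ Y0, IsCompact Y0 ∧ Y0 ∩ ed E a b ⊆ {E.pos a, E.pos b} ∧
      Xs E ∪ S = Y0 ∪ ed E a b ∧ ed E a b ⊆ closure (cc (Y0 ∪ ed E a b) q) := by
  have he : Xs E ∪ S = (Xe E a b ∪ S) ∪ ed E a b := by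
    rw [Xs_eq h, union_assoc, union_assoc, union_comm (ed E a b)]
  have hc : IsCompact (Xe E a b ∪ S) := (Xe_compact a b).union hS
  have hi : (Xe E a b ∪ S) ∩ ed E a b ⊆ {E.pos a, E.pos b} := by
    rintro z ⟨hz | hz, hz'⟩
    · exact Xe_inter h ⟨hz, hz'⟩
    · obtain ⟨w, rfl⟩ := hSX ⟨hz, ed_sub_Xs h hz'⟩
      rcases pos_mem_ed h hz' with rfl | rfl
      · left; rfl
      · right; rfl
  refine ⟨Xe E a b ∪ S, hc, hi, he, ?_⟩
  rw [he] at hcl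
  exact edge_lemma' hc (ed_arc h) hi hx hxa hxb hcl

/-- If a vertex is on the boundary of a face, so is one of its edges. -/
lemma vertex_edge [Finite V] (hX : ∀ w, E.pos w ∈ Xs E) {S : Set Pl} (hS : IsCompact S)
    (hSX : S ∩ Xs E ⊆ range E.pos) {w : V} (hw : E.pos w ∉ S) {q : Pl}
    (hcl : E.pos w ∈ closure (cc (Xs E ∪ S) q)) : ∃ x z, G.Adj w x ∧ z ∈ ed E w x ∧ z ≠ E.pos w ∧
      z ≠ E.pos x ∧ z ∈ closure (cc (Xs E ∪ S) q) := by
  by_contra hcon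
  push Not at hcon
  set F := cc (Xs E ∪ S) q with hF
  have hXc : IsClosed (Xs E ∪ S) := (Xs_compact.union hS).isClosed
  set K := ((⋃ x, ⋃ y, ⋃ (_ : G.Adj x y ∧ x ≠ w ∧ y ≠ w), ed E x y) ∪ S) ∪ E.pos '' {x | x ≠ w}
    with hK
  have hKc : IsCompact K := by
    refine (IsCompact.union ?_ hS).union ((toFinite _).image _).isCompact
    refine isCompact_iUnion fun x => isCompact_iUnion fun y => isCompact_iUnion fun h => ?_
    exact (ed_arc h.1).compact
  have hwK : E.pos w ∉ K := by
    rintro ((h | h) | ⟨x, hx, h⟩)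
    · simp only [mem_iUnion, exists_prop] at h
      obtain ⟨x, y, ⟨h1, h2, h3⟩, h4⟩ := h
      rcases pos_mem_ed h1 h4 with rfl | rfl
      · exact h2 rfl
      · exact h3 rfl
    · exact hw h
    · exact hx (E.pos_inj h)
  have hfr : frontier F ⊆ K ∪ {E.pos w} := by
    intro z hz
    by_cases hzw : z = E.pos w
    · right; exact hzw
    left
    have hzc : z ∈ closure F := hz.1
    rcases frontier_cc hXc q hz with h | h
    · obtain ⟨x, y, h1, h2⟩ := mem_Xs.mp h
      have aux : ∀ y, G.Adj w y → z ∈ ed E w y → z ∈ K := by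
        intro y h1 h2
        by_cases hzy : z = E.pos y
        · right; exact ⟨y, h1.ne', hzy.symm⟩
        · exact absurd hzc (hcon y z h1 h2 hzw hzy)
      by_cases hxw : x = w
      · subst hxw; exact aux y h1 h2
      by_cases hyw : y = w
      · subst hyw; exact aux x h1.symm (by rwa [ed_symm h1])
      left; left
      simp only [mem_iUnion, exists_prop]
      exact ⟨x, y, ⟨h1, hxw, hyw⟩, h2⟩
    · exact Or.inl (Or.inr h)
  obtain ⟨r, hr, hb⟩ := Metric.isOpen_iff.mp hKc.isClosed.isOpen_compl _ hwK
  obtain ⟨p, hpF, hp⟩ := Metric.mem_closure_iff.mp hcl r hr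
  have hpb : p ∈ ball (E.pos w) r := by rw [mem_ball, dist_comm]; exact hp
  obtain ⟨y, hy⟩ : ∃ y, G.Adj w y := by
    obtain ⟨x, y, h1, h2⟩ := mem_Xs.mp (hX w)
    rcases pos_mem_ed h1 h2 with rfl | rfl
    · exact ⟨y, h1⟩
    · exact ⟨x, h1.symm⟩
  obtain ⟨p', hp', hp'd⟩ := Metric.mem_closure_iff.mp
    ((ed_arc hy).subset_closure_int (pos_mem_left (E := E) hy)) r hr
  have hpb' : p' ∈ ball (E.pos w) r := by rw [mem_ball, dist_comm]; exact hp'd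
  have hp'w : p' ≠ E.pos w := fun h => hp'.2 (Or.inl h)
  have hp'X : p' ∈ Xs E := ed_sub_Xs hy hp'.1
  have hpX : p ∉ Xs E ∪ S := fun h => disjoint_left.mp (cc_disj q) hpF h
  have hpw : p ≠ E.pos w := fun h => hpX (Or.inl (h ▸ hX w))
  have c1 : Conn K p p' := conn_of_preconn (convex_ball (E.pos w) r).isPreconnected
    (disjoint_left.mpr fun z hz => hb hz) hpb hpb'
  have c2 : Conn {E.pos w} p p' := conn_of_preconn
    (isConnected_compl_singleton_of_one_lt_rank rank_plane (E.pos w)).isPreconnected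
    disjoint_compl_left hpw hp'w
  have c3 : Conn (K ∪ {E.pos w}) p p' := by
    refine janiszewski hKc isCompact_singleton ?_ c1 c2
    refine Set.Subsingleton.isPreconnected ((subsingleton_singleton (a := E.pos w)).anti ?_)
    exact inter_subset_right
  have := mem_of_frontier hfr hpF c3
  exact disjoint_left.mp (cc_disj q) this (Or.inl hp'X)

/-- A strict arc parallel to an edge. -/
lemma parallel [Finite V] {u v : V} (h : G.Adj u v) {K : Set Pl}
    (hKe : ed E u v ⊆ K) (hKX : K ⊆ Xs E) {y0 x : Pl} (hx : x ∈ ed E u v) (hxu : x ≠ E.pos u)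
    (hxv : x ≠ E.pos v) (hcl : x ∈ closure (cc K y0)) :
    ∃ a, Strict E a u v ∧ a \ {E.pos u, E.pos v} ⊆ cc K y0 ∧
      ∀ y y' : V, y ≠ u → y ≠ v → y' ≠ u → y' ≠ v → Conn (ed E u v ∪ a) (E.pos y) (E.pos y') := by
  set e := ed E u v with he
  have hea : Arc e (E.pos u) (E.pos v) := ed_arc h
  -- the connecting set `W`
  obtain ⟨b, hb⟩ : ∃ b, b ∉ e := by
    by_contra hcon
    push Not at hcon
    exact hea.compact.ne_univ (eq_univ_of_forall hcon)
  have hW : ∀ y : V, ∃ W : Set Pl, IsCompact W ∧ IsPreconnected W ∧ b ∈ W ∧ Disjoint W e ∧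
      (y ≠ u → y ≠ v → E.pos y ∈ W) := by
    intro y
    by_cases hy : y = u ∨ y = v
    · refine ⟨{b}, isCompact_singleton, isPreconnected_singleton, rfl, ?_, ?_⟩
      · rw [disjoint_singleton_left]; exact hb
      · intro h1 h2; exact absurd hy (by tauto)
    · have hye : E.pos y ∉ e := fun h' => hy (pos_mem_ed h h')
      have hc : IsPreconnected eᶜ := by
        refine isPreconnected_of_forall b fun z hz => ?_
        exact ⟨cc e b, connectedComponentIn_subset _ _, cc_self hb, hea.nonsep hb hz, cc_preconn b⟩
      obtain ⟨γ, hγ⟩ := joinedIn_of_open hea.closed.isOpen_compl hc hb hye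
      refine ⟨range γ, isCompact_range γ.continuous, isPreconnected_range γ.continuous,
        ⟨0, γ.source⟩, ?_, fun _ _ => ⟨1, γ.target⟩⟩
      rw [disjoint_left]
      rintro _ ⟨t, rfl⟩
      exact hγ t
  choose W' hW1 hW2 hW3 hW4 hW5 using hW
  set W := ⋃ y, W' y with hWd
  have hWc : IsCompact W := isCompact_iUnion hW1
  have hWp : IsPreconnected W := isPreconnected_iUnion ⟨b, mem_iInter.mpr hW3⟩ hW2
  have hWe : Disjoint W e := disjoint_iUnion_left.mpr hW4
  set Y0 := Xe E u v ∪ W with hY0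
  have hY0c : IsCompact Y0 := (Xe_compact u v).union hWc
  have hY0e : Y0 ∩ e ⊆ {E.pos u, E.pos v} := by
    rintro z ⟨hz | hz, hz'⟩
    · exact Xe_inter h ⟨hz, hz'⟩
    · exact absurd hz' (disjoint_left.mp hWe hz)
  have hXY : Xs E ⊆ Y0 ∪ e := by
    rw [Xs_eq h]; exact union_subset_union_left _ subset_union_left
  have hxY : x ∉ Y0 ∪ {E.pos u, E.pos v} := by
    rintro (h' | h' | h')
    · exact (hY0e ⟨h', hx⟩).elim hxu hxv
    · exact hxu h'
    · exact hxv h'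
  obtain ⟨r, hr, hbr⟩ := Metric.isOpen_iff.mp
    (hY0c.isClosed.union (toFinite {E.pos u, E.pos v}).isClosed).isOpen_compl _ hxY
  obtain ⟨p, hpH, hp⟩ := Metric.mem_closure_iff.mp hcl r hr
  have hpb : p ∈ ball x r := by rw [mem_ball, dist_comm]; exact hp
  have hpY : p ∉ Y0 ∪ e := by
    rintro (h' | h')
    · exact hbr hpb (Or.inl h')
    · exact disjoint_left.mp (cc_disj y0) hpH (hKe h')
  have hYc : IsClosed (Y0 ∪ e) := hY0c.isClosed.union hea.closed
  obtain ⟨m, B, hm, hB, hBb, -, hmc⟩ := seg_hit hYc hpY (Or.inr hx) hr hpb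
  have hmb := hbr (hBb hB.right_mem)
  have hme : m ∈ e := hm.resolve_left fun h' => hmb (Or.inl h')
  have hecl := edge_lemma' hY0c hea hY0e hme (fun h' => hmb (Or.inr (Or.inl h')))
    (fun h' => hmb (Or.inr (Or.inr h'))) hmc
  obtain ⟨A1, hA1, hA1s⟩ := access hY0c hea hY0e hecl (cc_self hpY)
  obtain ⟨A2, hA2, hA2s⟩ := access hY0c hea.symm (by rw [pair_comm]; exact hY0e) hecl (cc_self hpY)
  have huv : E.pos u ≠ E.pos v := hea.ne
  have huF : E.pos u ∉ cc (Y0 ∪ e) p := fun h' =>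
    disjoint_left.mp (cc_disj p) h' (Or.inr hea.left_mem)
  have hvF : E.pos v ∉ cc (Y0 ∪ e) p := fun h' =>
    disjoint_left.mp (cc_disj p) h' (Or.inr hea.right_mem)
  obtain ⟨a, ha, has⟩ := hA1.symm.trim hA2 (fun h' => (hA2s h').elim huF huv)
    (fun h' => (hA1s h').elim hvF huv.symm)
  have haF : a \ {E.pos u, E.pos v} ⊆ cc (Y0 ∪ e) p := by
    rintro z ⟨hz, hz'⟩
    rcases has hz with h' | h'
    · exact (hA1s h').resolve_right fun h => hz' (Or.inl h)
    · exact (hA2s h').resolve_right fun h => hz' (Or.inr h)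
  refine ⟨a, ⟨ha, ?_⟩, ?_, ?_⟩
  · rintro z ⟨hz, hz'⟩
    by_contra hcon
    exact disjoint_left.mp (cc_disj p) (haF ⟨hz, hcon⟩) (hXY hz')
  · refine haF.trans (subset_cc (cc_preconn p) ?_ (cc_self hpY) hpH)
    exact (cc_disj p).mono_right (hKX.trans hXY)
  · intro y y' h1 h2 h3 h4
    refine conn_of_preconn hWp ?_ (mem_iUnion.mpr ⟨y, hW5 y h1 h2⟩) (mem_iUnion.mpr ⟨y', hW5 y' h3 h4⟩)
    rw [disjoint_union_right]
    refine ⟨hWe, ?_⟩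
    rw [disjoint_left]
    intro z hz hza
    by_cases hzz : z ∈ ({E.pos u, E.pos v} : Set Pl)
    · refine disjoint_left.mp hWe hz ?_
      rcases hzz with rfl | rfl
      · exact hea.left_mem
      · exact hea.right_mem
    · exact disjoint_left.mp (cc_disj p) (haF ⟨hza, hzz⟩) (Or.inl (Or.inr hz))

end Graph
end PSL

namespace PSL
open Set Topology Metric

section Graph
variable {V : Type} {G T : SimpleGraph V} {E : PlaneEmbedding G}

variable (E) in
/-- Number of vertices in a region. -/
noncomputable def cnt (D : Set Pl) : ℕ := {w | E.pos w ∈ D}.ncard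

variable (E) in
/-- Number of (directed) edges whose interior meets a region. -/
noncomputable def ecnt (D : Set Pl) : ℕ :=
  {e : V × V | G.Adj e.1 e.2 ∧ ((ed E e.1 e.2 \ {E.pos e.1, E.pos e.2}) ∩ D).Nonempty}.ncard

variable (E) in
/-- A region that contains at least two thirds of the vertices. -/
def Heavy (D : Set Pl) : Prop := 2 * Nat.card V ≤ 3 * cnt E D

variable (E T) in
/-- A strictly better configuration. -/
def Better (D : Set Pl) (L : ℕ) : Prop :=
  ∃ (u v : V) (S : Set Pl) (p : T.Walk u v) (z : Pl), Strict E S u v ∧ p.IsPath ∧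
    z ∉ S ∪ drw E p ∧ Heavy E (cc (S ∪ drw E p) z) ∧
    (cnt E (cc (S ∪ drw E p) z) < cnt E D ∨
      (cnt E (cc (S ∪ drw E p) z) ≤ cnt E D ∧ p.length < L) ∨
      (cnt E (cc (S ∪ drw E p) z) ≤ cnt E D ∧ p.length ≤ L ∧ ecnt E (cc (S ∪ drw E p) z) < ecnt E D))

lemma cnt_mono [Finite V] {D D' : Set Pl} (h : D ⊆ D') : cnt E D ≤ cnt E D' :=
  ncard_le_ncard (fun _ hw => h hw) (toFinite _)

lemma cnt_lt [Finite V] {D D' : Set Pl} (h : D ⊆ D') {w : V} (h1 : E.pos w ∈ D')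
    (h2 : E.pos w ∉ D) : cnt E D < cnt E D' :=
  ncard_lt_ncard ⟨fun _ hw => h hw, fun h' => h2 (h' h1)⟩ (toFinite _)

lemma ecnt_lt [Finite V] {D D' : Set Pl} (h : D ⊆ D') {a b : V} (hab : G.Adj a b)
    (h1 : ((ed E a b \ {E.pos a, E.pos b}) ∩ D').Nonempty) (h2 : Disjoint D (ed E a b)) :
    ecnt E D < ecnt E D' := by
  refine ncard_lt_ncard ⟨?_, ?_⟩ (toFinite _)
  · rintro ⟨x, y⟩ ⟨h3, z, h4, h5⟩
    exact ⟨h3, z, h4, h h5⟩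
  · intro h'
    obtain ⟨-, z, h4, h5⟩ := h' (show (a, b) ∈ _ from ⟨hab, h1⟩)
    exact disjoint_left.mp h2 h5 h4.1

lemma common [Finite V] [Nonempty V] {D D' : Set Pl} (h : Heavy E D) (h' : Heavy E D') :
    ∃ w, E.pos w ∈ D ∧ E.pos w ∈ D' := by
  by_contra hcon
  push Not at hcon
  have hd : Disjoint {w | E.pos w ∈ D} {w | E.pos w ∈ D'} :=
    disjoint_left.mpr fun w hw => hcon w hw
  have h1 := ncard_union_eq hd (toFinite _) (toFinite _)
  have h2 := ncard_le_ncard (subset_univ ({w | E.pos w ∈ D} ∪ {w | E.pos w ∈ D'})) (toFinite _)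
  rw [ncard_univ] at h2
  have h3 : 0 < Nat.card V := Nat.card_pos
  unfold Heavy cnt at h h'
  omega

lemma sub_of_disj [Finite V] [Nonempty V] {C C' : Set Pl} {z z' : Pl} (h : Heavy E (cc C z))
    (h' : Heavy E (cc C' z')) (hd : Disjoint (cc C' z') C) : cc C' z' ⊆ cc C z := by
  obtain ⟨w, h1, h2⟩ := common h h'
  exact subset_cc (cc_preconn z') hd h2 h1

lemma three_count [Finite V] [Nonempty V] {D D1 D2 : Set Pl} (h : Heavy E D) (h1 : Heavy E D1)
    (h2 : Heavy E D2) {t : V} (ht : E.pos t ∉ D) (ht1 : E.pos t ∉ D1) (ht2 : E.pos t ∉ D2)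
    (hno : ∀ y : V, E.pos y ∈ D → E.pos y ∈ D1 → E.pos y ∈ D2 → False) : False := by
  classical
  have := Fintype.ofFinite V
  have hc : ∀ D : Set Pl, cnt E D = ∑ y : V, if E.pos y ∈ D then 1 else 0 := by
    intro D
    rw [Finset.sum_boole, cnt, ← ncard_coe_finset]
    simp
  have hlt : ∑ y : V, ((if E.pos y ∈ D then 1 else 0) + (if E.pos y ∈ D1 then 1 else 0) +
      (if E.pos y ∈ D2 then 1 else 0)) < ∑ y : V, 2 := by
    refine Finset.sum_lt_sum ?_ ⟨t, Finset.mem_univ t, by simp [ht, ht1, ht2]⟩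
    intro y _
    have := hno y
    by_cases a : E.pos y ∈ D <;> by_cases b : E.pos y ∈ D1 <;> by_cases c : E.pos y ∈ D2 <;>
      simp [a, b, c]
    exact this a b c
  rw [Finset.sum_add_distrib, Finset.sum_add_distrib, ← hc, ← hc, ← hc, Finset.sum_const,
    Finset.card_univ, ← Nat.card_eq_fintype_card] at hlt
  unfold Heavy at h h1 h2
  simp only [smul_eq_mul] at hlt
  omega

lemma case_one [Finite V] [Nonempty V] (hle : T ≤ G) (hT : T.IsTree) (hX : ∀ w, E.pos w ∈ Xs E)
    (H : ∀ (u v : V) (S : Set Pl) (p : T.Walk u v), Strict E S u v → p.IsPath →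
      ∃ z, z ∉ S ∪ drw E p ∧ Heavy E (cc (S ∪ drw E p) z))
    {u v : V} {S : Set Pl} {p : T.Walk u v} (hS : Strict E S u v) (hp : p.IsPath) {z : Pl}
    (hD : Heavy E (cc (S ∪ drw E p) z)) {w : V} (hwu : w ≠ u) (hwv : w ≠ v)
    (hwD : E.pos w ∈ closure (cc (S ∪ drw E p) z)) {m : Pl} {α : Set Pl} (hm : m ∈ S)
    (hmX : m ∉ Xs E) (hα : Arc α m (E.pos w)) (hαD : α \ {m, E.pos w} ⊆ cc (S ∪ drw E p) z)
    (hαX : α ∩ Xs E ⊆ {E.pos w}) (hαS : α ∩ S ⊆ {m}) :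
    Better T E (cc (S ∪ drw E p) z) p.length := by
  obtain ⟨t, Pu, Pv, Pw, hPu, hPv, hPw, huv, huw, hvw, rfl, hwt⟩ := median hT hp w
  obtain ⟨hSa, hSX⟩ := hS
  have hmu : m ≠ E.pos u := fun h => hmX (h ▸ hX u)
  have hmv : m ≠ E.pos v := fun h => hmX (h ▸ hX v)
  have hwS : E.pos w ∉ S := fun h => by
    rcases hSX ⟨h, hX w⟩ with h | h
    · exact hwu (E.pos_inj h)
    · exact hwv (E.pos_inj h)
  obtain ⟨S1, S2, hS1, hS2, hSu, hSi⟩ := hSa.split hm hmu hmv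
  have hS1S : S1 ⊆ S := hSu ▸ subset_union_left
  have hS2S : S2 ⊆ S := hSu ▸ subset_union_right
  have huS2 : E.pos u ∉ S2 := fun h => hmu (hSi.subset ⟨hS1.left_mem, h⟩ : E.pos u = m).symm
  have hvS1 : E.pos v ∉ S1 := fun h => hmv (hSi.subset ⟨h, hS2.right_mem⟩ : E.pos v = m).symm
  have hS1X : ∀ x ∈ S1, x ∈ Xs E → x = E.pos u := fun x h h' =>
    (hSX ⟨hS1S h, h'⟩).resolve_right fun h2 => hvS1 ((h2 : x = E.pos v) ▸ h)
  have hS2X : ∀ x ∈ S2, x ∈ Xs E → x = E.pos v := fun x h h' =>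
    (hSX ⟨hS2S h, h'⟩).resolve_left fun h2 => huS2 ((h2 : x = E.pos u) ▸ h)
  have hαX' : ∀ x ∈ α, x ∈ Xs E → x = E.pos w := fun x h h' => hαX ⟨h, h'⟩
  -- the three arcs of the theta graph
  have hdu : drw E Pu.reverse = drw E Pu := drw_reverse Pu
  have hdv : drw E Pv.reverse = drw E Pv := drw_reverse Pv
  have hdw : drw E Pw.reverse = drw E Pw := drw_reverse Pw
  have hQu : Arc (S1 ∪ drw E Pu) m (E.pos t) := by
    rw [← hdu]
    exact arc_ext hle hPu.reverse hS1.symm fun x h h' => hS1X x h (drw_sub hle _ h')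
  have hQv : Arc (S2 ∪ drw E Pv) m (E.pos t) := by
    rw [← hdv]
    exact arc_ext hle hPv.reverse hS2 fun x h h' => hS2X x h (drw_sub hle _ h')
  have hQw : Arc (α ∪ drw E Pw) m (E.pos t) := by
    rw [← hdw]
    exact arc_ext hle hPw.reverse hα fun x h h' => hαX' x h (drw_sub hle _ h')
  set Qu := S1 ∪ drw E Pu with hQud
  set Qv := S2 ∪ drw E Pv with hQvd
  set Qw := α ∪ drw E Pw with hQwd
  -- a generic intersection statement
  have hgen : ∀ {A B : Set Pl} {a b : V} {P : T.Walk t a} {Q : T.Walk t b},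
      (∀ x ∈ A, x ∈ Xs E → x = E.pos a) → (∀ x ∈ B, x ∈ Xs E → x = E.pos b) → A ∩ B ⊆ {m} →
      (∀ x, x ∈ P.support → x ∈ Q.support → x = t) →
      (A ∪ drw E P) ∩ (B ∪ drw E Q) ⊆ {m, E.pos t} := by
    intro A B a b P Q hA hB hAB hPQ
    rintro x ⟨h1 | h1, h2 | h2⟩
    · left; exact hAB ⟨h1, h2⟩
    · right
      have hx := hA x h1 (drw_sub hle _ h2)
      subst hx
      rw [hPQ a P.end_mem_support (pos_mem_drw hle h2)]; rfl
    · right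
      have hx := hB x h2 (drw_sub hle _ h1)
      subst hx
      rw [hPQ b (pos_mem_drw hle h1) Q.end_mem_support]; rfl
    · right; exact drw_inter' hle hPQ ⟨h1, h2⟩
  have hiuv : Qu ∩ Qv ⊆ {m, E.pos t} := hgen hS1X hS2X hSi.subset huv
  have hiuw : Qu ∩ Qw ⊆ {m, E.pos t} :=
    hgen hS1X hαX' (fun x hx => hαS ⟨hx.2, hS1S hx.1⟩) huw
  have hivw : Qv ∩ Qw ⊆ {m, E.pos t} :=
    hgen hS2X hαX' (fun x hx => hαS ⟨hx.2, hS2S hx.1⟩) hvw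
  have hC : S ∪ drw E (Pu.reverse.append Pv) = Qu ∪ Qv := by
    rw [drw_append, drw_reverse, ← hSu, hQud, hQvd, union_union_union_comm]
  -- the two new configurations
  have hp1 : (Pu.reverse.append Pw).IsPath :=
    path_append hPu.reverse hPw fun x hx hx' => huw x (by simpa using hx) hx'
  have hp2 : (Pv.reverse.append Pw).IsPath :=
    path_append hPv.reverse hPw fun x hx hx' => hvw x (by simpa using hx) hx'
  have hs1 : Strict E (S1 ∪ α) u w := by
    refine ⟨hS1.join hα fun x hx => hαS ⟨hx.2, hS1S hx.1⟩, ?_⟩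
    rintro x ⟨h | h, h'⟩
    · left; exact hS1X x h h'
    · right; exact hαX' x h h'
  have hs2 : Strict E (S2 ∪ α) v w := by
    refine ⟨hS2.symm.join hα fun x hx => hαS ⟨hx.2, hS2S hx.1⟩, ?_⟩
    rintro x ⟨h | h, h'⟩
    · left; exact hS2X x h h'
    · right; exact hαX' x h h'
  have hC1 : S1 ∪ α ∪ drw E (Pu.reverse.append Pw) = Qu ∪ Qw := by
    rw [drw_append, drw_reverse, hQud, hQwd, union_union_union_comm]
  have hC2 : S2 ∪ α ∪ drw E (Pv.reverse.append Pw) = Qv ∪ Qw := by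
    rw [drw_append, drw_reverse, hQvd, hQwd, union_union_union_comm]
  obtain ⟨z1, hz1, hD1⟩ := H u w _ _ hs1 hp1
  obtain ⟨z2, hz2, hD2⟩ := H v w _ _ hs2 hp2
  have hwDD : t ≠ w → E.pos w ∈ cc (S ∪ drw E (Pu.reverse.append Pv)) z := by
    intro htw
    refine mem_cc_of_closure ?_ hwD ?_
    · rw [hC]; exact hQu.closed.union hQv.closed
    · rintro (h | h)
      · exact hwS h
      · exact htw (hwt (pos_mem_drw hle h)).symm
  have hlen : ∀ {a b : V} {P : T.Walk a b}, a ≠ b → 0 < P.length := by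
    intro a b P hab
    rw [Nat.pos_iff_ne_zero]
    exact fun h => hab (SimpleGraph.Walk.eq_of_length_eq_zero h)
  by_cases hd1 : Disjoint (cc (S1 ∪ α ∪ drw E (Pu.reverse.append Pw)) z1) Qv
  · have hsub : cc (S1 ∪ α ∪ drw E (Pu.reverse.append Pw)) z1 ⊆
        cc (S ∪ drw E (Pu.reverse.append Pv)) z := by
      refine sub_of_disj hD hD1 ?_
      rw [hC, disjoint_union_right]
      refine ⟨?_, hd1⟩
      rw [hC1]
      exact (cc_disj z1).mono_right subset_union_left
    refine ⟨u, w, _, _, z1, hs1, hp1, hz1, hD1, ?_⟩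
    by_cases htw : t = w
    · right; left
      refine ⟨cnt_mono hsub, ?_⟩
      subst htw
      have h1 : Pw.length = 0 := by
        have : Pw = SimpleGraph.Walk.nil := by simpa using hPw
        rw [this]; rfl
      have h2 := hlen (P := Pv) hwv
      simp only [SimpleGraph.Walk.length_append, SimpleGraph.Walk.length_reverse]
      omega
    · left
      refine cnt_lt hsub (hwDD htw) fun h => ?_
      exact disjoint_left.mp (cc_disj z1) h (Or.inl (Or.inr hα.right_mem))
  by_cases hd2 : Disjoint (cc (S2 ∪ α ∪ drw E (Pv.reverse.append Pw)) z2) Qu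
  · have hsub : cc (S2 ∪ α ∪ drw E (Pv.reverse.append Pw)) z2 ⊆
        cc (S ∪ drw E (Pu.reverse.append Pv)) z := by
      refine sub_of_disj hD hD2 ?_
      rw [hC, disjoint_union_right]
      refine ⟨hd2, ?_⟩
      rw [hC2]
      exact (cc_disj z2).mono_right subset_union_left
    refine ⟨v, w, _, _, z2, hs2, hp2, hz2, hD2, ?_⟩
    by_cases htw : t = w
    · right; left
      refine ⟨cnt_mono hsub, ?_⟩
      subst htw
      have h1 : Pw.length = 0 := by
        have : Pw = SimpleGraph.Walk.nil := by simpa using hPw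
        rw [this]; rfl
      have h2 := hlen (P := Pu) hwu
      simp only [SimpleGraph.Walk.length_append, SimpleGraph.Walk.length_reverse]
      omega
    · left
      refine cnt_lt hsub (hwDD htw) fun h => ?_
      exact disjoint_left.mp (cc_disj z2) h (Or.inl (Or.inr hα.right_mem))
  exfalso
  rw [hC] at hD hαD
  rw [hC1] at hD1 hd1
  rw [hC2] at hD2 hd2
  obtain ⟨xv, hxv1, hxv⟩ := not_disjoint_iff.mp hd1
  obtain ⟨xu, hxu1, hxu⟩ := not_disjoint_iff.mp hd2
  obtain ⟨xw, hxw, hxw'⟩ := hα.int_pathConn.nonempty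
  have hxwD := hαD ⟨hxw, hxw'⟩
  have hxwC := disjoint_left.mp (cc_disj z) hxwD
  have hxvC := disjoint_left.mp (cc_disj z1) hxv1
  have hxuC := disjoint_left.mp (cc_disj z2) hxu1
  have nm : ∀ {x : Pl} {A B : Set Pl}, Arc A m (E.pos t) → x ∉ A ∪ B → x ∉ ({m, E.pos t} : Set Pl) := by
    rintro x A B hA hx (rfl | rfl)
    · exact hx (Or.inl hA.left_mem)
    · exact hx (Or.inl hA.right_mem)
  have nt : ∀ {A B : Set Pl} {y : Pl}, Arc A m (E.pos t) → E.pos t ∉ cc (A ∪ B) y := by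
    intro A B y hA h
    exact disjoint_left.mp (cc_disj y) h (Or.inl hA.right_mem)
  refine three_count hD hD1 hD2 (nt hQu) (nt hQu) (nt hQv) ?_
  intro y hy hy1 hy2
  refine theta (p := E.pos y) hQu hQv hQw hiuv hiuw hivw
    (⟨hxu, nm hQv hxuC⟩ : xu ∈ Qu \ {m, E.pos t}) ⟨hxv, nm hQu hxvC⟩ ⟨Or.inl hxw, nm hQu hxwC⟩ ?_ ?_ ?_
  · exact Conn.trans (Conn.symm hy) hxwD
  · exact Conn.trans (Conn.symm hy1) hxv1
  · exact Conn.trans (Conn.symm hy2) hxu1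

end Graph
end PSL

namespace PSL
open Set Topology Metric

section Graph
variable {V : Type} {G T : SimpleGraph V} {E : PlaneEmbedding G}

lemma heavy_vertex [Finite V] [Nonempty V] {D : Set Pl} (h : Heavy E D) : ∃ w, E.pos w ∈ D := by
  obtain ⟨w, hw, -⟩ := common h h
  exact ⟨w, hw⟩

lemma inner_vertex {u v : V} {p : T.Walk u v} (huv : u ≠ v) (hna : ¬ T.Adj u v) (hp : p.IsPath) :
    ∃ w, w ≠ u ∧ w ≠ v ∧ w ∈ p.support := by
  cases p with
  | nil => exact absurd rfl huv
  | @cons a b c h p =>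
    refine ⟨b, h.ne', ?_, ?_⟩
    · rintro rfl; exact hna h
    · simp

lemma pos_mem_drw_of (hle : T ≤ G) {u v w : V} {p : T.Walk u v} (huv : u ≠ v)
    (h : w ∈ p.support) : E.pos w ∈ drw E p := by
  induction p with
  | nil => exact absurd rfl huv
  | @cons a b c h1 p ih =>
    rw [drw_cons hle h1]
    rw [SimpleGraph.Walk.support_cons, List.mem_cons] at h
    rcases h with rfl | h
    · exact Or.inl (pos_mem_left (hle h1))
    · by_cases hbc : b = c
      · subst hbc
        by_cases hwb : w = b
        · subst hwb; exact Or.inl (pos_mem_right (hle h1))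
        · cases p with
          | nil => simp at h; exact absurd h hwb
          | @cons a' b' c' h2 p' =>
            right
            rw [mem_drw]
            rw [SimpleGraph.Walk.mem_support_iff_exists_mem_edges] at h
            rcases h with h | ⟨e, he, hw⟩
            · exact absurd h hwb
            · obtain ⟨x, rfl⟩ := Sym2.mem_iff_exists.mp hw
              exact ⟨w, x, he, pos_mem_left (hle (SimpleGraph.Walk.adj_of_mem_edges _ he))⟩
      · exact Or.inr (ih hbc h)

/-- The case of a face bounded by the arc and one edge that is not in the tree. -/
lemma case_two [Finite V] [Nonempty V] (hle : T ≤ G) (hX : ∀ w, E.pos w ∈ Xs E)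
    (H : ∀ (u v : V) (S : Set Pl) (p : T.Walk u v), Strict E S u v → p.IsPath →
      ∃ z, z ∉ S ∪ drw E p ∧ Heavy E (cc (S ∪ drw E p) z))
    {u v : V} {S : Set Pl} {p : T.Walk u v} (hS : Strict E S u v) (hp : p.IsPath) {z : Pl}
    (hD : Heavy E (cc (S ∪ drw E p) z)) (huv : u ≠ v) (hna : ¬ T.Adj u v) (hG : G.Adj u v)
    {q : Pl} (hq : q ∉ Xs E ∪ S) (hF : cc (Xs E ∪ S) q ⊆ cc (S ∪ drw E p) z)
    (heF : ed E u v ⊆ closure (cc (Xs E ∪ S) q))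
    (hfr : frontier (cc (Xs E ∪ S) q) ⊆ S ∪ ed E u v) :
    Better T E (cc (S ∪ drw E p) z) p.length := by
  obtain ⟨hSa, hSX⟩ := id hS
  have hPa := drw_arc (E := E) hle hp huv
  have hea := ed_arc (E := E) hG
  have hPX : drw E p ⊆ Xs E := drw_sub hle p
  have heX : ed E u v ⊆ Xs E := ed_sub_Xs hG
  have hSe : S ∩ ed E u v ⊆ {E.pos u, E.pos v} := fun x hx => hSX ⟨hx.1, heX hx.2⟩
  have hSP : S ∩ drw E p ⊆ {E.pos u, E.pos v} := fun x hx => hSX ⟨hx.1, hPX hx.2⟩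
  have heP : ed E u v ∩ drw E p ⊆ {E.pos u, E.pos v} := by
    rintro x ⟨h1, h2⟩
    obtain ⟨a, b, h3, h4⟩ := mem_drw.mp h2
    have hab := p.adj_of_mem_edges h3
    have hne : s(u, v) ≠ s(a, b) := by
      intro h
      apply hna
      rw [← SimpleGraph.mem_edgeSet, h]
      exact hab
    exact (E.arc_meet hG (hle hab) hne ⟨h1, h4⟩).1
  have hCc : IsClosed (S ∪ drw E p) := hSa.closed.union hPa.closed
  set D := cc (S ∪ drw E p) z with hDd
  set e := ed E u v with hed
  set P := drw E p with hPd
  have heD : e \ {E.pos u, E.pos v} ⊆ D := by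
    intro x hx
    refine mem_cc_of_closure hCc (closure_mono hF (heF hx.1)) ?_
    rintro (h | h)
    · exact hx.2 (hSe ⟨h, hx.1⟩)
    · exact hx.2 (heP ⟨hx.1, h⟩)
  obtain ⟨w, hwu, hwv, hwp⟩ := inner_vertex huv hna hp
  have hwP : E.pos w ∈ P := pos_mem_drw_of hle huv hwp
  have hwne : E.pos w ∉ ({E.pos u, E.pos v} : Set Pl) := by
    rintro (h | h)
    · exact hwu (E.pos_inj h)
    · exact hwv (E.pos_inj h)
  have hvS : ∀ y, y ≠ u → y ≠ v → E.pos y ∉ S ∪ e := by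
    rintro y h1 h2 (h | h)
    · rcases hSX ⟨h, hX y⟩ with h | h
      · exact h1 (E.pos_inj h)
      · exact h2 (E.pos_inj h)
    · rcases pos_mem_ed hG h with h | h
      · exact h1 h
      · exact h2 h
  have hnq : ∀ y, ¬ Conn (S ∪ e) q (E.pos y) := by
    intro y h
    have := mem_of_frontier hfr (cc_self hq) h
    exact disjoint_left.mp (cc_disj q) this (Or.inl (hX y))
  have hqSe : q ∉ S ∪ e := by
    rintro (h | h)
    · exact hq (Or.inr h)
    · exact hq (Or.inl (heX h))
  have hDne : ∀ y, E.pos y ∈ D → y ≠ u ∧ y ≠ v := by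
    intro y hy
    have := disjoint_left.mp (cc_disj z) hy
    constructor
    · rintro rfl; exact this (Or.inl hSa.left_mem)
    · rintro rfl; exact this (Or.inl hSa.right_mem)
  obtain ⟨xe, hxe⟩ := hea.int_pathConn.nonempty
  have hth : ∀ y, E.pos y ∈ D → ∀ x ∈ S \ {E.pos u, E.pos v}, ¬ Conn (e ∪ P) (E.pos y) x := by
    intro y hy x hx hc
    obtain ⟨hyu, hyv⟩ := hDne y hy
    refine theta hSa hea hPa hSe hSP heP hx hxe ⟨hwP, hwne⟩ ?_ ?_ hc
    · exact jordan_two hSa hea hSe hqSe (hvS y hyu hyv) (hvS w hwu hwv) (hnq y) (hnq w)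
    · exact Conn.trans (Conn.symm hy) (heD hxe)
  have hyeP : ∀ y, E.pos y ∈ D → E.pos y ∉ e ∪ P := by
    rintro y hy (h | h)
    · exact hvS y (hDne y hy).1 (hDne y hy).2 (Or.inr h)
    · exact disjoint_left.mp (cc_disj z) hy (Or.inr h)
  have hSeP : ∀ x ∈ S \ {E.pos u, E.pos v}, x ∉ e ∪ P := by
    rintro x hx (h | h)
    · exact hx.2 (hSe ⟨hx.1, h⟩)
    · exact hx.2 (hSP ⟨hx.1, h⟩)
  obtain ⟨xs, hxs⟩ := hSa.int_pathConn.nonempty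
  obtain ⟨y0, hy0⟩ := heavy_vertex hD
  have hall : ∀ y, E.pos y ∈ D → E.pos y ∈ cc (e ∪ P) (E.pos y0) := by
    intro y hy
    exact jordan_two hea hPa heP (hSeP xs hxs) (hyeP y0 hy0) (hyeP y hy)
      (fun h => hth y0 hy0 xs hxs h.symm) (fun h => hth y hy xs hxs h.symm)
  have hHD : cc (e ∪ P) (E.pos y0) ⊆ D := by
    refine subset_cc (cc_preconn _) ?_ (cc_self (hyeP y0 hy0)) hy0
    rw [disjoint_union_right]
    refine ⟨disjoint_left.mpr fun x hx hxS => ?_, (cc_disj _).mono_right subset_union_right⟩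
    by_cases hxuv : x ∈ ({E.pos u, E.pos v} : Set Pl)
    · refine disjoint_left.mp (cc_disj _) hx (Or.inl ?_)
      rcases hxuv with rfl | rfl
      · exact hea.left_mem
      · exact hea.right_mem
    · exact hth y0 hy0 x ⟨hxS, hxuv⟩ hx
  have hxeu : xe ≠ E.pos u := fun h => hxe.2 (Or.inl h)
  have hxev : xe ≠ E.pos v := fun h => hxe.2 (Or.inr h)
  obtain ⟨a, haS, haH, hav⟩ := parallel hG (K := e ∪ P) subset_union_left (union_subset heX hPX)
    hxe.1 hxeu hxev (bdry_jordan hea hPa heP hxe.1 hxeu hxev (hyeP y0 hy0))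
  obtain ⟨z', hz', hD'⟩ := H u v a p haS hp
  obtain ⟨y, hy, hy'⟩ := common hD hD'
  obtain ⟨haa, haX⟩ := id haS
  have hdis : Disjoint (cc (a ∪ P) z') e := by
    rw [disjoint_left]
    intro x hx hxe'
    have hxne : x ∉ ({E.pos u, E.pos v} : Set Pl) := by
      have := disjoint_left.mp (cc_disj z') hx
      rintro (rfl | rfl)
      · exact this (Or.inr hPa.left_mem)
      · exact this (Or.inr hPa.right_mem)
    obtain ⟨xa, hxa⟩ := haa.int_pathConn.nonempty
    refine theta hea haa hPa (fun t ht => haX ⟨ht.2, heX ht.1⟩) heP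
      (fun t ht => haX ⟨ht.1, hPX ht.2⟩) ⟨hxe', hxne⟩ hxa ⟨hwP, hwne⟩ (p := E.pos y) ?_ ?_ ?_
    · exact hav y w (hDne y hy).1 (hDne y hy).2 hwu hwv
    · exact Conn.trans (Conn.symm (hall y hy)) (haH hxa)
    · exact Conn.trans (Conn.symm hy') hx
  have hsub : cc (a ∪ P) z' ⊆ D := by
    refine Subset.trans ?_ hHD
    refine subset_cc (cc_preconn _) ?_ hy' (hall y hy)
    rw [disjoint_union_right]
    exact ⟨hdis, (cc_disj _).mono_right subset_union_right⟩
  refine ⟨u, v, a, p, z', haS, hp, hz', hD', Or.inr (Or.inr ⟨cnt_mono hsub, le_rfl, ?_⟩)⟩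
  exact ecnt_lt hsub hG ⟨xe, hxe, heD hxe⟩ hdis

lemma drw_adj (hle : T ≤ G) (hT : T.IsTree) {u v : V} {p : T.Walk u v} (hp : p.IsPath)
    (h : T.Adj u v) : drw E p = ed E u v := by
  have h1 : (SimpleGraph.Walk.cons h SimpleGraph.Walk.nil).IsPath := by
    simp [SimpleGraph.Walk.cons_isPath_iff, h.ne]
  have := hT.existsUnique_path u v
  have h2 : p = SimpleGraph.Walk.cons h SimpleGraph.Walk.nil := this.unique hp h1
  rw [h2, drw_cons hle, drw_nil, union_empty]

lemma step [Finite V] [Nonempty V] (hle : T ≤ G) (hT : T.IsTree) (hX : ∀ w, E.pos w ∈ Xs E)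
    (H : ∀ (u v : V) (S : Set Pl) (p : T.Walk u v), Strict E S u v → p.IsPath →
      ∃ z, z ∉ S ∪ drw E p ∧ Heavy E (cc (S ∪ drw E p) z))
    {u v : V} {S : Set Pl} {p : T.Walk u v} (hS : Strict E S u v) (hp : p.IsPath) {z : Pl}
    (hz : z ∉ S ∪ drw E p) (hD : Heavy E (cc (S ∪ drw E p) z)) :
    Better T E (cc (S ∪ drw E p) z) p.length := by
  obtain ⟨hSa, hSX⟩ := id hS
  have huv : u ≠ v := fun h => hSa.ne (congrArg E.pos h)
  have hPa := drw_arc (E := E) hle hp huv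
  have hPX : drw E p ⊆ Xs E := drw_sub hle p
  have hSP : S ∩ drw E p ⊆ {E.pos u, E.pos v} := fun x hx => hSX ⟨hx.1, hPX hx.2⟩
  have hSX' : S ∩ Xs E ⊆ range E.pos := by
    intro x hx
    rcases hSX hx with rfl | rfl
    · exact ⟨u, rfl⟩
    · exact ⟨v, rfl⟩
  have hCc : IsClosed (S ∪ drw E p) := hSa.closed.union hPa.closed
  have hXc : IsClosed (Xs E) := (Xs_compact (E := E)).isClosed
  have hXSc : IsClosed (Xs E ∪ S) := hXc.union hSa.closed
  -- access to the region from an interior point of the arc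
  obtain ⟨y, hy, hyuv⟩ := hSa.int_pathConn.nonempty
  have hyu : y ≠ E.pos u := fun h => hyuv (Or.inl h)
  have hyv : y ≠ E.pos v := fun h => hyuv (Or.inr h)
  have hyX : y ∉ Xs E := fun h => hyuv (hSX ⟨hy, h⟩)
  have hycl := bdry_jordan hSa hPa hSP hy hyu hyv hz
  obtain ⟨r, hr, hball⟩ := Metric.isOpen_iff.mp hXc.isOpen_compl y hyX
  obtain ⟨m, q, B, hmC, hmb, hq, hB, hBb, hBD⟩ := access_near hCc (Or.inl hy) hycl hr
  have hmX : m ∉ Xs E := hball hmb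
  have hmS : m ∈ S := hmC.resolve_right fun h => hmX (hPX h)
  have hqC := disjoint_left.mp (cc_disj z) hq
  have hqX : q ∉ Xs E ∪ S := by
    rintro (h | h)
    · exact hball (hBb hB.left_mem) h
    · exact hqC (Or.inl h)
  set D := cc (S ∪ drw E p) z with hDd
  set F := cc (Xs E ∪ S) q with hFd
  have hFD : F ⊆ D := by
    refine subset_cc (cc_preconn _) ?_ (cc_self hqX) hq
    exact (cc_disj q).mono_right (union_subset subset_union_right (hPX.trans subset_union_left))
  have hqm : q ≠ m := fun h => hqX (Or.inr (h ▸ hmS))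
  have hBF : B \ {m} ⊆ F := by
    have h1 : IsPreconnected (B \ {m}) :=
      hB.symm.diff_left_pathConn.isConnected.isPreconnected
    refine subset_cc h1 ?_ ⟨hB.left_mem, hqm⟩ (cc_self hqX)
    rw [disjoint_left]
    rintro x hx (h | h)
    · exact hball (hBb hx.1) h
    · exact disjoint_left.mp (cc_disj z) (hBD hx) (Or.inl h)
  have hFX : ∀ x ∈ F, x ∉ Xs E := fun x hx h => disjoint_left.mp (cc_disj q) hx (Or.inl h)
  have hFS : ∀ x ∈ F, x ∉ S := fun x hx h => disjoint_left.mp (cc_disj q) hx (Or.inr h)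
  by_cases hw : ∃ w, w ≠ u ∧ w ≠ v ∧ E.pos w ∈ closure F
  · obtain ⟨w, hwu, hwv, hwF⟩ := hw
    have hwS : E.pos w ∉ S := fun h => by
      rcases hSX ⟨h, hX w⟩ with h | h
      · exact hwu (E.pos_inj h)
      · exact hwv (E.pos_inj h)
    obtain ⟨x, t, hwx, ht, htw, htx, htF⟩ := vertex_edge hX hSa.compact hSX' hwS hwF
    obtain ⟨Y0, hY0, hYe, hYeq, hYcl⟩ := edge_cl hSa.compact hSX' hwx ht htw htx htF
    obtain ⟨A, hA, hAF⟩ := access hY0 (ed_arc hwx) hYe hYcl (q := q) (by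
      rw [← hYeq]; exact cc_self hqX)
    rw [← hYeq] at hAF
    have hmw : m ≠ E.pos w := fun h => hmX (h ▸ hX w)
    obtain ⟨α, hα, hαs⟩ := hB.symm.trim hA
      (fun h => (hAF h).elim (fun h => hFS m h hmS) (fun h => hmw h))
      (fun h => hFX _ (hBF ⟨h, hmw.symm⟩) (hX w))
    have hαF : ∀ x ∈ α, x ∈ F ∨ x = m ∨ x = E.pos w := by
      intro x hx
      rcases hαs hx with h | h
      · by_cases hxm : x = m
        · exact Or.inr (Or.inl hxm)
        · exact Or.inl (hBF ⟨h, hxm⟩)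
      · rcases hAF h with h | h
        · exact Or.inl h
        · exact Or.inr (Or.inr h)
    refine case_one hle hT hX H hS hp hD hwu hwv (closure_mono hFD hwF) hmS hmX hα ?_ ?_ ?_
    · rintro x ⟨hx, hx'⟩
      rcases hαF x hx with h | h
      · exact hFD h
      · exact absurd h hx'
    · rintro x ⟨hx, hx'⟩
      rcases hαF x hx with h | rfl | h
      · exact absurd hx' (hFX x h)
      · exact absurd hx' hmX
      · exact h
    · rintro x ⟨hx, hx'⟩
      rcases hαF x hx with h | h | rfl
      · exact absurd hx' (hFS x h)
      · exact h
      · exact absurd hx' hwS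
  · push Not at hw
    have hkey : ∀ x ∈ frontier F, x ∈ S ∨ ∃ a b, G.Adj a b ∧ s(a, b) = s(u, v) ∧ x ∈ ed E a b ∧
        x ≠ E.pos a ∧ x ≠ E.pos b ∧ ed E a b ⊆ closure F := by
      intro x hx
      by_cases hxS : x ∈ S
      · exact Or.inl hxS
      have hxX : x ∈ Xs E := (frontier_cc hXSc q hx).resolve_right hxS
      have hxF : x ∈ closure F := frontier_subset_closure hx
      obtain ⟨a, b, hab, hxab⟩ := mem_Xs.mp hxX
      have hv : ∀ c, E.pos c ∈ closure F → c = u ∨ c = v := by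
        intro c hc
        by_contra hcon
        push Not at hcon
        exact hw c hcon.1 hcon.2 hc
      have hne : ∀ c, x ≠ E.pos c := by
        rintro c rfl
        rcases hv c hxF with rfl | rfl
        · exact hxS hSa.left_mem
        · exact hxS hSa.right_mem
      obtain ⟨Y0, hY0, hYe, hYeq, hYcl⟩ := edge_cl hSa.compact hSX' hab hxab (hne a) (hne b) hxF
      rw [← hYeq] at hYcl
      refine Or.inr ⟨a, b, hab, ?_, hxab, hne a, hne b, hYcl⟩
      rcases hv a (hYcl (pos_mem_left hab)) with rfl | rfl <;>
        rcases hv b (hYcl (pos_mem_right hab)) with rfl | rfl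
      · exact absurd rfl hab.ne
      · rfl
      · exact Sym2.eq_swap
      · exact absurd rfl hab.ne
    by_cases hfS : frontier F ⊆ S
    · exfalso
      obtain ⟨x, hx, hxuv⟩ := hPa.int_pathConn.nonempty
      have hxS : x ∉ S := fun h => hxuv (hSP ⟨h, hx⟩)
      have := mem_of_frontier hfS (cc_self hqX) (hSa.nonsep (fun h => hqX (Or.inr h)) hxS)
      exact hFX x this (hPX hx)
    · obtain ⟨x, hxf, hxS⟩ := not_subset.mp hfS
      obtain ⟨a, b, hab, hs, -, -, -, hcl⟩ := (hkey x hxf).resolve_left hxS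
      have hG : G.Adj u v := by
        rw [← SimpleGraph.mem_edgeSet, ← hs]; exact hab
      rw [ed_of_eq hG hs] at hcl
      have hfr : frontier F ⊆ S ∪ ed E u v := by
        intro t ht
        rcases hkey t ht with h | ⟨a, b, _, h2, h3, _⟩
        · exact Or.inl h
        · rw [ed_of_eq hG h2] at h3
          exact Or.inr h3
      by_cases hna : T.Adj u v
      · exfalso
        rw [← drw_adj hle hT hp hna] at hfr
        obtain ⟨w, hw⟩ := heavy_vertex hD
        have := mem_of_frontier hfr (cc_self hqX) (Conn.trans (Conn.symm hq) hw)
        exact hFX _ this (hX w)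
      · exact case_two hle hX H hS hp hD huv hna hG hqX hFD hcl hfr

end Graph
end PSL

namespace PSL
open Set Topology Metric

lemma jordan_curve {A B : Set Pl} {x y : Pl} (hA : Arc A x y) (hB : Arc B x y)
    (hAB : A ∩ B ⊆ {x, y}) : ∃ γ : ℝ → Pl, Continuous γ ∧ InjOn γ (Ico 0 1) ∧ γ 0 = γ 1 ∧
      γ '' Icc 0 1 = A ∪ B := by
  have hxy := hA.ne
  obtain ⟨γ, hc, hi, h0, h1, hS⟩ := hA
  obtain ⟨γ', hc', hi', h0', h1', hS'⟩ := hB.symm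
  have m0 : (0:ℝ) ∈ Icc (0:ℝ) 1 := by simp
  have m1 : (1:ℝ) ∈ Icc (0:ℝ) 1 := by simp
  refine ⟨fun t => if t ≤ 1 / 2 then γ (2 * t) else γ' (2 * t - 1), ?_, ?_, ?_, ?_⟩
  · refine Continuous.if_le (by fun_prop) (by fun_prop) continuous_id continuous_const ?_
    intro t ht
    have ht : t = 1 / 2 := ht
    rw [ht]
    norm_num [h1, h0']
  · have aux : ∀ s t : ℝ, s ∈ Icc (0:ℝ) 1 → t ∈ Ioo (0:ℝ) 1 → γ s = γ' t → False := by
      intro s t hs ht hst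
      have ht' : t ∈ Icc (0:ℝ) 1 := ⟨ht.1.le, ht.2.le⟩
      have hz : γ s ∈ A ∩ B := ⟨hS ▸ mem_image_of_mem _ hs, hst ▸ hS' ▸ mem_image_of_mem _ ht'⟩
      rcases hAB hz with h | h
      · have h6 : γ' t = γ' 1 := by rw [← hst, h, h1']
        linarith [hi' ht' m1 h6, ht.2]
      · have h6 : γ' t = γ' 0 := by rw [← hst, h0']; exact h
        linarith [hi' ht' m0 h6, ht.1]
    intro s hs t ht hst
    dsimp only at hst
    split_ifs at hst with h3 h4 h4
    · have := hi ⟨by linarith [hs.1], by linarith⟩ ⟨by linarith [ht.1], by linarith⟩ hst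
      linarith
    · push Not at h4
      exact (aux (2 * s) (2 * t - 1) ⟨by linarith [hs.1], by linarith⟩
        ⟨by linarith, by linarith [ht.2]⟩ hst).elim
    · push Not at h3
      exact (aux (2 * t) (2 * s - 1) ⟨by linarith [ht.1], by linarith⟩
        ⟨by linarith, by linarith [hs.2]⟩ hst.symm).elim
    · push Not at h3 h4
      have := hi' (show 2 * s - 1 ∈ Icc (0:ℝ) 1 from ⟨by linarith, by linarith [hs.2]⟩)
        (show 2 * t - 1 ∈ Icc (0:ℝ) 1 from ⟨by linarith, by linarith [ht.2]⟩) hst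
      linarith
  · norm_num [h0, h1']
  · rw [← hS, ← hS']
    ext w; constructor
    · rintro ⟨t, ht, rfl⟩
      by_cases h : t ≤ 1 / 2
      · left
        refine ⟨2 * t, ⟨by linarith [ht.1], by linarith⟩, ?_⟩
        dsimp only
        rw [if_pos h]
      · right
        refine ⟨2 * t - 1, ⟨by linarith, by linarith [ht.2]⟩, ?_⟩
        dsimp only
        rw [if_neg h]
    · rintro (⟨t, ht, rfl⟩ | ⟨t, ht, rfl⟩)
      · refine ⟨t / 2, ⟨by linarith [ht.1], by linarith [ht.2]⟩, ?_⟩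
        dsimp only
        rw [if_pos (by linarith [ht.2])]
        congr 1; ring
      · refine ⟨(t + 1) / 2, ⟨by linarith [ht.1], by linarith [ht.2]⟩, ?_⟩
        dsimp only
        rcases ht.1.eq_or_lt with h | h
        · subst h; norm_num [h1, h0']
        · rw [if_neg (by linarith)]
          congr 1; ring

section Graph
variable {V : Type} {G T : SimpleGraph V} {E : PlaneEmbedding G}

lemma descent [Finite V] [Nonempty V] (hle : T ≤ G) (hT : T.IsTree) (hX : ∀ w, E.pos w ∈ Xs E)
    (H : ∀ (u v : V) (S : Set Pl) (p : T.Walk u v), Strict E S u v → p.IsPath →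
      ∃ z, z ∉ S ∪ drw E p ∧ Heavy E (cc (S ∪ drw E p) z)) :
    ∀ (n l k : ℕ) (u v : V) (S : Set Pl) (p : T.Walk u v) (z : Pl), Strict E S u v → p.IsPath →
      z ∉ S ∪ drw E p → Heavy E (cc (S ∪ drw E p) z) → cnt E (cc (S ∪ drw E p) z) ≤ n →
      p.length ≤ l → ecnt E (cc (S ∪ drw E p) z) ≤ k → False := by
  intro n
  induction n using Nat.strong_induction_on with
  | _ n ihn =>
  intro l
  induction l using Nat.strong_induction_on with
  | _ l ihl =>
  intro k
  induction k using Nat.strong_induction_on with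
  | _ k ihk =>
  intro u v S p z hS hp hz hD hn hl hk
  obtain ⟨u', v', S', p', z', hS', hp', hz', hD', h⟩ := step hle hT hX H hS hp hz hD
  rcases h with h | ⟨h, h'⟩ | ⟨h, h', h''⟩
  · exact ihn _ (lt_of_lt_of_le h hn) _ _ u' v' S' p' z' hS' hp' hz' hD' le_rfl le_rfl le_rfl
  · exact ihl _ (lt_of_lt_of_le h' hl) _ u' v' S' p' z' hS' hp' hz' hD' (h.trans hn) le_rfl le_rfl
  · exact ihk _ (lt_of_lt_of_le h'' hk) u' v' S' p' z' hS' hp' hz' hD' (h.trans hn) (h'.trans hl)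
      le_rfl

lemma main [Fintype V] (E : PlaneEmbedding G) (hn : 2 ≤ Fintype.card V) (hle : T ≤ G)
    (hT : T.IsTree) : ∃ (u v : V) (S : Set Pl) (p : T.Walk u v), Strict E S u v ∧ p.IsPath ∧
      ∀ z, z ∉ S ∪ drw E p → ¬ Heavy E (cc (S ∪ drw E p) z) := by
  by_contra hcon
  push Not at hcon
  have : Nontrivial V := Fintype.one_lt_card_iff_nontrivial.mp hn
  have hadj : ∀ w, ∃ x, T.Adj w x := fun w =>
    hT.connected.preconnected.exists_adj_of_nontrivial w
  have hX : ∀ w, E.pos w ∈ Xs E := by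
    intro w
    obtain ⟨x, hx⟩ := hadj w
    exact ed_sub_Xs (hle hx) (pos_mem_left (hle hx))
  obtain ⟨u⟩ : Nonempty V := inferInstance
  obtain ⟨v, huv⟩ := hadj u
  have he := ed_arc (E := E) (hle huv)
  obtain ⟨b, hb⟩ := (Set.ne_univ_iff_exists_notMem _).mp he.compact.ne_univ
  obtain ⟨x, hx, hx'⟩ := he.int_pathConn.nonempty
  have hxu : x ≠ E.pos u := fun h => hx' (Or.inl h)
  have hxv : x ≠ E.pos v := fun h => hx' (Or.inr h)
  obtain ⟨a, ha, -⟩ := parallel (hle huv) (Subset.refl _) (ed_sub_Xs (hle huv)) hx hxu hxv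
    (bdry_arc he hx hxu hxv hb)
  have h1 : (SimpleGraph.Walk.cons huv SimpleGraph.Walk.nil).IsPath := by
    simp [SimpleGraph.Walk.cons_isPath_iff, huv.ne]
  obtain ⟨z, hz, hD⟩ := hcon u v a _ ha h1
  exact descent hle hT hX hcon _ _ _ u v a _ z ha h1 hz hD le_rfl le_rfl le_rfl

end Graph
end PSL

/-- Lemma 2.1 (Lipton–Tarjan): for any plane graph `G` on `n ≥ 2` vertices and any
spanning tree `T` of `G`, there are vertices `u, v` and a simple arc `a` from `u` to `v`
not crossing any edge of `G`, such that the closed curve `C` consisting of `a` together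
with the (drawn) unique `u`–`v` path of `T` is a Jordan curve each of whose complementary
regions contains fewer than `(2/3)n` vertices of `G`. -/
theorem planar_separator_lemma {V : Type} [Fintype V] (G : SimpleGraph V)
    (E : PlaneEmbedding G) (hn : 2 ≤ Fintype.card V)
    (T : SimpleGraph V) (hle : T ≤ G) (hT : T.IsTree) :
    ∃ (u v : V) (a : ℝ → ℝ × ℝ),
      Continuous a ∧ Set.InjOn a (Set.Icc 0 1) ∧
      a 0 = E.pos u ∧ a 1 = E.pos v ∧
      -- the arc does not cross any edge of `G` …
      (∀ ⦃x y⦄, G.Adj x y →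
        Disjoint (a '' Set.Ioo 0 1) (E.arc x y '' Set.Icc 0 1)) ∧
      -- … nor does it pass through any vertex of `G`
      (∀ w : V, E.pos w ∉ a '' Set.Ioo 0 1) ∧
      ∃ p : T.Walk u v, p.IsPath ∧
        -- `C` is the union of the arc and the drawn edges of the `T`-path from `u` to `v`
        ∀ C : Set (ℝ × ℝ),
          C = a '' Set.Icc 0 1 ∪
              ⋃ (x : V) (y : V) (_ : s(x, y) ∈ p.edges), E.arc x y '' Set.Icc 0 1 →
          -- `C` is a Jordan curve
          (∃ γ : ℝ → ℝ × ℝ, Continuous γ ∧ Set.InjOn γ (Set.Ico 0 1) ∧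
            γ 0 = γ 1 ∧ γ '' Set.Icc 0 1 = C) ∧
          -- every region of the complement of `C` contains fewer than `(2/3)n` vertices
          ∀ z : ℝ × ℝ, z ∉ C →
            (Nat.card {w : V | E.pos w ∈ connectedComponentIn Cᶜ z} : ℝ) <
              2 / 3 * Fintype.card V := by
  classical
  obtain ⟨u, v, S, p, ⟨hSa, hSX⟩, hp, hmain⟩ := PSL.main E hn hle hT
  have : Nontrivial V := Fintype.one_lt_card_iff_nontrivial.mp hn
  have hX : ∀ w, E.pos w ∈ PSL.Xs E := by
    intro w
    obtain ⟨x, hx⟩ := hT.connected.preconnected.exists_adj_of_nontrivial w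
    exact PSL.ed_sub_Xs (hle hx) (PSL.pos_mem_left (hle hx))
  have huv : u ≠ v := fun h => hSa.ne (congrArg E.pos h)
  have hPa := PSL.drw_arc (E := E) hle hp huv
  have hSP : S ∩ PSL.drw E p ⊆ {E.pos u, E.pos v} :=
    fun x hx => hSX ⟨hx.1, PSL.drw_sub hle p hx.2⟩
  have hjc := PSL.jordan_curve hSa hPa hSP
  obtain ⟨a, hc, hi, h0, h1, hS⟩ := id hSa
  have hintX : ∀ x ∈ a '' Set.Ioo 0 1, x ∉ PSL.Xs E := by
    rintro x ⟨t, ht, rfl⟩ hxX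
    have ht' : t ∈ Set.Icc (0:ℝ) 1 := ⟨ht.1.le, ht.2.le⟩
    rcases hSX ⟨hS ▸ Set.mem_image_of_mem _ ht', hxX⟩ with h | h
    · rw [← h0] at h
      exact ht.1.ne' (hi ht' (by simp) h)
    · have h : a t = a 1 := by rw [h1]; exact h
      exact ht.2.ne (hi ht' (by simp) h)
  refine ⟨u, v, a, hc, hi, h0, h1, ?_, fun w hw => hintX _ hw (hX w), p, hp, ?_⟩
  · intro x y hxy
    exact Set.disjoint_left.mpr fun t ht ht' => hintX t ht (PSL.ed_sub_Xs hxy ht')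
  · intro C hC
    have hC' : C = S ∪ PSL.drw E p := by rw [hC, hS]; rfl
    subst hC'
    refine ⟨hjc, fun z hz => ?_⟩
    have h2 := hmain z hz
    unfold PSL.Heavy PSL.cnt at h2
    rw [Nat.card_eq_fintype_card, not_le, ← Nat.card_coe_set_eq] at h2
    have h3 : (3 * (Nat.card {w : V | E.pos w ∈ connectedComponentIn (S ∪ PSL.drw E p)ᶜ z} : ℝ)) <
        2 * Fintype.card V := by exact_mod_cast h2
    linarith
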